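/- arXiv:0812.1139 — 2 statements merged into one kernel-verified Lean document; each statement's English description precedes it below -/
import Mathlib

section
/- Let p be an odd prime. If the symmetric group S_p on p letters acts faithfully by diffeomorphisms on Euclidean space R^n, then n ≥ p − 1. This bound is sharp, being realized by the standard (p−1)-dimensional real linear representation of S_p. -/
namespace BU

abbrev Ch (V : Type*) := List V →₀ ℤ

section chains
variable {V : Type*}

noncomputable def consL (v : V) : Ch V →ₗ[ℤ] Ch V := Finsupp.lmapDomain ℤ ℤ (List.cons v)
noncomputable def mapL (f : V → V) : Ch V →ₗ[ℤ] Ch V := Finsupp.lmapDomain ℤ ℤ (List.map f)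

/-- Boundary of an ordered simplex in the augmented ordered chain complex. -/
noncomputable def bdL : List V → Ch V
  | [] => 0
  | v :: l => Finsupp.single l 1 - consL v (bdL l)

noncomputable def bd : Ch V →ₗ[ℤ] Ch V := Finsupp.linearCombination ℤ bdL

/-- Prism operator between two maps. -/
noncomputable def prL (f f' : V → V) : List V → Ch V
  | [] => 0
  | v :: l => Finsupp.single (f v :: f' v :: l.map f') 1 - consL (f v) (prL f f' l)

noncomputable def pr (f f' : V → V) : Ch V →ₗ[ℤ] Ch V := Finsupp.linearCombination ℤ (prL f f')

@[simp] lemma consL_single (v : V) (l : List V) (a : ℤ) :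
    consL v (Finsupp.single l a) = Finsupp.single (v :: l) a := by
  simp [consL]
@[simp] lemma mapL_single (f : V → V) (l : List V) (a : ℤ) :
    mapL f (Finsupp.single l a) = Finsupp.single (l.map f) a := by
  simp [mapL]
@[simp] lemma bd_single (l : List V) : bd (Finsupp.single l 1) = bdL l := by simp [bd]
@[simp] lemma pr_single (f f' : V → V) (l : List V) : pr f f' (Finsupp.single l 1) = prL f f' l := by
  simp [pr]

lemma ext_single {M : Type*} [AddCommGroup M] {φ ψ : Ch V →ₗ[ℤ] M}
    (h : ∀ l, φ (Finsupp.single l 1) = ψ (Finsupp.single l 1)) : φ = ψ := by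
  ext l; simpa using h l

lemma bd_consL (v : V) (x : Ch V) : bd (consL v x) = x - consL v (bd x) := by
  have : (bd ∘ₗ consL v : Ch V →ₗ[ℤ] Ch V) = LinearMap.id - consL v ∘ₗ bd :=
    ext_single fun l => by simp [bdL]
  exact LinearMap.congr_fun this x

lemma bd_bd (x : Ch V) : bd (bd x) = 0 := by
  have : (bd ∘ₗ bd : Ch V →ₗ[ℤ] Ch V) = 0 := by
    refine ext_single fun l => ?_
    induction l with
    | nil => simp [bdL]
    | cons v l ih => 
      simp only [LinearMap.comp_apply, bd_single, LinearMap.zero_apply] at ih ⊢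
      simp [bdL, bd_consL, ih]
  exact LinearMap.congr_fun this x

lemma mapL_consL (f : V → V) (v : V) (x : Ch V) : mapL f (consL v x) = consL (f v) (mapL f x) := by
  have : (mapL f ∘ₗ consL v : Ch V →ₗ[ℤ] Ch V) = consL (f v) ∘ₗ mapL f :=
    ext_single fun l => by simp
  exact LinearMap.congr_fun this x

lemma bd_mapL (f : V → V) (x : Ch V) : bd (mapL f x) = mapL f (bd x) := by
  have : (bd ∘ₗ mapL f : Ch V →ₗ[ℤ] Ch V) = mapL f ∘ₗ bd := by
    refine ext_single fun l => ?_
    induction l with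
    | nil => simp [bdL]
    | cons v l ih => 
      simp only [LinearMap.comp_apply, bd_single, mapL_single] at ih ⊢
      simp [bdL, mapL_consL, ih]
  exact LinearMap.congr_fun this x

lemma pr_consL (f f' : V → V) (v : V) (x : Ch V) :
    pr f f' (consL v x) = consL (f v) (consL (f' v) (mapL f' x)) - consL (f v) (pr f f' x) := by
  have : (pr f f' ∘ₗ consL v : Ch V →ₗ[ℤ] Ch V) =
      consL (f v) ∘ₗ consL (f' v) ∘ₗ mapL f' - consL (f v) ∘ₗ pr f f' :=
    ext_single fun l => by simp [prL]
  exact LinearMap.congr_fun this x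

lemma bd_pr (f f' : V → V) (x : Ch V) :
    bd (pr f f' x) + pr f f' (bd x) = mapL f' x - mapL f x := by
  have : (bd ∘ₗ pr f f' + pr f f' ∘ₗ bd : Ch V →ₗ[ℤ] Ch V) = mapL f' - mapL f := by
    refine ext_single fun l => ?_
    induction l with
    | nil => simp [bdL, prL]
    | cons v l ih => 
      simp only [LinearMap.comp_apply, bd_single, mapL_single, pr_single, LinearMap.add_apply,
        LinearMap.sub_apply] at ih ⊢
      have e : bd (prL f f' l) = Finsupp.single (l.map f') 1 - Finsupp.single (l.map f) 1
        - pr f f' (bdL l) := by rw [← ih]; abel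
      have e2 : bdL (l.map f') = mapL f' (bdL l) := by
        rw [← bd_single, ← mapL_single, bd_mapL, bd_single]
      simp only [prL, bdL, map_sub, bd_single, bd_consL, pr_consL, pr_single, e, consL_single, e2,
        List.map_cons]
      abel
  exact LinearMap.congr_fun this x

lemma mapL_comp (f g : V → V) (x : Ch V) : mapL f (mapL g x) = mapL (f ∘ g) x := by
  have : (mapL f ∘ₗ mapL g : Ch V →ₗ[ℤ] Ch V) = mapL (f ∘ g) := ext_single fun l => by simp
  exact LinearMap.congr_fun this x

lemma mapL_id (x : Ch V) : mapL id x = x := by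
  have : (mapL id : Ch V →ₗ[ℤ] Ch V) = LinearMap.id := ext_single fun l => by simp
  exact LinearMap.congr_fun this x

lemma supp_mem {M : Type*} [AddCommGroup M] (φ : Ch V →ₗ[ℤ] M) (N : Submodule ℤ M)
    (S : Set (List V)) (h : ∀ l ∈ S, φ (Finsupp.single l 1) ∈ N) {x : Ch V}
    (hx : x ∈ Finsupp.supported ℤ ℤ S) : φ x ∈ N := by
  rw [Finsupp.supported_eq_span_single] at hx
  have : Submodule.span ℤ ((fun i => Finsupp.single i (1:ℤ)) '' S) ≤ N.comap φ := by
    rw [Submodule.span_le]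
    rintro _ ⟨l, hl, rfl⟩
    exact h l hl
  exact this hx

lemma supp_eq {M : Type*} [AddCommGroup M] (φ ψ : Ch V →ₗ[ℤ] M)
    (S : Set (List V)) (h : ∀ l ∈ S, φ (Finsupp.single l 1) = ψ (Finsupp.single l 1)) {x : Ch V}
    (hx : x ∈ Finsupp.supported ℤ ℤ S) : φ x = ψ x := by
  have := supp_mem (φ - ψ) ⊥ S (fun l hl => by simp [h l hl]) hx
  simpa [sub_eq_zero] using this

lemma supp_mono {S T : Set (List V)} (h : S ⊆ T) {x : Ch V}
    (hx : x ∈ Finsupp.supported ℤ ℤ S) : x ∈ Finsupp.supported ℤ ℤ T :=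
  Finsupp.supported_mono h hx

lemma supp_single {S : Set (List V)} {l : List V} (h : l ∈ S) (a : ℤ) :
    (Finsupp.single l a : Ch V) ∈ Finsupp.supported ℤ ℤ S := Finsupp.single_mem_supported ℤ a h

lemma supp_mapL (f : V → V) {S T : Set (List V)} (h : ∀ l ∈ S, l.map f ∈ T) {x : Ch V}
    (hx : x ∈ Finsupp.supported ℤ ℤ S) : mapL f x ∈ Finsupp.supported ℤ ℤ T :=
  supp_mem _ _ S (fun l hl => by rw [mapL_single]; exact supp_single (h l hl) 1) hx

lemma supp_consL (v : V) {S T : Set (List V)} (h : ∀ l ∈ S, v :: l ∈ T) {x : Ch V}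
    (hx : x ∈ Finsupp.supported ℤ ℤ S) : consL v x ∈ Finsupp.supported ℤ ℤ T :=
  supp_mem _ _ S (fun l hl => by rw [consL_single]; exact supp_single (h l hl) 1) hx

lemma prL_supp (f f' : V → V) (l : List V) : prL f f' l ∈ Finsupp.supported ℤ ℤ
    {m | m.length = l.length + 1 ∧ ∀ u ∈ m, ∃ v ∈ l, u = f v ∨ u = f' v} := by
  induction l with
  | nil => simp [prL]
  | cons v l ih =>
    rw [prL]
    refine Submodule.sub_mem _ (supp_single ?_ 1) (supp_consL _ ?_ ih)
    · refine ⟨by simp, ?_⟩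
      intro u hu
      simp only [List.mem_cons, List.mem_map] at hu
      rcases hu with h | h | ⟨a, ha, h⟩
      · exact ⟨v, by simp, Or.inl h⟩
      · exact ⟨v, by simp, Or.inr h⟩
      · exact ⟨a, by simp [ha], Or.inr h.symm⟩
    · rintro m ⟨hm, hm'⟩
      refine ⟨by simp [hm], ?_⟩
      intro u hu
      rcases List.mem_cons.1 hu with h | h
      · exact ⟨v, by simp, Or.inl h⟩
      · obtain ⟨a, ha, h⟩ := hm' u h
        exact ⟨a, by simp [ha], h⟩

lemma bdL_supp (K : Set V) (l : List V) (hl : ∀ v ∈ l, v ∈ K) : bdL l ∈ Finsupp.supported ℤ ℤ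
    {m | m.length + 1 = l.length ∧ ∀ u ∈ m, u ∈ K} := by
  induction l with
  | nil => simp [bdL]
  | cons v l ih =>
    rw [bdL]
    refine Submodule.sub_mem _ (supp_single ?_ 1) (supp_consL _ ?_ (ih fun u hu => hl u (by simp [hu])))
    · exact ⟨by simp, fun u hu => hl u (by simp [hu])⟩
    · rintro m ⟨hm, hm'⟩
      refine ⟨by simp [hm], ?_⟩
      intro u hu
      rcases List.mem_cons.1 hu with h | h
      · exact h ▸ hl v (by simp)
      · exact hm' u h

end chains

/-! ### Cochains -/
section cochains
variable {V : Type*}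

/-- Evaluation of a cochain on a chain. -/
noncomputable def pair {R : Type*} [CommRing R] (f : List V → R) : Ch V →ₗ[ℤ] R :=
  Finsupp.linearCombination ℤ f

@[simp] lemma pair_single {R : Type*} [CommRing R] (f : List V → R) (l : List V) :
    pair f (Finsupp.single l 1) = f l := by simp [pair]

lemma pair_consL {R : Type*} [CommRing R] (f : List V → R) (v : V) (x : Ch V) :
    pair f (consL v x) = pair (fun l => f (v :: l)) x := by
  have : (pair f ∘ₗ consL v : Ch V →ₗ[ℤ] R) = pair (fun l => f (v :: l)) :=
    ext_single fun l => by simp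
  exact LinearMap.congr_fun this x

lemma pair_mapL {R : Type*} [CommRing R] (f : List V → R) (c : V → V) (x : Ch V) :
    pair f (mapL c x) = pair (fun l => f (l.map c)) x := by
  have : (pair f ∘ₗ mapL c : Ch V →ₗ[ℤ] R) = pair (fun l => f (l.map c)) :=
    ext_single fun l => by simp
  exact LinearMap.congr_fun this x

lemma pair_const_mul {R : Type*} [CommRing R] (f : List V → R) (a : R) (x : Ch V) :
    pair (fun l => a * f l) x = a * pair f x := by
  have : (pair (fun l => a * f l) : Ch V →ₗ[ℤ] R) = (LinearMap.mulLeft ℤ a) ∘ₗ pair f :=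
    ext_single fun l => by simp
  exact LinearMap.congr_fun this x

lemma pair_intCast {R : Type*} [CommRing R] (f : List V → ℤ) (x : Ch V) :
    pair (fun l => (f l : R)) x = ((pair f x : ℤ) : R) := by
  have : (pair (fun l => (f l : R)) : Ch V →ₗ[ℤ] R) = 
     (Int.castAddHom R).toIntLinearMap ∘ₗ pair f :=
    ext_single fun l => by simp
  exact LinearMap.congr_fun this x

variable (p : ℕ) (ℓ : ℕ → V → ZMod p)

/-- Integral lift of the coboundary of a label. -/
def ee (i : ℕ) (a b : V) : ℤ := (ℓ i b - ℓ i a).valMinAbs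

/-- Bockstein of a label. -/
def bb (i : ℕ) (a b c : V) : ℤ := (ee p ℓ i b c - ee p ℓ i a c + ee p ℓ i a b) / p

lemma ee_cast [NeZero p] (i : ℕ) (a b : V) : ((ee p ℓ i a b : ℤ) : ZMod p) = ℓ i b - ℓ i a := by
  simp [ee]

lemma bb_spec [NeZero p] (i : ℕ) (a b c : V) :
    (p : ℤ) * bb p ℓ i a b c = ee p ℓ i b c - ee p ℓ i a c + ee p ℓ i a b := by
  apply Int.mul_ediv_cancel'
  rw [← ZMod.intCast_zmod_eq_zero_iff_dvd]
  push_cast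
  simp only [ee_cast]
  ring

lemma bb_cocycle [NeZero p] (i : ℕ) (a b c d : V) :
    bb p ℓ i b c d - bb p ℓ i a c d + bb p ℓ i a b d - bb p ℓ i a b c = 0 := by
  have hp : (p : ℤ) ≠ 0 := by exact_mod_cast NeZero.ne p
  apply mul_left_cancel₀ hp
  simp only [mul_sub, mul_add, bb_spec]
  ring

/-- Cup product of the Bocksteins. -/
def BB : ℕ → List V → ℤ
  | 0, _ => 1
  | i + 1, v0 :: v1 :: v2 :: l => bb p ℓ i v0 v1 v2 * BB i (v2 :: l)
  | _ + 1, _ => 0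

lemma BB_cocycle [NeZero p] (i : ℕ) : ∀ l : List V, l.length = 2 * i + 2 →
    pair (BB p ℓ i) (bdL l) = 0 := by
  induction i with
  | zero =>
    intro l hl
    match l, hl with
    | [a, b], _ => simp [bdL, BB]
  | succ i ih =>
    intro l hl
    match l, hl with
    | v0 :: v1 :: v2 :: v3 :: l, hl =>
      have h := ih (v2 :: v3 :: l) (by simp at hl ⊢; omega)
      rw [bdL, map_sub, pair_consL, pair_single, sub_eq_zero] at h
      have hc := bb_cocycle p ℓ i v0 v1 v2 v3
      rw [bdL, bdL, bdL]
      simp only [map_sub, pair_consL, pair_single, BB, pair_const_mul, ← h]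
      linear_combination BB p ℓ i (v3 :: l) * hc

variable {p ℓ}
/-- The cochain `e ∪ B`. -/
def EE (p : ℕ) (ℓ : ℕ → V → ZMod p) (i : ℕ) : List V → ℤ
  | v0 :: v1 :: l => ee p ℓ i v0 v1 * BB p ℓ i (v1 :: l)
  | _ => 0

/-- The cochain `ℓ ∪ B`. -/
def LL (p : ℕ) (ℓ : ℕ → V → ZMod p) (i : ℕ) : List V → ZMod p
  | v0 :: l => ℓ i v0 * (BB p ℓ i (v0 :: l) : ZMod p)
  | _ => 0

lemma EE_bd [NeZero p] (i : ℕ) (l : List V) (hl : l.length = 2 * i + 3) :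
    pair (EE p ℓ i) (bdL l) = p * BB p ℓ (i + 1) l := by
  match l, hl with
  | v0 :: v1 :: v2 :: l, hl =>
    have h := BB_cocycle p ℓ i (v1 :: v2 :: l) (by simp at hl ⊢; omega)
    rw [bdL, bdL] at h
    simp only [map_sub, pair_consL, pair_single] at h
    have hc := bb_spec p ℓ i v0 v1 v2
    rw [bdL, bdL, bdL]
    simp only [map_sub, pair_consL, pair_single, EE, BB, pair_const_mul]
    linear_combination - BB p ℓ i (v2 :: l) * hc - ee p ℓ i v0 v1 * h

lemma LL_bd [NeZero p] (i : ℕ) (l : List V) (hl : l.length = 2 * i + 2) :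
    pair (LL p ℓ i) (bdL l) = (EE p ℓ i l : ZMod p) := by
  match l, hl with
  | v0 :: v1 :: l, hl =>
    have h := BB_cocycle p ℓ i (v0 :: v1 :: l) hl
    rw [bdL, bdL] at h
    simp only [map_sub, pair_consL, pair_single] at h
    have h' := congrArg (Int.cast : ℤ → ZMod p) h
    rw [bdL, bdL]
    push_cast at h'
    simp only [map_sub, pair_consL, pair_single, EE, LL, pair_const_mul, pair_intCast]
    push_cast
    rw [ee_cast]
    linear_combination ℓ i v0 * h'

section equivariance
variable {c : V → V} {K : Set V}

lemma ee_map (hℓ : ∀ i, ∀ v ∈ K, ℓ i (c v) = ℓ i v + 1)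
    (i : ℕ) {a b : V} (ha : a ∈ K) (hb : b ∈ K) :
    ee p ℓ i (c a) (c b) = ee p ℓ i a b := by
  simp [ee, hℓ i a ha, hℓ i b hb]

lemma BB_map (hℓ : ∀ i, ∀ v ∈ K, ℓ i (c v) = ℓ i v + 1)
    (i : ℕ) : ∀ l : List V, (∀ v ∈ l, v ∈ K) → BB p ℓ i (l.map c) = BB p ℓ i l := by
  induction i with
  | zero => intro l _; simp [BB]
  | succ i ih =>
    intro l hl
    match l, hl with
    | [], _ => rfl
    | [_], _ => rfl
    | [_, _], _ => rfl
    | v0 :: v1 :: v2 :: l, hl =>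
      have := ih (v2 :: l) (fun v hv => hl v (by simp at hv ⊢; tauto))
      simp only [List.map_cons] at this ⊢
      have h0 := hl v0 (by simp)
      have h1 := hl v1 (by simp)
      have h2 := hl v2 (by simp)
      simp only [BB, this, bb, ee_map hℓ i h0 h1, ee_map hℓ i h0 h2, ee_map hℓ i h1 h2]

lemma EE_map (hℓ : ∀ i, ∀ v ∈ K, ℓ i (c v) = ℓ i v + 1)
    (i : ℕ) (l : List V) (hl : ∀ v ∈ l, v ∈ K) : EE p ℓ i (l.map c) = EE p ℓ i l := by
  match l, hl with
  | [], _ => rfl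
  | [_], _ => rfl
  | v0 :: v1 :: l, hl =>
    have := BB_map hℓ i (v1 :: l) (fun v hv => hl v (by simp at hv ⊢; tauto))
    simp only [List.map_cons] at this ⊢
    simp only [EE, this, ee_map hℓ i (hl v0 (by simp)) (hl v1 (by simp))]

lemma LL_map (hℓ : ∀ i, ∀ v ∈ K, ℓ i (c v) = ℓ i v + 1)
    (i : ℕ) (l : List V) (hl : ∀ v ∈ l, v ∈ K) (hl' : l ≠ []) :
    LL p ℓ i (l.map c) = LL p ℓ i l + (BB p ℓ i l : ZMod p) := by
  match l, hl with
  | [], _ => exact absurd rfl hl'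
  | v0 :: l, hl =>
    have := BB_map hℓ i (v0 :: l) hl
    simp only [List.map_cons] at this ⊢
    simp only [LL, this, hℓ i v0 (hl v0 (by simp))]
    ring
end equivariance

/-- lists of length `k` in `K` -/
def LK (K : Set V) (k : ℕ) : Set (List V) := {l | l.length = k ∧ ∀ v ∈ l, v ∈ K}

/-- The operators of the periodic resolution. -/
noncomputable def DD (p : ℕ) (c : V → V) (k : ℕ) : Ch V →ₗ[ℤ] Ch V :=
  if Even k then mapL c - LinearMap.id else ∑ j ∈ Finset.range p, mapL (c^[j])

lemma map_mem_LK {c : V → V} {K : Set V} (hK : ∀ v ∈ K, c v ∈ K) {k : ℕ} {l : List V}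
    (hl : l ∈ LK K k) : l.map c ∈ LK K k := by
  refine ⟨by simpa using hl.1, ?_⟩
  intro v hv
  obtain ⟨a, ha, rfl⟩ := List.mem_map.1 hv
  exact hK a (hl.2 a ha)

lemma iter_mem {c : V → V} {K : Set V} (hK : ∀ v ∈ K, c v ∈ K) (j : ℕ) : ∀ v ∈ K, c^[j] v ∈ K := by
  induction j with
  | zero => intro v hv; exact hv
  | succ j ih => intro v hv; rw [Function.iterate_succ_apply]; exact ih _ (hK v hv)

theorem pairing_eq_one [NeZero p] {c : V → V} {K : Set V} (hK : ∀ v ∈ K, c v ∈ K)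
    (hℓ : ∀ i, ∀ v ∈ K, ℓ i (c v) = ℓ i v + 1) (x : ℕ → Ch V) (b : V)
    (hx0 : x 0 = Finsupp.single [b] 1) (N : ℕ)
    (hx : ∀ k ≤ N, x k ∈ Finsupp.supported ℤ ℤ (LK K (k + 1)))
    (hd : ∀ k < N, bd (x (k + 1)) = DD p c k (x k)) (i : ℕ) (hi : 2 * i ≤ N) :
    ((pair (BB p ℓ i) (x (2 * i)) : ℤ) : ZMod p) = 1 := by
  induction i with
  | zero => simp [hx0, BB]
  | succ i ih =>
    have hp0 : (p : ℤ) ≠ 0 := by exact_mod_cast NeZero.ne p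
    have ih := ih (by omega)
    have s0 := hx (2 * i) (by omega)
    have s1 := hx (2 * i + 1) (by omega)
    have s2 := hx (2 * i + 2) (by omega)
    have d1 := hd (2 * i) (by omega)
    have d2 := hd (2 * i + 1) (by omega)
    rw [DD, if_pos (by simp)] at d1
    rw [DD, if_neg (by simp [parity_simps])] at d2
    -- even step
    have A : pair (BB p ℓ (i + 1)) (x (2 * i + 2)) = pair (EE p ℓ i) (x (2 * i + 1)) := by
      apply mul_left_cancel₀ hp0
      have e1 : (p : ℤ) * pair (BB p ℓ (i + 1)) (x (2 * i + 2)) =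
          pair (EE p ℓ i) (bd (x (2 * i + 2))) := by
        rw [← pair_const_mul]
        exact supp_eq _ (pair (EE p ℓ i) ∘ₗ bd) _ (fun l hl => by
          simp only [pair_single, LinearMap.comp_apply, bd_single]
          rw [EE_bd i l (by rw [hl.1])]) s2
      rw [e1, d2]
      simp only [LinearMap.sum_apply, map_sum]
      rw [Finset.sum_congr rfl (g := fun _ => pair (EE p ℓ i) (x (2 * i + 1)))]
      · simp
      · rintro j -
        induction j with
        | zero => rw [Function.iterate_zero, mapL_id]
        | succ j ihj =>
          rw [← ihj, Function.iterate_succ', ← mapL_comp, pair_mapL]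
          refine supp_eq _ _ (LK K (2 * i + 2)) (fun l hl => ?_)
            (supp_mapL _ (fun l hl => map_mem_LK (iter_mem hK j) hl) s1)
          simp only [pair_single]
          exact EE_map hℓ i l hl.2
    have B : ((pair (EE p ℓ i) (x (2 * i + 1)) : ℤ) : ZMod p) =
        ((pair (BB p ℓ i) (x (2 * i)) : ℤ) : ZMod p) := by
      have e1 : ((pair (EE p ℓ i) (x (2 * i + 1)) : ℤ) : ZMod p) =
          pair (LL p ℓ i) (bd (x (2 * i + 1))) := by
        rw [← pair_intCast]
        exact supp_eq _ (pair (LL p ℓ i) ∘ₗ bd) _ (fun l hl => by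
          simp only [pair_single, LinearMap.comp_apply, bd_single]
          rw [LL_bd i l (by rw [hl.1])]) s1
      rw [e1, d1, ← pair_intCast, LinearMap.sub_apply, map_sub, pair_mapL]
      rw [LinearMap.id_apply, sub_eq_iff_eq_add, ← LinearMap.add_apply]
      refine supp_eq _ _ _ (fun l hl => ?_) s0
      simp only [pair_single, LinearMap.add_apply]
      rw [LL_map hℓ i l hl.2 (by rintro rfl; simp [LK] at hl), add_comm]
    rw [show 2 * (i + 1) = 2 * i + 2 by ring, A, B, ih]

lemma BB_zero {S : Set V} {j : ℕ} (h : ∀ a ∈ S, ∀ b ∈ S, ∀ c ∈ S, bb p ℓ j a b c = 0) (i : ℕ)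
    (hj : j < i) : ∀ l : List V, (∀ v ∈ l, v ∈ S) → BB p ℓ i l = 0 := by
  induction i with
  | zero => omega
  | succ i ih =>
    intro l hl
    match l, hl with
    | [], _ => rfl
    | [_], _ => rfl
    | [_, _], _ => rfl
    | v0 :: v1 :: v2 :: l, hl =>
      rw [BB]
      rcases Nat.lt_succ_iff_lt_or_eq.1 hj with hj | rfl
      · rw [ih hj (v2 :: l) (fun v hv => hl v (by simp at hv ⊢; tauto)), mul_zero]
      · rw [h v0 (hl v0 (by simp)) v1 (hl v1 (by simp)) v2 (hl v2 (by simp)), zero_mul]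

end cochains
/-! ### Existence of small equivariant chains -/
section existence
variable {V : Type*} [NormedAddCommGroup V] [NormedSpace ℝ V]

/-- small lists -/
def Sm (K : Set V) (δ : ℝ) (k : ℕ) : Set (List V) :=
  {l | l ∈ LK K k ∧ ∀ u ∈ l, ∀ v ∈ l, dist u v < δ}

/-- contraction -/
def ctr (b : V) (t : ℝ) (v : V) : V := v + t • (b - v)

def coneSet (b : V) (K : Set V) : Set V := (fun q : ℝ × V => ctr b q.1 q.2) '' (Set.Icc 0 1 ×ˢ K)

lemma coneSet_compact (b : V) {K : Set V} (hK : IsCompact K) : IsCompact (coneSet b K) := by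
  apply (isCompact_Icc.prod hK).image
  unfold ctr
  fun_prop

lemma subset_coneSet (b : V) (K : Set V) : K ⊆ coneSet b K := fun v hv =>
  ⟨(0, v), ⟨⟨by simp, by simp⟩, hv⟩, by simp [ctr]⟩

lemma ctr_dist (b : V) {t : ℝ} (h0 : 0 ≤ t) (h1 : t ≤ 1) (u v : V) :
    dist (ctr b t u) (ctr b t v) ≤ dist u v := by
  rw [dist_eq_norm, dist_eq_norm]
  have : ctr b t u - ctr b t v = (1 - t) • (u - v) := by
    simp only [ctr]; module
  rw [this, norm_smul, Real.norm_of_nonneg (by linarith)]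
  nlinarith [norm_nonneg (u - v)]

lemma ctr_step (b : V) (t t' : ℝ) (v : V) :
    dist (ctr b t v) (ctr b t' v) = |t - t'| * dist b v := by
  rw [dist_eq_norm, dist_eq_norm]
  have : ctr b t v - ctr b t' v = (t - t') • (b - v) := by
    simp only [ctr]; module
  rw [this, norm_smul, Real.norm_eq_abs]

lemma cone_exists (b : V) {K : Set V} (hK : IsCompact K) (hKne : K.Nonempty) {δ : ℝ} (hδ : 0 < δ)
    {k : ℕ} {x : Ch V}
    (hx : x ∈ Finsupp.supported ℤ ℤ (Sm K δ k)) (hbx : bd x = 0) :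
    ∃ z ∈ Finsupp.supported ℤ ℤ (Sm (coneSet b K) (2 * δ) (k + 1)), bd z = x := by
  obtain ⟨R, hR⟩ := hK.isBounded.subset_closedBall b
  obtain ⟨M, hM⟩ := exists_nat_gt (max (R / δ) 0)
  have hM0 : (0 : ℝ) < M := lt_of_le_of_lt (le_max_right _ _) hM
  have hM1 : R / δ < M := lt_of_le_of_lt (le_max_left _ _) hM
  have hstep : ∀ v ∈ K, dist b v / M < δ := by
    intro v hv
    have := hR hv
    rw [Metric.mem_closedBall, dist_comm] at this
    rw [div_lt_iff₀ hδ] at hM1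
    rw [div_lt_iff₀ hM0]
    linarith
  set f : ℕ → V → V := fun s => ctr b (s / M) with hf
  have hf0 : f 0 = id := by ext v; simp [hf, ctr]
  have hfM : ∀ v, f M v = b := by intro v; simp [hf, ctr, hM0.ne']
  have tele : ∀ m : ℕ, bd (∑ s ∈ Finset.range m, pr (f s) (f (s + 1)) x) = mapL (f m) x - x := by
    intro m
    induction m with
    | zero => simp [hf0, mapL_id]
    | succ m ih =>
      rw [Finset.sum_range_succ, map_add, ih]
      have := bd_pr (f m) (f (m + 1)) x
      rw [hbx, map_zero, add_zero] at this
      rw [this]; abel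
  refine ⟨consL b (mapL (f M) x) - ∑ s ∈ Finset.range M, pr (f s) (f (s + 1)) x, ?_, ?_⟩
  · have hb : b ∈ coneSet b K := by
      obtain ⟨v, hv⟩ := hKne
      exact ⟨(1, v), ⟨⟨by simp, by simp⟩, hv⟩, by simp [ctr]⟩
    refine Submodule.sub_mem _ ?_ (Submodule.sum_mem _ fun s hs => ?_)
    · refine supp_consL b (S := {l | l.length = k ∧ ∀ v ∈ l, v = b}) ?_ (supp_mapL _ ?_ hx)
      · rintro l ⟨hl, hl'⟩
        have : ∀ v ∈ b :: l, v = b := by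
          intro v hv
          rcases List.mem_cons.1 hv with h | h
          · exact h
          · exact hl' v h
        refine ⟨⟨by simp [hl], fun v hv => this v hv ▸ hb⟩, ?_⟩
        intro u hu v hv
        rw [this u hu, this v hv, dist_self]; positivity
      · rintro l hl
        refine ⟨by simpa using hl.1.1, fun v hv => ?_⟩
        obtain ⟨a, _, rfl⟩ := List.mem_map.1 hv
        exact hfM a
    · have hs : s < M := Finset.mem_range.1 hs
      have hs1 : ((s + 1 : ℕ) : ℝ) / M ≤ 1 := by
        rw [div_le_one hM0]; exact_mod_cast hs
      have hs2 : ((s : ℕ) : ℝ) / M ≤ 1 := by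
        rw [div_le_one hM0]; exact_mod_cast hs.le
      have hs3 : (0 : ℝ) ≤ ((s + 1 : ℕ) : ℝ) / M := by positivity
      have hs4 : (0 : ℝ) ≤ ((s : ℕ) : ℝ) / M := by positivity
      refine supp_mem _ _ _ (fun l hl => ?_) hx
      rw [pr_single]
      refine supp_mono ?_ (prL_supp _ _ l)
      rintro m ⟨hm, hm'⟩
      refine ⟨⟨by rw [hm, hl.1.1], ?_⟩, ?_⟩
      · intro u hu
        obtain ⟨v, hv, rfl | rfl⟩ := hm' u hu
        · exact ⟨(_, v), ⟨⟨hs4, hs2⟩, hl.1.2 v hv⟩, rfl⟩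
        · exact ⟨(_, v), ⟨⟨hs3, hs1⟩, hl.1.2 v hv⟩, rfl⟩
      · have key : ∀ u ∈ l, ∀ v ∈ l, dist (f s u) (f (s + 1) v) < 2 * δ := by
          intro u hu v hv
          have h1 := ctr_dist b hs4 hs2 u v
          have h2 := ctr_step b ((s : ℕ) / M) ((s + 1 : ℕ) / M) v
          have h3 : |((s : ℕ) : ℝ) / M - ((s + 1 : ℕ) : ℝ) / M| = 1 / M := by
            rw [abs_sub_comm, abs_of_nonneg] <;> push_cast
            · ring
            · rw [← sub_div]; simp
          rw [h3] at h2
          have h4 := hstep v (hl.1.2 v hv)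
          have h5 := hl.2 u hu v hv
          have h6 := dist_triangle (f s u) (f s v) (f (s + 1) v)
          simp only [hf] at h6 ⊢
          have : 1 / (M : ℝ) * dist b v = dist b v / M := by ring
          linarith
        intro u hu w hw
        obtain ⟨a, ha, rfl | rfl⟩ := hm' u hu <;> obtain ⟨a', ha', rfl | rfl⟩ := hm' w hw
        · have := ctr_dist b hs4 hs2 a a'
          have h5 := hl.2 a ha a' ha'
          simp only [hf]; linarith
        · exact key a ha a' ha'
        · rw [dist_comm]; exact key a' ha' a ha
        · have := ctr_dist b hs3 hs1 a a'
          have h5 := hl.2 a ha a' ha'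
          simp only [hf]; linarith
  · rw [map_sub, bd_consL, bd_mapL, hbx, map_zero, map_zero, sub_zero, tele]
    abel

variable {p : ℕ} {c : V → V}

lemma DD_DD (hcp : c^[p] = id) (k : ℕ) (x : Ch V) : DD p c (k + 1) (DD p c k x) = 0 := by
  have key : ∑ j ∈ Finset.range p, mapL (c^[j + 1]) x = ∑ j ∈ Finset.range p, mapL (c^[j]) x := by
    have h1 := Finset.sum_range_succ (fun j => mapL (c^[j]) x) p
    have h2 := Finset.sum_range_succ' (fun j => mapL (c^[j]) x) p
    rw [h1, hcp, Function.iterate_zero] at h2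
    exact (add_right_cancel h2).symm
  have key' : ∑ j ∈ Finset.range p, mapL (c^[j]) (mapL c x) = ∑ j ∈ Finset.range p, mapL (c^[j]) x := by
    rw [← key]
    exact Finset.sum_congr rfl fun j _ => by rw [mapL_comp, Function.iterate_succ]
  have key'' : ∑ j ∈ Finset.range p, mapL c (mapL (c^[j]) x) = ∑ j ∈ Finset.range p, mapL (c^[j]) x := by
    rw [← key]
    exact Finset.sum_congr rfl fun j _ => by rw [mapL_comp, Function.iterate_succ']
  rcases Nat.even_or_odd k with h | h
  · have e1 : DD p c k = mapL c - LinearMap.id := if_pos h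
    have e2 : DD p c (k + 1) = ∑ j ∈ Finset.range p, mapL (c^[j]) :=
      if_neg (by rw [Nat.even_add_one]; simpa using h)
    rw [e1, e2]
    simp only [LinearMap.sub_apply, LinearMap.sum_apply, LinearMap.id_apply]
    rw [← sub_eq_zero] at key'
    rw [← key', ← Finset.sum_sub_distrib]
    simp only [map_sub]
  · have e1 : DD p c (k + 1) = mapL c - LinearMap.id := if_pos (by simpa [Nat.even_add_one] using h)
    have e2 : DD p c k = ∑ j ∈ Finset.range p, mapL (c^[j]) := if_neg (by simpa using h)
    rw [e1, e2]
    simp only [LinearMap.sub_apply, LinearMap.sum_apply, LinearMap.id_apply]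
    rw [map_sum, key'', sub_self]

lemma bd_DD (k : ℕ) (x : Ch V) : bd (DD p c k x) = DD p c k (bd x) := by
  unfold DD
  split_ifs <;> simp [bd_mapL]

lemma chains_exist (hp0 : 0 < p) (hc : Continuous c) (hcp : c^[p] = id) {Y : Set V}
    (hY : Convex ℝ Y) (hcY : ∀ v ∈ Y, c v ∈ Y) {b : V} (hb : b ∈ Y) (k : ℕ) :
    ∃ K : Set V, IsCompact K ∧ K.Nonempty ∧ K ⊆ Y ∧ (∀ v ∈ K, c v ∈ K) ∧ ∀ δ > 0, ∃ x : ℕ → Ch V,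
      x 0 = Finsupp.single [b] 1 ∧
      (∀ j ≤ k, x j ∈ Finsupp.supported ℤ ℤ (LK K (j + 1))) ∧
      (∀ j < k, bd (x (j + 1)) = DD p c j (x j)) ∧
      x k ∈ Finsupp.supported ℤ ℤ (Sm K δ (k + 1)) := by
  -- saturation of a compact set
  have sat : ∀ A : Set V, IsCompact A → A ⊆ Y → ∃ K : Set V, IsCompact K ∧ A ⊆ K ∧ K ⊆ Y ∧
      (∀ v ∈ K, c v ∈ K) := by
    intro A hA hAY
    refine ⟨⋃ j ∈ Finset.range p, c^[j] '' A, ?_, ?_, ?_, ?_⟩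
    · exact (Finset.range p).isCompact_biUnion fun j _ => hA.image (hc.iterate j)
    · intro v hv
      simp only [Set.mem_iUnion]
      exact ⟨0, by simpa using hp0, v, hv, rfl⟩
    · intro v hv
      simp only [Set.mem_iUnion] at hv
      obtain ⟨j, _, a, ha, rfl⟩ := hv
      exact iter_mem hcY j a (hAY ha)
    · intro v hv
      simp only [Set.mem_iUnion] at hv ⊢
      obtain ⟨j, hj, a, ha, rfl⟩ := hv
      rw [Finset.mem_range] at hj
      by_cases h : j + 1 < p
      · exact ⟨j + 1, by simpa using h, a, ha, by rw [Function.iterate_succ_apply']⟩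
      · refine ⟨0, by simpa using hp0, a, ha, ?_⟩
        rw [← Function.iterate_succ_apply' c, show j.succ = p by omega, hcp]
        rfl
  induction k with
  | zero =>
    obtain ⟨K, h1, h2, h3, h4⟩ := sat {b} isCompact_singleton (by simpa using hb)
    have hbK : b ∈ K := h2 rfl
    refine ⟨K, h1, ⟨b, hbK⟩, h3, h4, fun δ hδ => ⟨fun _ => Finsupp.single [b] 1, rfl, ?_, ?_, ?_⟩⟩
    · intro j hj
      obtain rfl : j = 0 := by omega
      exact supp_single (S := LK K 1) ⟨by simp, by simpa using hbK⟩ 1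
    · intro j hj; omega
    · exact supp_single (S := Sm K δ 1) ⟨⟨by simp, by simpa using hbK⟩, by simpa using hδ⟩ 1
  | succ k ih =>
    obtain ⟨K, hKc, hKne, hKY, hKinv, hK⟩ := ih
    have hcone : coneSet b K ⊆ Y := by
      rintro _ ⟨⟨t, v⟩, ⟨⟨h0, h1⟩, hv⟩, rfl⟩
      simp only at h0 h1 hv
      have := hY (hKY hv) hb (a := 1 - t) (b := t) (by linarith) h0 (by ring)
      convert this using 1
      simp only [ctr]; module
    obtain ⟨K', h1, h2, h3, h4⟩ := sat (coneSet b K) (coneSet_compact b hKc) hcone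
    have hKK' : K ⊆ K' := (subset_coneSet b K).trans h2
    refine ⟨K', h1, hKne.mono hKK', h3, h4, fun δ hδ => ?_⟩
    have huc : ∀ j : ℕ, ∃ η > 0, ∀ u ∈ K, ∀ v ∈ K, dist u v < η → dist (c^[j] u) (c^[j] v) < δ / 2 := by
      intro j
      have := hKc.uniformContinuousOn_of_continuous (hc.iterate j).continuousOn
      rw [Metric.uniformContinuousOn_iff] at this
      obtain ⟨η, h, h'⟩ := this (δ / 2) (by positivity)
      exact ⟨η, h, fun u hu v hv => h' u hu v hv⟩
    choose η hη0 hη using huc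
    obtain ⟨η', hη'0, hη'⟩ : ∃ η' > 0, ∀ j ≤ p, η' ≤ η j := by
      refine ⟨(Finset.range (p + 1)).inf' (by simp) η, ?_, ?_⟩
      · rw [gt_iff_lt, Finset.lt_inf'_iff]; exact fun j _ => hη0 j
      · intro j hj
        exact Finset.inf'_le _ (by simpa using Nat.lt_succ_of_le hj)
    obtain ⟨x, hx0, hxs, hxd, hxk⟩ := hK η' hη'0
    have hmap : ∀ j ≤ p, mapL (c^[j]) (x k) ∈ Finsupp.supported ℤ ℤ (Sm K (δ / 2) (k + 1)) := by
      intro j hj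
      refine supp_mapL (S := Sm K η' (k + 1)) (T := Sm K (δ / 2) (k + 1)) _
        (fun l hl => ⟨map_mem_LK (iter_mem hKinv j) hl.1, ?_⟩) hxk
      intro u hu v hv
      obtain ⟨a, ha, rfl⟩ := List.mem_map.1 hu
      obtain ⟨a', ha', rfl⟩ := List.mem_map.1 hv
      exact hη j a (hl.1.2 a ha) a' (hl.1.2 a' ha') ((hl.2 a ha a' ha').trans_le (hη' j hj))
    have hDs : DD p c k (x k) ∈ Finsupp.supported ℤ ℤ (Sm K (δ / 2) (k + 1)) := by
      unfold DD
      split_ifs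
      · have h1 := hmap 1 (by omega)
        have h0 := hmap 0 (by omega)
        rw [Function.iterate_zero, mapL_id] at h0
        rw [Function.iterate_one] at h1
        exact Submodule.sub_mem _ h1 h0
      · rw [LinearMap.sum_apply]
        exact Submodule.sum_mem _ fun j hj => hmap j (Finset.mem_range.1 hj).le
    have hDb : bd (DD p c k (x k)) = 0 := by
      rw [bd_DD]
      cases k with
      | zero => simp [hx0, DD, bdL]
      | succ k => rw [hxd k (by omega), DD_DD hcp]
    obtain ⟨z, hz, hbz⟩ := cone_exists b hKc hKne (by positivity : 0 < δ / 2) hDs hDb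
    have hz' : z ∈ Finsupp.supported ℤ ℤ (Sm K' δ (k + 1 + 1)) := by
      refine supp_mono ?_ hz
      rintro l ⟨⟨ha, hb⟩, hc⟩
      refine ⟨⟨ha, fun v hv => h2 (hb v hv)⟩, fun u hu v hv => ?_⟩
      have := hc u hu v hv
      linarith
    refine ⟨fun j => if j = k + 1 then z else x j, by simpa using hx0, ?_, ?_, by simpa using hz'⟩
    · intro j hj
      by_cases h : j = k + 1
      · subst h
        simp only [if_true]
        exact supp_mono (fun l hl => hl.1) hz'
      · simp only [h, if_false]
        exact supp_mono (S := LK K (j + 1)) (T := LK K' (j + 1))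
          (fun l hl => ⟨hl.1, fun v hv => hKK' (hl.2 v hv)⟩) (hxs j (by omega))
    · intro j hj
      by_cases h : j = k
      · subst h
        simpa using hbz
      · have h1 : j ≠ k + 1 := by omega
        have h2 : j + 1 ≠ k + 1 := by omega
        simp only [h1, h2, if_false]
        exact hxd j (by omega)

end existence
/-! ### The Borsuk-Ulam type theorem -/
section borsuk

open Complex in
lemma arg_lift {z w : ℂ} (hz : z ≠ 0) (hw : w ≠ 0) :
    ∃ k : ℤ, arg w = arg z + arg (w / z) + 2 * Real.pi * k := by
  have h := arg_div_coe_angle hw hz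
  have h2 : ((arg w : ℝ) : Real.Angle) = ((arg z + arg (w / z) : ℝ) : Real.Angle) := by
    rw [Real.Angle.coe_add, h]; abel
  rw [Real.Angle.angle_eq_iff_two_pi_dvd_sub] at h2
  obtain ⟨k, hk⟩ := h2
  exact ⟨k, by linarith⟩

/-- The sector of a complex number. -/
noncomputable def sec (p : ℕ) (z : ℂ) : ZMod p := ((⌊p * Complex.arg z / (2 * Real.pi)⌋ : ℤ) : ZMod p)

lemma sec_eq (p : ℕ) {z w : ℂ} (hz : z ≠ 0) (hw : w ≠ 0) :
    sec p w = ((⌊p * Complex.arg z / (2 * Real.pi) + p * Complex.arg (w / z) / (2 * Real.pi)⌋ : ℤ) :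
      ZMod p) := by
  obtain ⟨k, hk⟩ := arg_lift hz hw
  have : (p : ℝ) * Complex.arg w / (2 * Real.pi) =
    p * Complex.arg z / (2 * Real.pi) + p * Complex.arg (w / z) / (2 * Real.pi) + ((p * k : ℤ) : ℝ) := by
    rw [hk]; push_cast
    field_simp
  rw [sec, this, Int.floor_add_intCast]
  push_cast
  simp

noncomputable def zet (p : ℕ) : ℂ := Complex.exp (((2 * Real.pi / p : ℝ) : ℂ) * Complex.I)

lemma zet_ne (p : ℕ) : zet p ≠ 0 := Complex.exp_ne_zero _

lemma sec_zet {p : ℕ} (hp : 3 ≤ p) {z : ℂ} (hz : z ≠ 0) : sec p (zet p * z) = sec p z + 1 := by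
  have hp' : (3 : ℝ) ≤ p := by exact_mod_cast hp
  have hpi := Real.pi_pos
  have harg : Complex.arg (zet p) = 2 * Real.pi / p := by
    rw [zet, Complex.arg_exp_mul_I, toIocMod_eq_self]
    constructor
    · have : 0 < 2 * Real.pi / p := by positivity
      linarith
    · rw [div_le_iff₀ (by linarith)]
      nlinarith
  rw [sec_eq p hz (mul_ne_zero (zet_ne p) hz), mul_div_cancel_right₀ _ hz, harg]
  have : (p : ℝ) * (2 * Real.pi / p) / (2 * Real.pi) = 1 := by field_simp
  rw [this, Int.floor_add_one, sec]
  push_cast; rfl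

lemma bb_eq_zero {V : Type*} {p : ℕ} [NeZero p] (hp : 3 ≤ p) (ℓ : ℕ → V → ZMod p) (i : ℕ) (A : ℝ)
    {a b c : V} (ha : ∃ θ : ℝ, |θ| < 1 / 2 ∧ ℓ i a = ((⌊A + θ⌋ : ℤ) : ZMod p))
    (hb : ∃ θ : ℝ, |θ| < 1 / 2 ∧ ℓ i b = ((⌊A + θ⌋ : ℤ) : ZMod p))
    (hc : ∃ θ : ℝ, |θ| < 1 / 2 ∧ ℓ i c = ((⌊A + θ⌋ : ℤ) : ZMod p)) : bb p ℓ i a b c = 0 := by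
  have main : ∀ {a b : V} {θ θ' : ℝ}, |θ| < 1 / 2 → |θ'| < 1 / 2 →
      ℓ i a = ((⌊A + θ⌋ : ℤ) : ZMod p) → ℓ i b = ((⌊A + θ'⌋ : ℤ) : ZMod p) →
      ee p ℓ i a b = ⌊A + θ'⌋ - ⌊A + θ⌋ := by
    intro a b θ θ' h h' e e'
    rw [abs_lt] at h h'
    have l1 : ⌊A + θ'⌋ - ⌊A + θ⌋ ≤ 1 := by
      have h1 := Int.floor_le (A + θ')
      have h2 := Int.lt_floor_add_one (A + θ)
      have : ((⌊A + θ'⌋ - ⌊A + θ⌋ : ℤ) : ℝ) < 2 := by push_cast; linarith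
      have : (⌊A + θ'⌋ - ⌊A + θ⌋ : ℤ) < 2 := by exact_mod_cast this
      omega
    have l2 : -1 ≤ ⌊A + θ'⌋ - ⌊A + θ⌋ := by
      have h1 := Int.floor_le (A + θ)
      have h2 := Int.lt_floor_add_one (A + θ')
      have : (-2 : ℝ) < ((⌊A + θ'⌋ - ⌊A + θ⌋ : ℤ) : ℝ) := by push_cast; linarith
      have : (-2 : ℤ) < (⌊A + θ'⌋ - ⌊A + θ⌋ : ℤ) := by exact_mod_cast this
      omega
    rw [ee, ZMod.valMinAbs_spec, e, e']
    refine ⟨by push_cast; rfl, ?_, ?_⟩ <;> omega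
  obtain ⟨θ, h, e⟩ := ha
  obtain ⟨θ', h', e'⟩ := hb
  obtain ⟨θ'', h'', e''⟩ := hc
  rw [bb, main h h' e e', main h h'' e e'', main h' h'' e' e'']
  have : ⌊A + θ''⌋ - ⌊A + θ'⌋ - (⌊A + θ''⌋ - ⌊A + θ⌋) + (⌊A + θ'⌋ - ⌊A + θ⌋) = 0 := by ring
  rw [this, Int.zero_ediv]

variable {V : Type*} [NormedAddCommGroup V] [NormedSpace ℝ V]

open Classical in
theorem bu0 {p : ℕ} (hp : 3 ≤ p) {c : V → V} (hc : Continuous c)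
    (hcp : c^[p] = id) {Y : Set V}
    (hY : Convex ℝ Y) (hcY : ∀ v ∈ Y, c v ∈ Y) {b : V} (hb : b ∈ Y) (r : ℕ) :
    ∃ K : Set V, IsCompact K ∧ K ⊆ Y ∧ (∀ v ∈ K, c v ∈ K) ∧ ∀ w : ℕ → V → ℂ,
      (∀ i < r, ContinuousOn (w i) K) → (∀ i < r, ∀ v ∈ K, w i (c v) = zet p * w i v) →
      ∃ v ∈ K, ∀ i < r, w i v = 0 := by
  have : NeZero p := ⟨by omega⟩
  have : Fact (1 < p) := ⟨by omega⟩
  obtain ⟨K, hKc, hKne, hKY, hKinv, hK⟩ := chains_exist (by omega) hc hcp hY hcY hb (2 * r)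
  refine ⟨K, hKc, hKY, hKinv, fun w hwc hw => ?_⟩
  by_contra! hcon
  -- labels
  set idx : V → ℕ := fun v => sInf {i | i < r ∧ w i v ≠ 0} with hidx
  have hidx_spec : ∀ v ∈ K, idx v < r ∧ w (idx v) v ≠ 0 := fun v hv => Nat.sInf_mem (hcon v hv)
  have hne_iff : ∀ i < r, ∀ v ∈ K, (w i (c v) ≠ 0 ↔ w i v ≠ 0) := by
    intro i hi v hv
    rw [hw i hi v hv]; simp [zet_ne]
  have hidx_c : ∀ v ∈ K, idx (c v) = idx v := by
    intro v hv
    simp only [hidx]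
    congr 1
    ext i
    simp only [Set.mem_ofPred_eq]
    exact and_congr_right fun hi => hne_iff i hi v hv
  set ℓ : ℕ → V → ZMod p := fun i v =>
    sec p (if i < r ∧ w i v ≠ 0 then w i v else w (idx v) v) with hℓdef
  have hℓ : ∀ i, ∀ v ∈ K, ℓ i (c v) = ℓ i v + 1 := by
    intro i v hv
    simp only [hℓdef]
    by_cases h : i < r ∧ w i v ≠ 0
    · have h' : i < r ∧ w i (c v) ≠ 0 := ⟨h.1, (hne_iff i h.1 v hv).2 h.2⟩
      rw [if_pos h, if_pos h', hw i h.1 v hv, sec_zet hp h.2]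
    · have h' : ¬ (i < r ∧ w i (c v) ≠ 0) := fun h' => h ⟨h'.1, (hne_iff i h'.1 v hv).1 h'.2⟩
      obtain ⟨h1, h2⟩ := hidx_spec v hv
      rw [if_neg h, if_neg h', hidx_c v hv, hw _ h1 v hv, sec_zet hp h2]
  -- lower bound
  have hr : 0 < r := by
    obtain ⟨v, hv⟩ := hKne
    obtain ⟨i, hi, _⟩ := hcon v hv
    omega
  obtain ⟨μ, hμ0, hμ⟩ : ∃ μ > 0, ∀ v ∈ K, ∃ i < r, μ ≤ ‖w i v‖ := by
    have hcont : ContinuousOn (fun v => ∑ i ∈ Finset.range r, ‖w i v‖) K :=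
      continuousOn_finsetSum _ fun i hi => (hwc i (Finset.mem_range.1 hi)).norm
    obtain ⟨v0, hv0, hmin⟩ := hKc.exists_isMinOn hKne hcont
    have hpos : 0 < ∑ i ∈ Finset.range r, ‖w i v0‖ := by
      obtain ⟨i, hi, h⟩ := hcon v0 hv0
      exact Finset.sum_pos' (fun _ _ => norm_nonneg _) ⟨i, by simpa using hi, by simpa using h⟩
    refine ⟨(∑ i ∈ Finset.range r, ‖w i v0‖) / r, by positivity, fun v hv => ?_⟩
    by_contra! h
    have h1 : ∑ i ∈ Finset.range r, ‖w i v‖ <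
        ∑ i ∈ Finset.range r, (∑ i ∈ Finset.range r, ‖w i v0‖) / r :=
      Finset.sum_lt_sum_of_nonempty (by simpa using hr.ne') fun i hi => h i (Finset.mem_range.1 hi)
    have h2 := hmin hv
    simp only [Finset.sum_const, Finset.card_range, nsmul_eq_mul, Set.mem_ofPred_eq] at h1 h2
    rw [mul_div_cancel₀ _ (by positivity)] at h1
    linarith
  -- angle bound
  obtain ⟨ε, hε0, hε⟩ : ∃ ε > 0, ∀ z : ℂ, dist z 1 < ε → z ≠ 0 ∧ |Complex.arg z| < Real.pi / p := by
    have h1 : ContinuousAt Complex.arg 1 := Complex.continuousAt_arg (by simp)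
    rw [Metric.continuousAt_iff] at h1
    obtain ⟨ε, hε0, hε⟩ := h1 (Real.pi / p) (by positivity)
    refine ⟨min ε 1, by positivity, fun z hz => ⟨?_, ?_⟩⟩
    · rintro rfl
      have := lt_of_lt_of_le hz (min_le_right _ _)
      simp at this
    · have := hε (lt_of_lt_of_le hz (min_le_left _ _))
      simpa [Real.dist_eq] using this
  -- uniform continuity
  obtain ⟨δ, hδ0, hδ⟩ : ∃ δ > 0, ∀ i < r, ∀ u ∈ K, ∀ v ∈ K, dist u v < δ →
      dist (w i u) (w i v) < ε * μ := by
    have : ∀ i, ∃ δ > 0, i < r → ∀ u ∈ K, ∀ v ∈ K, dist u v < δ → dist (w i u) (w i v) < ε * μ := by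
      intro i
      by_cases hi : i < r
      · have := hKc.uniformContinuousOn_of_continuous (hwc i hi)
        rw [Metric.uniformContinuousOn_iff] at this
        obtain ⟨η, h, h'⟩ := this (ε * μ) (by positivity)
        exact ⟨η, h, fun _ u hu v hv => h' u hu v hv⟩
      · exact ⟨1, one_pos, fun h => absurd h hi⟩
    choose η hη0 hη using this
    refine ⟨(Finset.range (r + 1)).inf' (by simp) η, ?_, ?_⟩
    · rw [gt_iff_lt, Finset.lt_inf'_iff]; exact fun j _ => hη0 j
    · intro i hi u hu v hv h
      exact hη i hi u hu v hv (h.trans_le (Finset.inf'_le _ (by simp; omega)))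
  obtain ⟨x, hx0, hxs, hxd, hxk⟩ := hK δ hδ0
  have h1 := pairing_eq_one hKinv hℓ x b hx0 (2 * r) hxs hxd r le_rfl
  have h2 : pair (BB p ℓ r) (x (2 * r)) = 0 := by
    refine supp_eq (pair (BB p ℓ r)) 0 _ (fun l hl => ?_) hxk
    rw [pair_single, LinearMap.zero_apply]
    obtain ⟨v, hv⟩ : ∃ v, v ∈ l := by
      apply List.exists_mem_of_ne_nil
      rintro rfl
      have := hl.1.1
      simp at this
    have hvK := hl.1.2 v hv
    obtain ⟨i, hi, hiμ⟩ := hμ v hvK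
    have hwv : w i v ≠ 0 := by
      intro h; rw [h, norm_zero] at hiμ; linarith
    refine BB_zero (S := {u | u ∈ K ∧ dist u v < δ}) (j := i) ?_ r hi l
      (fun u hu => ⟨hl.1.2 u hu, hl.2 u hu v hv⟩)
    have key : ∀ u ∈ {u | u ∈ K ∧ dist u v < δ}, ∃ θ : ℝ, |θ| < 1 / 2 ∧
        ℓ i u = ((⌊p * Complex.arg (w i v) / (2 * Real.pi) + θ⌋ : ℤ) : ZMod p) := by
      rintro u ⟨huK, hu⟩
      have hd := hδ i hi u huK v hvK hu
      have hd' : dist (w i u / w i v) 1 < ε := by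
        rw [dist_eq_norm] at hd ⊢
        have : w i u / w i v - 1 = (w i u - w i v) / w i v := by field_simp
        rw [this, norm_div, div_lt_iff₀ (by linarith)]
        nlinarith
      obtain ⟨hz, harg⟩ := hε _ hd'
      have hwu : w i u ≠ 0 := fun h => hz (by simp [h])
      refine ⟨p * Complex.arg (w i u / w i v) / (2 * Real.pi), ?_, ?_⟩
      · have hpi := Real.pi_pos
        have hp' : (0 : ℝ) < p := by positivity
        rw [abs_div, abs_mul, abs_of_pos hp', abs_of_pos (by positivity : 0 < 2 * Real.pi),
          div_lt_iff₀ (by positivity)]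
        rw [lt_div_iff₀ hp'] at harg
        linarith
      · simp only [hℓdef]
        rw [if_pos ⟨hi, hwu⟩, sec_eq p hwv hwu]
    intro a ha b hb c hc
    exact bb_eq_zero hp ℓ i _ (key a ha) (key b hb) (key c hc)
  rw [h2] at h1
  simp at h1

open ZMod in
theorem bu1 {p : ℕ} (hpp : p.Prime) (hp : 3 ≤ p) {c : V → V} (hc : Continuous c)
    (hcp : c^[p] = id) {Y : Set V}
    (hY : Convex ℝ Y) (hcY : ∀ v ∈ Y, c v ∈ Y) {b : V} (hb : b ∈ Y) (ι : Type*) [Fintype ι] :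
    ∃ K : Set V, IsCompact K ∧ K ⊆ Y ∧ (∀ v ∈ K, c v ∈ K) ∧ ∀ u : ι → V → ℝ,
      (∀ i, ContinuousOn (u i) K) → ∃ v ∈ K, ∀ i, u i (c v) = u i v := by
  have : Fact p.Prime := ⟨hpp⟩
  have : Fact (1 < p) := ⟨by omega⟩
  let J := ι × {j : ZMod p // j ≠ 0}
  let e := Fintype.equivFin J
  obtain ⟨K, hKc, hKY, hKinv, hK⟩ := bu0 hp hc hcp hY hcY hb (Fintype.card J)
  refine ⟨K, hKc, hKY, hKinv, fun u hu => ?_⟩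
  let Φ : ι → V → ZMod p → ℂ := fun i v k => (u i (c^[k.val] v) : ℂ)
  have hzet : zet p = stdAddChar (1 : ZMod p) := by
    have := stdAddChar_coe (N := p) 1
    push_cast at this
    rw [this, zet]
    congr 1
    push_cast
    ring
  have hΦ : ∀ i v k, Φ i (c v) k = Φ i v (k + 1) := by
    intro i v k
    simp only [Φ]
    congr 2
    rw [← Function.iterate_succ_apply, ZMod.val_add, ZMod.val_one]
    have h := Nat.mod_add_div (k.val + 1) p
    conv_lhs => rw [Nat.succ_eq_add_one, ← h, Function.iterate_add_apply, Function.iterate_mul, hcp,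
      Function.iterate_id]
    simp only [id]
  have hF : ∀ i v j, dft (Φ i (c v)) j = stdAddChar j * dft (Φ i v) j := by
    intro i v j
    rw [dft_apply, dft_apply, Finset.mul_sum]
    refine Fintype.sum_equiv (Equiv.addRight 1) _ _ fun k => ?_
    rw [hΦ, Equiv.coe_addRight, smul_eq_mul, smul_eq_mul, ← mul_assoc, ← AddChar.map_add_eq_mul]
    congr 2
    ring
  let w : ℕ → V → ℂ := fun n v => if h : n < Fintype.card J then
    (dft (Φ (e.symm ⟨n, h⟩).1 v) (e.symm ⟨n, h⟩).2.1) ^ ((e.symm ⟨n, h⟩).2.1⁻¹).val else 0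
  have hw1 : ∀ i < Fintype.card J, ContinuousOn (w i) K := by
    intro n hn
    simp only [w, hn, dif_pos]
    refine ContinuousOn.pow ?_ _
    simp only [dft_apply]
    refine continuousOn_finsetSum _ fun k _ => ?_
    simp only [Φ]
    have h1 : ContinuousOn (fun v => u (e.symm ⟨n, hn⟩).1 (c^[k.val] v)) K :=
      ContinuousOn.comp (hu _) (hc.iterate _).continuousOn (fun v hv => iter_mem hKinv _ v hv)
    exact (Complex.continuous_ofReal.comp_continuousOn h1).const_smul
      (stdAddChar (-(k * (e.symm ⟨n, hn⟩).2.1)))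
  have hw2 : ∀ i < Fintype.card J, ∀ v ∈ K, w i (c v) = zet p * w i v := by
    intro n hn v hv
    simp only [w, hn, dif_pos]
    rw [hF, mul_pow, hzet, ← AddChar.map_nsmul_eq_pow]
    congr 2
    rw [nsmul_eq_mul, ZMod.natCast_zmod_val, inv_mul_cancel₀ (e.symm ⟨n, hn⟩).2.2]
  obtain ⟨v, hv, h0⟩ := hK w hw1 hw2
  refine ⟨v, hv, fun i => ?_⟩
  have hz : ∀ j : ZMod p, j ≠ 0 → dft (Φ i v) j = 0 := by
    intro j hj
    have := h0 (e (i, ⟨j, hj⟩)) (e (i, ⟨j, hj⟩)).2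
    simp only [w, Fin.is_lt, dif_pos, Fin.eta, Equiv.symm_apply_apply] at this
    exact eq_zero_of_pow_eq_zero this
  have hconst : ∀ k : ZMod p, Φ i v k = (p : ℂ)⁻¹ * dft (Φ i v) 0 := by
    intro k
    have h1 : Φ i v = dft.symm (dft (Φ i v)) := (dft.symm_apply_apply _).symm
    rw [congrFun h1 k, invDFT_apply, Finset.sum_eq_single 0]
    · simp
    · intro j _ hj; rw [hz j hj, smul_zero]
    · simp
  have h01 := (hconst 1).trans (hconst 0).symm
  simp only [Φ, ZMod.val_one, ZMod.val_zero, Function.iterate_one, Function.iterate_zero, id] at h01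
  exact_mod_cast h01

end borsuk
section conj
variable {n : ℕ}

/-- The averaged transport operator between the tangent spaces at `a` and `z`. -/
noncomputable def avM (p : ℕ) (c : (EuclideanSpace ℝ (Fin n)) → (EuclideanSpace ℝ (Fin n))) (j : ℕ) (q : (EuclideanSpace ℝ (Fin n)) × (EuclideanSpace ℝ (Fin n))) : (EuclideanSpace ℝ (Fin n)) →L[ℝ] (EuclideanSpace ℝ (Fin n)) :=
  fderiv ℝ (c^[p - j]) (c^[j] q.2) * fderiv ℝ (c^[j]) q.1

noncomputable def avA (p : ℕ) (c : (EuclideanSpace ℝ (Fin n)) → (EuclideanSpace ℝ (Fin n))) (q : (EuclideanSpace ℝ (Fin n)) × (EuclideanSpace ℝ (Fin n))) : (EuclideanSpace ℝ (Fin n)) →L[ℝ] (EuclideanSpace ℝ (Fin n)) :=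
  (p : ℝ)⁻¹ • ∑ j ∈ Finset.range p, avM p c j q

theorem iter_contDiff {c : (EuclideanSpace ℝ (Fin n)) → (EuclideanSpace ℝ (Fin n))} (hc : ContDiff ℝ (⊤ : ℕ∞) c) (j : ℕ) :
    ContDiff ℝ (⊤ : ℕ∞) (c^[j]) := by
  induction j with
  | zero => exact contDiff_id
  | succ j ih => rw [Function.iterate_succ]; exact ih.comp hc

theorem iter_diff {c : (EuclideanSpace ℝ (Fin n)) → (EuclideanSpace ℝ (Fin n))} (hc : ContDiff ℝ (⊤ : ℕ∞) c) (j : ℕ) :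
    Differentiable ℝ (c^[j]) := (iter_contDiff hc j).differentiable (by simp)

theorem avA_cont (p : ℕ) {c : (EuclideanSpace ℝ (Fin n)) → (EuclideanSpace ℝ (Fin n))} (hc : ContDiff ℝ (⊤ : ℕ∞) c) : Continuous (avA p c) := by
  unfold avA avM
  have h1 : ∀ j, Continuous (fderiv ℝ (c^[j])) := fun j =>
    (iter_contDiff hc j).continuous_fderiv (by simp)
  have h2 : ∀ j, Continuous (c^[j]) := fun j => (iter_contDiff hc j).continuous
  have h3 : Continuous fun q : (EuclideanSpace ℝ (Fin n)) × (EuclideanSpace ℝ (Fin n)) => ∑ j ∈ Finset.range p,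
      fderiv ℝ (c^[p - j]) (c^[j] q.2) * fderiv ℝ (c^[j]) q.1 := ?_
  · exact h3.const_smul (p : ℝ)⁻¹
  refine continuous_finsetSum _ fun j _ => ?_
  exact ((h1 _).comp ((h2 j).comp continuous_snd)).mul ((h1 j).comp continuous_fst)

theorem avM_diag {p : ℕ} {c : (EuclideanSpace ℝ (Fin n)) → (EuclideanSpace ℝ (Fin n))} (hc : ContDiff ℝ (⊤ : ℕ∞) c) (hcp : c^[p] = id)
    {j : ℕ} (hj : j ≤ p) (a : (EuclideanSpace ℝ (Fin n))) : avM p c j (a, a) = 1 := by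
  unfold avM
  have h := fderiv_comp a (iter_diff hc (p - j) (c^[j] a)) (iter_diff hc j a)
  rw [← Function.iterate_add, Nat.sub_add_cancel hj, hcp, fderiv_id] at h
  exact h.symm

theorem avA_diag {p : ℕ} (hp : p ≠ 0) {c : (EuclideanSpace ℝ (Fin n)) → (EuclideanSpace ℝ (Fin n))} (hc : ContDiff ℝ (⊤ : ℕ∞) c)
    (hcp : c^[p] = id) (a : (EuclideanSpace ℝ (Fin n))) : avA p c (a, a) = 1 := by
  unfold avA
  rw [Finset.sum_congr rfl fun j hj => avM_diag hc hcp (Finset.mem_range.1 hj).le a]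
  have : (p : ℝ) ≠ 0 := by exact_mod_cast hp
  rw [Finset.sum_const, Finset.card_range, ← Nat.cast_smul_eq_nsmul ℝ, smul_smul,
    inv_mul_cancel₀ this, one_smul]

theorem avM_equiv {p : ℕ} {c : (EuclideanSpace ℝ (Fin n)) → (EuclideanSpace ℝ (Fin n))} (hc : ContDiff ℝ (⊤ : ℕ∞) c) (hcp : c^[p] = id)
    {j : ℕ} (hj : j < p) (a z : (EuclideanSpace ℝ (Fin n))) :
    avM p c j (c a, c z) * fderiv ℝ c a = fderiv ℝ c z * avM p c (j + 1) (a, z) := by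
  unfold avM
  have hcd : Differentiable ℝ c := iter_diff hc 1
  have h1 : fderiv ℝ (c^[j + 1]) a = fderiv ℝ (c^[j]) (c a) * fderiv ℝ c a := by
    rw [Function.iterate_succ]
    exact fderiv_comp a (iter_diff hc j (c a)) (hcd a)
  have h2 : fderiv ℝ (c^[p - j]) (c^[j + 1] z)
      = fderiv ℝ c z * fderiv ℝ (c^[p - (j + 1)]) (c^[j + 1] z) := by
    have h3 : p - j = (p - (j + 1)) + 1 := by omega
    have h4 : c^[p - (j + 1)] (c^[j + 1] z) = z := by
      rw [← Function.iterate_add_apply, Nat.sub_add_cancel hj, hcp]; rfl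
    rw [h3, Function.iterate_succ']
    have := fderiv_comp (c^[j + 1] z) (hcd (c^[p - (j + 1)] (c^[j + 1] z)))
      (iter_diff hc (p - (j + 1)) (c^[j + 1] z))
    rw [h4] at this
    exact this
  simp only
  rw [← Function.iterate_succ_apply, h2, h1]
  simp only [mul_assoc]

theorem avA_equiv {p : ℕ} {c : (EuclideanSpace ℝ (Fin n)) → (EuclideanSpace ℝ (Fin n))} (hc : ContDiff ℝ (⊤ : ℕ∞) c) (hcp : c^[p] = id)
    (a z : (EuclideanSpace ℝ (Fin n))) :
    avA p c (c a, c z) * fderiv ℝ c a = fderiv ℝ c z * avA p c (a, z) := by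
  unfold avA
  have s1 : ∀ (r : ℝ) (P Q : (EuclideanSpace ℝ (Fin n)) →L[ℝ] (EuclideanSpace ℝ (Fin n))), (r • P) * Q = r • (P * Q) := by
    intros; ext1; simp
  have s2 : ∀ (r : ℝ) (P Q : (EuclideanSpace ℝ (Fin n)) →L[ℝ] (EuclideanSpace ℝ (Fin n))), P * (r • Q) = r • (P * Q) := by
    intros; ext1; simp
  rw [s1, s2, Finset.sum_mul, Finset.mul_sum]
  congr 1
  rw [Finset.sum_congr rfl fun j hj => avM_equiv hc hcp (Finset.mem_range.1 hj) a z]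
  have h0 : avM p c 0 (a, z) = avM p c p (a, z) := by
    unfold avM
    simp only [Nat.sub_zero, Nat.sub_self, Function.iterate_zero, hcp, id]
  have e1 := Finset.sum_range_succ (fun j => fderiv ℝ c z * avM p c j (a, z)) p
  have e2 := Finset.sum_range_succ' (fun j => fderiv ℝ c z * avM p c j (a, z)) p
  rw [e1, h0] at e2
  exact (add_right_cancel e2).symm

/-- Discrete parallel transport along a path. -/
noncomputable def trT (p : ℕ) (c : (EuclideanSpace ℝ (Fin n)) → (EuclideanSpace ℝ (Fin n))) (τ : ℕ → unitInterval) (γ : C(unitInterval, (EuclideanSpace ℝ (Fin n)))) :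
    ℕ → ((EuclideanSpace ℝ (Fin n)) →L[ℝ] (EuclideanSpace ℝ (Fin n)))
  | 0 => 1
  | k + 1 => avA p c (γ (τ k), γ (τ (k + 1))) * trT p c τ γ k

theorem trT_cont (p : ℕ) {c : (EuclideanSpace ℝ (Fin n)) → (EuclideanSpace ℝ (Fin n))} (hc : ContDiff ℝ (⊤ : ℕ∞) c) (τ : ℕ → unitInterval)
    (k : ℕ) : Continuous fun γ => trT p c τ γ k := by
  induction k with
  | zero => exact continuous_const
  | succ k ih =>
    refine Continuous.mul ((avA_cont p hc).comp ?_) ih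
    exact (continuous_eval_const _).prodMk (continuous_eval_const _)

theorem trT_equiv {p : ℕ} {c : (EuclideanSpace ℝ (Fin n)) → (EuclideanSpace ℝ (Fin n))} (hc : ContDiff ℝ (⊤ : ℕ∞) c) (hcp : c^[p] = id)
    (τ : ℕ → unitInterval) (γ γ' : C(unitInterval, (EuclideanSpace ℝ (Fin n)))) (h : ∀ t, γ' t = c (γ t)) (k : ℕ) :
    trT p c τ γ' k * fderiv ℝ c (γ (τ 0)) = fderiv ℝ c (γ (τ k)) * trT p c τ γ k := by
  induction k with
  | zero => simp [trT]
  | succ k ih =>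
    simp only [trT]
    rw [mul_assoc, ih, ← mul_assoc, h, h, avA_equiv hc hcp, mul_assoc]

theorem trT_unit {p : ℕ} {c : (EuclideanSpace ℝ (Fin n)) → (EuclideanSpace ℝ (Fin n))} (τ : ℕ → unitInterval) (γ : C(unitInterval, (EuclideanSpace ℝ (Fin n))))
    (h : ∀ k, IsUnit (avA p c (γ (τ k), γ (τ (k + 1))))) (k : ℕ) : IsUnit (trT p c τ γ k) := by
  induction k with
  | zero => exact isUnit_one
  | succ k ih => exact (h k).mul ih

theorem exists_tau {p : ℕ} (hp : p ≠ 0) {c : (EuclideanSpace ℝ (Fin n)) → (EuclideanSpace ℝ (Fin n))} (hc : ContDiff ℝ (⊤ : ℕ∞) c)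
    (hcp : c^[p] = id) {K : Set C(unitInterval, (EuclideanSpace ℝ (Fin n)))} (hK : IsCompact K) :
    ∃ (τ : ℕ → unitInterval) (M : ℕ), τ 0 = 0 ∧ τ M = 1 ∧ ∀ γ ∈ K, ∀ k,
      IsUnit (avA p c (γ (τ k), γ (τ (k + 1)))) := by
  let F : C(unitInterval, (EuclideanSpace ℝ (Fin n))) × unitInterval × unitInterval → ((EuclideanSpace ℝ (Fin n)) →L[ℝ] (EuclideanSpace ℝ (Fin n))) :=
    fun w => avA p c (w.1 w.2.1, w.1 w.2.2)
  have hF : Continuous F := by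
    refine (avA_cont p hc).comp (Continuous.prodMk ?_ ?_)
    · exact continuous_fst.eval (continuous_fst.comp continuous_snd)
    · exact continuous_fst.eval (continuous_snd.comp continuous_snd)
  have hU : IsOpen (F ⁻¹' {T | IsUnit T}) := Units.isOpen.preimage hF
  let D := (fun w : C(unitInterval, (EuclideanSpace ℝ (Fin n))) × unitInterval => (w.1, w.2, w.2)) '' (K ×ˢ Set.univ)
  have hD : IsCompact D := (hK.prod isCompact_univ).image (by fun_prop)
  have hDU : D ⊆ F ⁻¹' {T | IsUnit T} := by
    rintro _ ⟨⟨γ, s⟩, _, rfl⟩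
    change IsUnit (avA p c (γ s, γ s))
    rw [avA_diag hp hc hcp]; exact isUnit_one
  obtain ⟨δ, hδ, hsub⟩ := hD.exists_thickening_subset_open hU hDU
  obtain ⟨M, hM⟩ := exists_nat_one_div_lt hδ
  refine ⟨fun k => Set.projIcc 0 1 zero_le_one ((k : ℝ) / ((M : ℝ) + 1)), M + 1, ?_, ?_, ?_⟩
  · simp
  · push_cast
    rw [div_self (by positivity)]; simp
  · intro γ hγ k
    refine @hsub (γ, _, _) ?_
    rw [Metric.mem_thickening_iff]
    refine ⟨(γ, Set.projIcc 0 1 zero_le_one ((k : ℝ) / ((M : ℝ) + 1)), _),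
      ⟨(γ, _), ⟨hγ, Set.mem_univ _⟩, rfl⟩, ?_⟩
    rw [Prod.dist_eq, Prod.dist_eq]
    refine max_lt (by simpa using hδ) (max_lt (by erw [dist_self]; exact hδ) ?_)
    refine lt_of_le_of_lt ?_ hM
    have h1 := (LipschitzWith.projIcc (zero_le_one : (0:ℝ) ≤ 1)).dist_le_mul
      (((k + 1 : ℕ) : ℝ) / ((M : ℝ) + 1)) ((k : ℝ) / ((M : ℝ) + 1))
    refine h1.trans ?_
    rw [Real.dist_eq, ← sub_div]
    push_cast
    rw [add_sub_cancel_left, abs_of_pos (by positivity)]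
    simp

theorem conj_deriv {p : ℕ} (hpp : p.Prime) (hp : 3 ≤ p) {c : (EuclideanSpace ℝ (Fin n)) → (EuclideanSpace ℝ (Fin n))}
    (hc : ContDiff ℝ (⊤ : ℕ∞) c) (hcp : c^[p] = id) {x y : (EuclideanSpace ℝ (Fin n))} (hx : c x = x) (hy : c y = y) :
    ∃ T : (EuclideanSpace ℝ (Fin n)) →L[ℝ] (EuclideanSpace ℝ (Fin n)), IsUnit T ∧ T * fderiv ℝ c x = fderiv ℝ c y * T := by
  let cc : C((EuclideanSpace ℝ (Fin n)), (EuclideanSpace ℝ (Fin n))) := ⟨c, hc.continuous⟩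
  let ct : C(unitInterval, (EuclideanSpace ℝ (Fin n))) → C(unitInterval, (EuclideanSpace ℝ (Fin n))) := fun γ => cc.comp γ
  have hct : Continuous ct := ContinuousMap.continuous_postcomp cc
  have hctj : ∀ j (γ : C(unitInterval, (EuclideanSpace ℝ (Fin n)))) t, (ct^[j] γ) t = c^[j] (γ t) := by
    intro j
    induction j with
    | zero => intros; rfl
    | succ j ih =>
      intro γ t
      rw [Function.iterate_succ_apply, Function.iterate_succ_apply, ih]; rfl
  have hctp : ct^[p] = id := by
    funext γ; ext1 t; rw [hctj, hcp]; rfl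
  let Y : Set C(unitInterval, (EuclideanSpace ℝ (Fin n))) := {γ | γ 0 = x ∧ γ 1 = y}
  have hY : Convex ℝ Y := by
    rintro γ ⟨h0, h1⟩ γ' ⟨h0', h1'⟩ a b _ _ hab
    constructor
    · simp [h0, h0', ← add_smul, hab]
    · simp [h1, h1', ← add_smul, hab]
  have hcY : ∀ γ ∈ Y, ct γ ∈ Y := by
    rintro γ ⟨h0, h1⟩
    refine ⟨?_, ?_⟩
    · change c (γ 0) = x
      rw [h0, hx]
    · change c (γ 1) = y
      rw [h1, hy]
  let b : C(unitInterval, (EuclideanSpace ℝ (Fin n))) := ⟨fun t => (1 - (t : ℝ)) • x + (t : ℝ) • y, by fun_prop⟩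
  have hb : b ∈ Y := by
    refine ⟨?_, ?_⟩
    · simp [b]
    · simp [b]
  obtain ⟨K, hK, hKY, hcK, hBU⟩ := bu1 hpp hp hct hctp hY hcY hb (Fin n × Fin n)
  obtain ⟨τ, M, h0, h1, hun⟩ := exists_tau (by omega) hc hcp hK
  obtain ⟨γ, hγ, hγu⟩ := hBU (fun i γ => (trT p c τ γ M (EuclideanSpace.single i.1 1)) i.2) (by
    intro i
    have h := trT_cont p hc τ M
    have h2 : Continuous fun γ => trT p c τ γ M (EuclideanSpace.single i.1 1) :=
      h.clm_apply continuous_const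
    exact Continuous.continuousOn (by fun_prop))
  have hT : trT p c τ (ct γ) M = trT p c τ γ M := by
    apply ContinuousLinearMap.coe_injective
    refine (EuclideanSpace.basisFun (Fin n) ℝ).toBasis.ext fun i => ?_
    ext j
    simpa using hγu (i, j)
  refine ⟨trT p c τ γ M, trT_unit τ γ (hun γ hγ) M, ?_⟩
  have := trT_equiv hc hcp τ γ (ct γ) (fun t => rfl) M
  rw [hT, h0, h1, (hKY hγ).1, (hKY hγ).2] at this
  exact this

theorem exists_fix {p : ℕ} (hpp : p.Prime) (hp : 3 ≤ p) {c : (EuclideanSpace ℝ (Fin n)) → (EuclideanSpace ℝ (Fin n))}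
    (hc : Continuous c) (hcp : c^[p] = id) : ∃ x, c x = x := by
  obtain ⟨K, -, -, -, h⟩ := bu1 hpp hp hc hcp convex_univ (fun _ _ => Set.mem_univ _)
    (Set.mem_univ 0) (Fin n)
  obtain ⟨v, -, hv⟩ := h (fun i v => v i) (fun i => Continuous.continuousOn (by fun_prop))
  exact ⟨v, by ext i; exact hv i⟩

end conj
section newman
variable {n : ℕ}

theorem local_id {p : ℕ} (hp : p ≠ 0) {c : (EuclideanSpace ℝ (Fin n)) → (EuclideanSpace ℝ (Fin n))}
    (hc : ContDiff ℝ (⊤ : ℕ∞) c) (hcp : c^[p] = id) {x : (EuclideanSpace ℝ (Fin n))} (hx : c x = x)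
    (hd : fderiv ℝ c x = 1) : ∀ᶠ z in nhds x, c z = z := by
  let A : (EuclideanSpace ℝ (Fin n)) → (EuclideanSpace ℝ (Fin n)) := fun z => (p : ℝ)⁻¹ • ∑ k ∈ Finset.range p, c^[k] z
  have hp' : (p : ℝ) ≠ 0 := by exact_mod_cast hp
  have hAc : ∀ z, A (c z) = A z := by
    intro z
    simp only [A]
    congr 1
    have e1 := Finset.sum_range_succ (fun j => c^[j] z) p
    have e2 := Finset.sum_range_succ' (fun j => c^[j] z) p
    rw [e1, hcp] at e2
    simp only [← Function.iterate_succ_apply]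
    exact (add_right_cancel e2).symm
  have hs : HasStrictFDerivAt c (1 : (EuclideanSpace ℝ (Fin n)) →L[ℝ] (EuclideanSpace ℝ (Fin n))) x := by
    rw [← hd]; exact hc.contDiffAt.hasStrictFDerivAt (by simp)
  have hA0 : HasStrictFDerivAt A
      ((p : ℝ)⁻¹ • ∑ k ∈ Finset.range p, (1 : (EuclideanSpace ℝ (Fin n)) →L[ℝ] (EuclideanSpace ℝ (Fin n)))) x := by
    refine HasStrictFDerivAt.fun_const_smul (HasStrictFDerivAt.fun_sum fun k _ => ?_) _
    simpa using hs.iterate hx k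
  have hA : HasStrictFDerivAt A ((ContinuousLinearEquiv.refl ℝ (EuclideanSpace ℝ (Fin n)) : (EuclideanSpace ℝ (Fin n)) ≃L[ℝ] (EuclideanSpace ℝ (Fin n))) : (EuclideanSpace ℝ (Fin n)) →L[ℝ] (EuclideanSpace ℝ (Fin n))) x := by
    convert hA0 using 1
    rw [Finset.sum_const, Finset.card_range, ← Nat.cast_smul_eq_nsmul ℝ, smul_smul,
      inv_mul_cancel₀ hp', one_smul]
    rfl
  have h1 := hA.eventually_left_inverse
  have hcc : Filter.Tendsto c (nhds x) (nhds x) := by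
    have := hc.continuous.tendsto x
    rwa [hx] at this
  have h2 := hcc.eventually h1
  filter_upwards [h1, h2] with z hz1 hz2
  rw [hAc, hz1] at hz2
  exact hz2.symm

theorem global_id {p : ℕ} (hp : p ≠ 0) {c : (EuclideanSpace ℝ (Fin n)) → (EuclideanSpace ℝ (Fin n))}
    (hc : ContDiff ℝ (⊤ : ℕ∞) c) (hcp : c^[p] = id) {x : (EuclideanSpace ℝ (Fin n))} (hx : c x = x)
    (hd : fderiv ℝ c x = 1) (z : (EuclideanSpace ℝ (Fin n))) : c z = z := by
  let S : Set (EuclideanSpace ℝ (Fin n)) := {z | c z = z ∧ fderiv ℝ c z = 1}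
  have hcl : IsClosed S := by
    refine IsClosed.inter (isClosed_eq hc.continuous continuous_id) ?_
    exact isClosed_eq (hc.continuous_fderiv (by simp)) continuous_const
  have hop : IsOpen S := by
    rw [isOpen_iff_mem_nhds]
    rintro w ⟨h1, h2⟩
    have h := (local_id hp hc hcp h1 h2).eventually_nhds
    filter_upwards [h] with u hu
    refine ⟨hu.self_of_nhds, ?_⟩
    have : c =ᶠ[nhds u] id := hu
    rw [this.fderiv_eq, fderiv_id]; rfl
  have : S = Set.univ := IsClopen.eq_univ ⟨hcl, hop⟩ ⟨x, hx, hd⟩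
  have hz : z ∈ S := this ▸ Set.mem_univ z
  exact hz.1

end newman

section eig
open Polynomial

/-- Eigenvalue count. -/
theorem eig_count {n p : ℕ} (hp : p.Prime) (L : Matrix (Fin n) (Fin n) ℂ) (hLp : L ^ p = 1) (hL : L ≠ 1)
    (h : ∀ j, 0 < j → j < p → L.charpoly = (L ^ j).charpoly) : p - 1 ≤ n := by
  have hp0 : (p : ℂ) ≠ 0 := by exact_mod_cast hp.ne_zero
  -- an eigenvalue different from one
  obtain ⟨μ, v, hμ, hv, hLv⟩ : ∃ (μ : ℂ) (v : Fin n → ℂ), μ ≠ 1 ∧ v ≠ 0 ∧ L.mulVec v = μ • v := by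
    by_contra hcon
    push Not at hcon
    apply hL
    -- all cyclotomic factors are invertible
    obtain ⟨ζ, hζ⟩ : ∃ ζ : ℂ, IsPrimitiveRoot ζ p := ⟨_, Complex.isPrimitiveRoot_exp p hp.ne_zero⟩
    have hinj : ∀ μ : ℂ, μ ≠ 1 → ∀ v, L.mulVec v = μ • v → v = 0 := by
      intro μ hμ v hv
      by_contra hne
      exact hcon μ v hμ hne hv
    have hv1 : ∀ w, L.mulVec w = w := by
      intro w
      -- each projection to an eigenspace for ζ^k vanishes
      let P : ℂ → (Fin n → ℂ) := fun μ => ∑ i ∈ Finset.range p, μ ^ i • ((L ^ i).mulVec w)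
      have hP : ∀ μ : ℂ, μ ^ p = 1 → μ • L.mulVec (P μ) = P μ := by
        intro μ hμ
        simp only [P, Matrix.mulVec_sum, Matrix.mulVec_smul, Finset.smul_sum, smul_smul,
          Matrix.mulVec_mulVec, ← pow_succ']
        have e1 := Finset.sum_range_succ (fun i => μ ^ i • ((L ^ i).mulVec w)) p
        have e2 := Finset.sum_range_succ' (fun i => μ ^ i • ((L ^ i).mulVec w)) p
        rw [e1, hμ, hLp] at e2
        simp only [pow_zero] at e2
        exact (add_right_cancel e2).symm
      have hP0 : ∀ μ : ℂ, μ ^ p = 1 → μ ≠ 1 → P μ = 0 := by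
        intro μ hμ h1
        have hμ0 : μ ≠ 0 := by
          rintro rfl
          rw [zero_pow hp.ne_zero] at hμ; exact zero_ne_one hμ
        refine hinj μ⁻¹ (by simpa using h1) _ ?_
        conv_rhs => rw [← hP μ hμ]
        rw [smul_smul, inv_mul_cancel₀ hμ0, one_smul]
      have hsum : ∑ k ∈ Finset.range p, P (ζ ^ k) = (p : ℂ) • w := by
        simp only [P]
        rw [Finset.sum_comm, Finset.sum_eq_single_of_mem 0 (by simpa using hp.pos)]
        · simp only [pow_zero, Matrix.one_mulVec, one_smul]
          rw [Finset.sum_const, Finset.card_range, Nat.cast_smul_eq_nsmul]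
        · intro i hi hi0
          rw [← Finset.sum_smul]
          have : ∑ k ∈ Finset.range p, (ζ ^ k) ^ i = 0 := by
            have h1 : ζ ^ i ≠ 1 := hζ.pow_ne_one_of_pos_of_lt hi0 (Finset.mem_range.1 hi)
            have h2 : ∀ k, (ζ ^ k) ^ i = (ζ ^ i) ^ k := fun k => by rw [← pow_mul, ← pow_mul, mul_comm]
            simp only [h2]
            rw [geom_sum_eq h1, ← pow_mul, mul_comm, pow_mul, hζ.pow_eq_one]
            simp
          rw [this, zero_smul]
      have hsum2 : ∑ k ∈ Finset.range p, P (ζ ^ k) = P 1 := by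
        rw [Finset.sum_eq_single_of_mem 0 (by simpa using hp.pos)]
        · simp
        · intro k hk hk0
          refine hP0 _ ?_ (hζ.pow_ne_one_of_pos_of_lt hk0 (Finset.mem_range.1 hk))
          rw [← pow_mul, mul_comm, pow_mul, hζ.pow_eq_one, one_pow]
      have h3 := hP 1 (one_pow p)
      rw [← hsum2, hsum, one_smul, Matrix.mulVec_smul] at h3
      exact smul_right_injective _ hp0 h3
    ext i j
    have := congrFun (hv1 (Pi.single j 1)) i
    simpa [Matrix.one_apply, Pi.single_apply] using this
  have hpow : ∀ j, (L ^ j).mulVec v = μ ^ j • v := by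
    intro j
    induction j with
    | zero => simp
    | succ j ih =>
      rw [pow_succ', ← Matrix.mulVec_mulVec, ih, Matrix.mulVec_smul, hLv, smul_smul, ← pow_succ]
  have hμp : μ ^ p = 1 := by
    have := hpow p
    rw [hLp, Matrix.one_mulVec] at this
    by_contra hne
    have h2 : (μ ^ p - 1) • v = 0 := by rw [sub_smul, ← this, one_smul, sub_self]
    rcases smul_eq_zero.1 h2 with h3 | h3
    · exact hne (sub_eq_zero.1 h3)
    · exact hv h3
  have hprim : IsPrimitiveRoot μ p := by
    have := orderOf_eq_prime (p := p) (hp := ⟨hp⟩) hμp hμ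
    rw [← this]; exact IsPrimitiveRoot.orderOf μ
  have hroot : ∀ j, 0 < j → j < p → L.charpoly.IsRoot (μ ^ j) := by
    intro j h0 hj
    rw [h j h0 hj, Polynomial.IsRoot, Matrix.eval_charpoly]
    rw [← Matrix.exists_mulVec_eq_zero_iff]
    refine ⟨v, hv, ?_⟩
    rw [Matrix.sub_mulVec, hpow]
    simp
  have hc : L.charpoly ≠ 0 := (Matrix.charpoly_monic L).ne_zero
  have hsub : (Finset.Ioo 0 p).image (fun j => μ ^ j) ⊆ L.charpoly.roots.toFinset := by
    intro z hz
    obtain ⟨j, hj, rfl⟩ := Finset.mem_image.1 hz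
    rw [Finset.mem_Ioo] at hj
    rw [Multiset.mem_toFinset, Polynomial.mem_roots hc]
    exact hroot j hj.1 hj.2
  have h1 := Finset.card_le_card hsub
  rw [Finset.card_image_of_injOn] at h1
  · calc p - 1 = (Finset.Ioo 0 p).card := by simp
      _ ≤ _ := h1
      _ ≤ _ := Multiset.toFinset_card_le _
      _ ≤ _ := Polynomial.card_roots' _
      _ = n := by rw [Matrix.charpoly_natDegree_eq_dim]; simp
  · intro i hi j hj hij
    simp only [Finset.coe_Ioo, Set.mem_Ioo] at hi hj
    exact hprim.pow_inj hi.2 hj.2 hij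

end eig
section main
variable {n : ℕ}

theorem rot_conj {p : ℕ} (hp : p.Prime) {j : ℕ} (h0 : 0 < j) (hj : j < p) :
    ∃ g : Equiv.Perm (Fin p), finRotate p * g = g * finRotate p ^ j := by
  have hcy := isCycle_finRotate_of_le hp.two_le
  have ho : orderOf (finRotate p) = p := by
    rw [hcy.orderOf, support_finRotate_of_le hp.two_le]; simp
  have hcj := hcy.isCycle_pow_pos_of_lt_prime_order (by rw [ho]; exact hp) j h0 (by rw [ho]; exact hj)
  have h := hcj.isConj hcy (by rw [hcy.support_pow_of_pos_of_lt_orderOf h0 (by rw [ho]; exact hj)])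
  obtain ⟨g, hg⟩ := isConj_iff.1 h
  exact ⟨g, (mul_inv_eq_iff_eq_mul.1 hg).symm⟩

/-- Complex matrix of an operator. -/
noncomputable def cmat : ((EuclideanSpace ℝ (Fin n)) →L[ℝ] (EuclideanSpace ℝ (Fin n))) →* Matrix (Fin n) (Fin n) ℂ :=
  (((RingHom.mapMatrix (algebraMap ℝ ℂ) : Matrix (Fin n) (Fin n) ℝ →+* Matrix (Fin n) (Fin n) ℂ).comp
    (LinearMap.toMatrixAlgEquiv (EuclideanSpace.basisFun (Fin n) ℝ).toBasis).toRingEquiv.toRingHom).comp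
      (ContinuousLinearMap.toLinearMapRingHom : ((EuclideanSpace ℝ (Fin n)) →L[ℝ] (EuclideanSpace ℝ (Fin n))) →+* ((EuclideanSpace ℝ (Fin n)) →ₗ[ℝ] (EuclideanSpace ℝ (Fin n))))).toMonoidHom

theorem cmat_inj : Function.Injective (cmat : ((EuclideanSpace ℝ (Fin n)) →L[ℝ] (EuclideanSpace ℝ (Fin n))) →* Matrix (Fin n) (Fin n) ℂ) := by
  intro P Q h
  have h1 := Matrix.map_injective (algebraMap ℝ ℂ).injective h
  have h2 := (LinearMap.toMatrixAlgEquiv (EuclideanSpace.basisFun (Fin n) ℝ).toBasis).injective h1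
  exact ContinuousLinearMap.coe_injective h2

theorem lower_bound {p : ℕ} (hp : p.Prime) (hp3 : 3 ≤ p)
    (ρ : Equiv.Perm (Fin p) →* Equiv.Perm (EuclideanSpace ℝ (Fin n))) (hinj : Function.Injective ρ)
    (hs : ∀ g, ContDiff ℝ (⊤ : ℕ∞) (ρ g)) : p - 1 ≤ n := by
  have hcy := isCycle_finRotate_of_le hp.two_le
  have ho : orderOf (finRotate p) = p := by
    rw [hcy.orderOf, support_finRotate_of_le hp.two_le]; simp
  let c : (EuclideanSpace ℝ (Fin n)) → (EuclideanSpace ℝ (Fin n)) := ρ (finRotate p)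
  have hc : ContDiff ℝ (⊤ : ℕ∞) c := hs _
  have hdiff : ∀ g, Differentiable ℝ (ρ g) := fun g => (hs g).differentiable (by simp)
  have hcj : ∀ j, c^[j] = ρ (finRotate p ^ j) := by
    intro j
    rw [map_pow, Equiv.Perm.coe_pow]
  have hcp : c^[p] = id := by
    rw [hcj]
    have : finRotate p ^ p = 1 := by
      rw [← orderOf_dvd_iff_pow_eq_one, ho]
    rw [this, map_one]; rfl
  obtain ⟨x, hx⟩ := exists_fix hp hp3 hc.continuous hcp
  let L := fderiv ℝ c x
  have hLj : ∀ j, fderiv ℝ (c^[j]) x = L ^ j := fun j =>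
    (HasFDerivAt.iterate (hdiff (finRotate p) x).hasFDerivAt hx j).fderiv
  have hLp : L ^ p = 1 := by
    rw [← hLj, hcp, fderiv_id]; rfl
  have hL1 : L ≠ 1 := by
    intro h
    have h1 : ρ (finRotate p) = ρ 1 := by
      rw [map_one]
      exact Equiv.ext (global_id hp.ne_zero hc hcp hx h)
    exact hcy.ne_one (hinj h1)
  refine eig_count hp (cmat L) (by rw [← map_pow, hLp, map_one]) ?_ ?_
  · intro h
    exact hL1 (cmat_inj (by rw [h, map_one]))
  intro j h0 hj
  obtain ⟨g, hg⟩ := rot_conj hp h0 hj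
  have hcomp : c ∘ ρ g = ρ g ∘ c^[j] := by
    rw [hcj]
    have := congrArg (fun k => (⇑(ρ k) : (EuclideanSpace ℝ (Fin n)) → (EuclideanSpace ℝ (Fin n)))) hg
    simpa using this
  have hxj : c^[j] x = x := Function.iterate_fixed hx j
  have hy : c (ρ g x) = ρ g x := by
    have := congrFun hcomp x
    simpa [hxj] using this
  obtain ⟨T, hT, hTL⟩ := conj_deriv hp hp3 hc hcp hx hy
  let H := fderiv ℝ (ρ g) x
  have hH1 : fderiv ℝ (ρ g⁻¹) (ρ g x) * H = 1 := by
    have h1 := fderiv_comp x (hdiff g⁻¹ (ρ g x)) (hdiff g x)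
    have h2 : (ρ g⁻¹ : (EuclideanSpace ℝ (Fin n)) → (EuclideanSpace ℝ (Fin n))) ∘ ρ g = id := by
      funext z
      simp
    rw [h2, fderiv_id] at h1
    exact h1.symm
  have hH2 : H * fderiv ℝ (ρ g⁻¹) (ρ g x) = 1 := by
    have h3 : ρ g⁻¹ (ρ g x) = x := by simp
    have h1 := fderiv_comp (ρ g x) (hdiff g (ρ g⁻¹ (ρ g x))) (hdiff g⁻¹ (ρ g x))
    have h2 : (ρ g : (EuclideanSpace ℝ (Fin n)) → (EuclideanSpace ℝ (Fin n))) ∘ ρ g⁻¹ = id := by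
      funext z
      simp
    rw [h2, fderiv_id, h3] at h1
    exact h1.symm
  have hHL : fderiv ℝ c (ρ g x) * H = H * L ^ j := by
    have h1 := fderiv_comp x (hdiff (finRotate p) (ρ g x)) (hdiff g x)
    have h2 := fderiv_comp x (hdiff g (c^[j] x)) (iter_diff hc j x)
    rw [← hcomp, hxj, hLj] at h2
    exact h1.symm.trans h2
  let Hu : ((EuclideanSpace ℝ (Fin n)) →L[ℝ] (EuclideanSpace ℝ (Fin n)))ˣ := ⟨H, _, hH2, hH1⟩
  obtain ⟨Tu, rfl⟩ := hT
  have e1 : (Tu : (EuclideanSpace ℝ (Fin n)) →L[ℝ] (EuclideanSpace ℝ (Fin n))) * L * (Tu⁻¹ : ((EuclideanSpace ℝ (Fin n)) →L[ℝ] (EuclideanSpace ℝ (Fin n)))ˣ) = fderiv ℝ c (ρ g x) := by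
    rw [hTL, mul_assoc, Units.mul_inv, mul_one]
  have e2 : (Hu : (EuclideanSpace ℝ (Fin n)) →L[ℝ] (EuclideanSpace ℝ (Fin n))) * L ^ j * (Hu⁻¹ : ((EuclideanSpace ℝ (Fin n)) →L[ℝ] (EuclideanSpace ℝ (Fin n)))ˣ) = fderiv ℝ c (ρ g x) := by
    change H * L ^ j * _ = _
    rw [← hHL, mul_assoc]
    change _ * (Hu.1 * _) = _
    rw [Units.mul_inv, mul_one]
  have f1 := Matrix.charpoly_units_conj (Units.map cmat Tu) (cmat L)
  have f2 := Matrix.charpoly_units_conj (Units.map cmat Hu) (cmat (L ^ j))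
  rw [← Matrix.coe_units_inv, ← map_inv, Units.coe_map, Units.coe_map, ← map_mul, ← map_mul,
    e1] at f1
  rw [← Matrix.coe_units_inv, ← map_inv, Units.coe_map, Units.coe_map, ← map_mul, ← map_mul,
    e2] at f2
  rw [← f1, ← map_pow, ← f2]

end main
section std
/-- Restriction of the permutation representation to the sum-zero hyperplane. -/
theorem std_rep (p : ℕ) (hp : 3 ≤ p) : ∃ f : Equiv.Perm (Fin p) →* Matrix.GeneralLinearGroup (Fin (p - 1)) ℝ,
      Function.Injective f := by
  let s : (Fin p → ℝ) →ₗ[ℝ] ℝ := ∑ i, LinearMap.proj i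
  have hs : ∀ v, s v = ∑ i, v i := fun v => by simp [s]
  let H := LinearMap.ker s
  have hsur : Function.Surjective s := by
    intro a
    refine ⟨Pi.single ⟨0, by omega⟩ a, ?_⟩
    rw [hs]; simp
  have hdim : Module.finrank ℝ H = p - 1 := by
    have h1 := LinearMap.finrank_range_add_finrank_ker s
    rw [LinearMap.range_eq_top.2 hsur] at h1
    simp at h1
    change Module.finrank ℝ (LinearMap.ker s) = p - 1
    omega
  have hmem : ∀ (g : Equiv.Perm (Fin p)) (v : H), (fun i => (v : Fin p → ℝ) (g⁻¹ i)) ∈ H := by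
    intro g v
    have h1 : s (v : Fin p → ℝ) = 0 := v.2
    change s _ = 0
    rw [hs] at h1 ⊢
    rw [← h1]
    exact Equiv.sum_comp g⁻¹ (v : Fin p → ℝ)
  let φ : Equiv.Perm (Fin p) →* (H →ₗ[ℝ] H) :=
    { toFun := fun g =>
        { toFun := fun v => ⟨fun i => (v : Fin p → ℝ) (g⁻¹ i), hmem g v⟩
          map_add' := fun v w => rfl
          map_smul' := fun r v => rfl }
      map_one' := rfl
      map_mul' := fun g h => by
        ext v i
        simp }
  have hφ : ∀ g (v : H) i, (φ g v : Fin p → ℝ) i = (v : Fin p → ℝ) (g⁻¹ i) := fun _ _ _ => rfl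
  have hφi : Function.Injective φ := by
    rw [injective_iff_map_eq_one]
    intro g hg
    rw [← inv_eq_one]
    by_contra hne
    obtain ⟨i, hi⟩ : ∃ i, g⁻¹ i ≠ i := by
      by_contra hcon
      push Not at hcon
      exact hne (Equiv.ext hcon)
    obtain ⟨k, hk⟩ : ∃ k : Fin p, k ∉ ({i, g⁻¹ i} : Finset (Fin p)) := by
      by_contra hcon
      push Not at hcon
      have h1 : (Finset.univ : Finset (Fin p)) ⊆ {i, g⁻¹ i} := fun k _ => hcon k
      have h2 := Finset.card_le_card h1
      have h3 : ({i, g⁻¹ i} : Finset (Fin p)).card ≤ 2 := Finset.card_le_two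
      rw [Finset.card_univ, Fintype.card_fin] at h2
      omega
    simp only [Finset.mem_insert, Finset.mem_singleton, not_or] at hk
    let v : H := ⟨Pi.single i 1 - Pi.single k 1, by
      change s _ = 0
      rw [hs]; simp⟩
    have h1 := hφ g v i
    rw [hg] at h1
    have h2 : (v : Fin p → ℝ) i = 1 := by
      simp [v, Ne.symm hk.1]
    have h3 : (v : Fin p → ℝ) (g⁻¹ i) = 0 := by
      change (Pi.single i 1 - Pi.single k 1 : Fin p → ℝ) (g⁻¹ i) = 0
      rw [Pi.sub_apply, Pi.single_eq_of_ne hi, Pi.single_eq_of_ne (Ne.symm hk.2), sub_zero]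
    rw [h3] at h1
    change (v : Fin p → ℝ) i = 0 at h1
    rw [h2] at h1
    exact one_ne_zero h1
  let b := Module.finBasisOfFinrankEq ℝ H hdim
  let e := LinearMap.toMatrixAlgEquiv b
  let ψ : Equiv.Perm (Fin p) →* Matrix (Fin (p - 1)) (Fin (p - 1)) ℝ := (e : _ →* _).comp φ
  refine ⟨ψ.toHomUnits, ?_⟩
  intro g h hgh
  have h1 := congrArg Units.val hgh
  rw [MonoidHom.coe_toHomUnits, MonoidHom.coe_toHomUnits] at h1
  exact hφi (e.injective h1)
end std

end BU


/-- For an odd prime `p`: if the symmetric group `S_p` acts faithfully by diffeomorphisms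
on `ℝⁿ`, then `n ≥ p - 1`; this bound is sharp, being realized by the standard
`(p-1)`-dimensional real linear representation of `S_p`. -/
theorem minimal_euclidean_action_symmetric_group (p : ℕ) (hp : p.Prime) (hpodd : Odd p) :
    (∀ (n : ℕ) (ρ : Equiv.Perm (Fin p) →* Equiv.Perm (EuclideanSpace ℝ (Fin n))),
      Function.Injective ρ → (∀ g, ContDiff ℝ (⊤ : ℕ∞) (ρ g)) → p - 1 ≤ n) ∧
    (∃ f : Equiv.Perm (Fin p) →* Matrix.GeneralLinearGroup (Fin (p - 1)) ℝ,
      Function.Injective f) := by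
  have hp3 : 3 ≤ p := by
    have h2 := hp.two_le
    rcases hpodd with ⟨k, hk⟩
    omega
  exact ⟨fun n ρ hinj hs => BU.lower_bound hp hp3 ρ hinj hs, BU.std_rep p hp3⟩
end

section
/- Let p be a prime with p ≡ 3 (mod 4), p > 5. If the alternating group A_p on p letters acts faithfully by diffeomorphisms on Euclidean space R^n, then n ≥ p − 1. -/
namespace SmithTheory

open Finsupp

section Chains
variable {F : Type} [CommRing F] {E : Type}

/-- Cone operator on (augmented, ordered) chains: put `x` in front. -/
noncomputable def cone (x : E) : (List E →₀ F) →ₗ[F] (List E →₀ F) :=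
  Finsupp.lmapDomain F F (List.cons x)

@[simp] lemma cone_single (x : E) (l : List E) (a : F) :
    cone x (single l a) = single (x :: l) a := by
  simp [cone, Finsupp.lmapDomain_apply, Finsupp.mapDomain_single]

/-- contraction of a list with a functional -/
noncomputable def ctrL (w : E → F) : List E → (List E →₀ F)
  | [] => 0
  | x :: l => w x • single l 1 - cone x (ctrL w l)

noncomputable def ctr (w : E → F) : (List E →₀ F) →ₗ[F] (List E →₀ F) :=
  Finsupp.linearCombination F (ctrL w)

@[simp] lemma ctr_single (w : E → F) (l : List E) :
    ctr w (single l 1) = ctrL w l := by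
  simp [ctr]

lemma lin_ext {V : Type*} [AddCommGroup V] [Module F V] {f g : (List E →₀ F) →ₗ[F] V}
    (h : ∀ l, f (single l 1) = g (single l 1)) : f = g := by
  apply Finsupp.lhom_ext'
  intro l
  apply LinearMap.ext_ring
  simpa using h l

lemma ctr_cone (w : E → F) (x : E) (c : List E →₀ F) :
    ctr w (cone x c) = w x • c - cone x (ctr w c) := by
  have : ctr w ∘ₗ cone x = w x • LinearMap.id - cone x ∘ₗ ctr w := by
    apply lin_ext
    intro l
    simp [ctrL]
  simpa using LinearMap.congr_fun this c

lemma ctr_ctr (v w : E → F) (c : List E →₀ F) :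
    ctr v (ctr w c) = - ctr w (ctr v c) := by
  have : ctr v ∘ₗ ctr w = - (ctr w ∘ₗ ctr v) := by
    apply lin_ext
    intro l
    simp only [LinearMap.comp_apply, LinearMap.neg_apply, ctr_single]
    induction l with
    | nil => simp [ctrL]
    | cons x l ih =>
      simp only [ctrL, map_sub, map_smul, ctr_single, ctr_cone, ih, map_neg]
      abel
  simpa using LinearMap.congr_fun this c

noncomputable def bdry : (List E →₀ F) →ₗ[F] (List E →₀ F) := ctr (fun _ => 1)

noncomputable def cmap {E' : Type} (f : E → E') : (List E →₀ F) →ₗ[F] (List E' →₀ F) :=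
  Finsupp.lmapDomain F F (List.map f)

@[simp] lemma cmap_single {E' : Type} (f : E → E') (l : List E) (a : F) :
    cmap f (single l a) = single (l.map f) a := by
  simp [cmap, Finsupp.lmapDomain_apply, Finsupp.mapDomain_single]

lemma cmap_cone {E' : Type} (f : E → E') (x : E) (c : List E →₀ F) :
    cmap f (cone x c) = cone (f x) (cmap f c) := by
  have : cmap f ∘ₗ cone (F := F) x = cone (f x) ∘ₗ cmap f := by
    apply lin_ext
    intro l
    simp
  simpa using LinearMap.congr_fun this c

lemma ctr_cmap {E' : Type} (f : E → E') (w : E' → F) (c : List E →₀ F) :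
    ctr w (cmap f c) = cmap f (ctr (fun x => w (f x)) c) := by
  have : ctr w ∘ₗ cmap f = cmap f ∘ₗ ctr (fun x => w (f x)) := by
    apply lin_ext
    intro l
    simp only [LinearMap.comp_apply, ctr_single, cmap_single]
    induction l with
    | nil => simp [ctrL]
    | cons x l ih =>
      simp [ctrL, cmap_cone, ih]
  simpa using LinearMap.congr_fun this c

lemma bdry_cmap {E' : Type} (f : E → E') (c : List E →₀ F) :
    bdry (cmap f c) = cmap f (bdry c) := ctr_cmap f _ c

lemma cmap_id_of (f : E → E) (hf : ∀ x, f x = x) (c : List E →₀ F) : cmap f c = c := by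
  have : cmap (F := F) f = LinearMap.id := by
    apply lin_ext
    intro l
    have : f = id := funext hf
    simp [this]
  simpa using LinearMap.congr_fun this c

lemma cmap_cmap (f h : E → E) (c : List E →₀ F) : cmap f (cmap h c) = cmap (f ∘ h) c := by
  have : cmap (F := F) f ∘ₗ cmap h = cmap (f ∘ h) := by
    apply lin_ext
    intro l
    simp
  simpa using LinearMap.congr_fun this c

lemma cmap_pow (f : E → E) (i : ℕ) :
    (cmap (F := F) f : Module.End F (List E →₀ F)) ^ i = cmap (f^[i]) := by
  induction i with
  | zero =>
    refine LinearMap.ext fun c => ?_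
    rw [cmap_id_of _ (by simp)]
    simp
  | succ i ih =>
    rw [pow_succ', ih, Function.iterate_succ']
    refine LinearMap.ext fun c => ?_
    simp [cmap_cmap]

/-- prism operator -/
noncomputable def prismL (f0 f1 : E → E) : List E → (List E →₀ F)
  | [] => 0
  | x :: l => single (f0 x :: f1 x :: l.map f1) 1 - cone (f0 x) (prismL f0 f1 l)

noncomputable def prism (f0 f1 : E → E) : (List E →₀ F) →ₗ[F] (List E →₀ F) :=
  Finsupp.linearCombination F (prismL f0 f1)

@[simp] lemma prism_single (f0 f1 : E → E) (l : List E) :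
    prism (F := F) f0 f1 (single l 1) = prismL f0 f1 l := by
  simp [prism]

lemma prism_cone (f0 f1 : E → E) (x : E) (c : List E →₀ F) :
    prism f0 f1 (cone x c) =
      cone (f0 x) (cone (f1 x) (cmap f1 c)) - cone (f0 x) (prism f0 f1 c) := by
  have : prism (F := F) f0 f1 ∘ₗ cone x =
      cone (f0 x) ∘ₗ cone (f1 x) ∘ₗ cmap f1 - cone (f0 x) ∘ₗ prism f0 f1 := by
    apply lin_ext
    intro l
    simp [prismL]
  simpa using LinearMap.congr_fun this c

lemma prism_homotopy (f0 f1 : E → E) (c : List E →₀ F) :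
    bdry (prism f0 f1 c) + prism f0 f1 (bdry c) = cmap f1 c - cmap f0 c := by
  have : bdry ∘ₗ prism (F := F) f0 f1 + prism f0 f1 ∘ₗ bdry = cmap f1 - cmap f0 := by
    apply lin_ext
    intro l
    simp only [LinearMap.comp_apply, LinearMap.add_apply, LinearMap.sub_apply, prism_single,
      cmap_single, bdry, ctr_single]
    induction l with
    | nil => simp [ctrL, prismL]
    | cons x l ih =>
      have h2 : ctrL (fun _ => (1 : F)) (l.map f1) = cmap f1 (ctrL (fun _ => (1:F)) l) := by
        have := ctr_cmap (F := F) f1 (fun _ => 1) (single l 1)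
        simpa using this
      have ih' := congrArg (cone (f0 x)) ih
      simp only [map_add, map_sub, cone_single] at ih'
      simp only [prismL, ctrL, map_sub, prism_single, ctr_cone, prism_cone, ctr_single,
        one_smul, List.map_cons, h2]
      have e : cone (f0 x) ((prism f0 f1) (ctrL (fun _ => (1:F)) l)) =
        single (f0 x :: l.map f1) 1 - single (f0 x :: l.map f0) 1
         - cone (f0 x) (ctr (fun _ => (1:F)) (prismL f0 f1 l)) := by
        exact eq_sub_of_add_eq' ih'
      rw [e]
      simp only [cone_single]
      abel
  simpa using LinearMap.congr_fun this c

lemma bdry_cone (x : E) (c : List E →₀ F) : bdry (cone x c) = c - cone x (bdry c) := by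
  simp [bdry, ctr_cone]

/-! support control -/

lemma map_supported (φ : (List E →₀ F) →ₗ[F] (List E →₀ F)) (P Q : Set (List E))
    (h : ∀ l ∈ P, φ (single l 1) ∈ Finsupp.supported F F Q) {c : List E →₀ F}
    (hc : c ∈ Finsupp.supported F F P) : φ c ∈ Finsupp.supported F F Q := by
  rw [Finsupp.supported_eq_span_single] at hc
  induction hc using Submodule.span_induction with
  | mem x hx => obtain ⟨l, hl, rfl⟩ := hx; exact h l hl
  | zero => simp
  | add x y _ _ hx hy => rw [map_add]; exact Submodule.add_mem _ hx hy
  | smul a x _ hx => rw [map_smul]; exact Submodule.smul_mem _ _ hx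

lemma cone_supported (x : E) (P Q : Set (List E)) (h : ∀ l ∈ P, x :: l ∈ Q) {c : List E →₀ F}
    (hc : c ∈ Finsupp.supported F F P) : cone x c ∈ Finsupp.supported F F Q := by
  refine map_supported _ P Q (fun l hl => ?_) hc
  rw [cone_single]
  exact Finsupp.single_mem_supported F _ (h l hl)

lemma ctrL_supported (w : E → F) (l : List E) :
    ctrL w l ∈ Finsupp.supported F F {l' | l'.length + 1 = l.length ∧ ∀ y ∈ l', y ∈ l} := by
  induction l with
  | nil => simp [ctrL]
  | cons x l ih =>
    refine Submodule.sub_mem _ (Submodule.smul_mem _ _ (Finsupp.single_mem_supported F _ ?_))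
      (cone_supported x _ _ ?_ ih)
    · simp +contextual
    · rintro l' ⟨h1, h2⟩
      refine ⟨by simp [h1], fun y hy => ?_⟩
      rcases List.mem_cons.1 hy with rfl | hy
      · simp
      · exact List.mem_cons_of_mem _ (h2 y hy)

lemma prismL_supported (f0 f1 : E → E) (l : List E) :
    prismL (F := F) f0 f1 l ∈ Finsupp.supported F F
      {l' | l'.length = l.length + 1 ∧ ∀ y ∈ l', ∃ x ∈ l, y = f0 x ∨ y = f1 x} := by
  induction l with
  | nil => simp [prismL]
  | cons x l ih =>
    refine Submodule.sub_mem _ (Finsupp.single_mem_supported F _ ?_)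
      (cone_supported _ _ _ ?_ ih)
    · refine ⟨by simp, fun y hy => ?_⟩
      simp only [List.mem_cons, List.mem_map] at hy
      rcases hy with rfl | rfl | ⟨z, hz, rfl⟩
      · exact ⟨x, by simp, Or.inl rfl⟩
      · exact ⟨x, by simp, Or.inr rfl⟩
      · exact ⟨z, by simp [hz], Or.inr rfl⟩
    · rintro l' ⟨h1, h2⟩
      refine ⟨by simp [h1], fun y hy => ?_⟩
      rcases List.mem_cons.1 hy with rfl | hy
      · exact ⟨x, by simp, Or.inl rfl⟩
      · obtain ⟨z, hz, h⟩ := h2 y hy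
        exact ⟨z, by simp [hz], h⟩

end Chains
set_option linter.unusedSectionVars false

section Ops
variable {F : Type} [CommRing F] {V : Type} [AddCommGroup V] [Module F V]

/-- norm operator -/
noncomputable def nop (p : ℕ) (g : Module.End F V) : Module.End F V := ∑ i ∈ Finset.range p, g ^ i

/-- alternating operators `1 - g`, `N`, `1 - g`, ... -/
noncomputable def top (p : ℕ) (g : Module.End F V) (k : ℕ) : Module.End F V :=
  if Even k then 1 - g else nop p g

lemma nop_mul (p : ℕ) (g : Module.End F V) (hg : g ^ p = 1) : (1 - g) * nop p g = 0 := by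
  rw [nop, ← neg_sub, neg_mul, mul_geom_sum, hg]; simp

lemma mul_nop (p : ℕ) (g : Module.End F V) (hg : g ^ p = 1) : nop p g * (1 - g) = 0 := by
  rw [nop, ← neg_sub, mul_neg, geom_sum_mul, hg]; simp

lemma top_succ_mul (p : ℕ) (g : Module.End F V) (hg : g ^ p = 1) (k : ℕ) :
    top p g (k + 1) * top p g k = 0 := by
  by_cases h : Even k
  · have h' : ¬ Even (k + 1) := by simpa [Nat.even_add_one] using h
    simp only [top, h, h', if_true, if_false]; exact mul_nop p g hg
  · have h' : Even (k + 1) := by simpa [Nat.even_add_one] using h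
    simp only [top, h, h', if_true, if_false]; exact nop_mul p g hg

lemma exact_top (p : ℕ) (g θ : Module.End F V) (hg : g ^ p = 1) (M : Submodule F V)
    (hgM : ∀ f ∈ M, g f ∈ M) (hθM : ∀ f ∈ M, θ f ∈ M) (k : ℕ) (f : V) (hf : f ∈ M)
    (hsum : ∑ i ∈ Finset.range p, (g ^ i) (θ ((g ^ (p - i)) f)) = f) (h0 : top p g k f = 0) :
    ∃ e ∈ M, f = top p g (k + 1) e := by
  have hgi : ∀ i, ∀ f ∈ M, (g ^ i) f ∈ M := by
    intro i
    induction i with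
    | zero => simp
    | succ i ih => intro f hf; rw [pow_succ', Module.End.mul_apply]; exact hgM _ (ih f hf)
  by_cases h : Even k
  · have h' : ¬ Even (k + 1) := by simpa [Nat.even_add_one] using h
    simp only [top, h, h', if_true, if_false] at h0 ⊢
    have hfix : g f = f := by
      have h1 : f - g f = 0 := by simpa using h0
      exact (sub_eq_zero.1 h1).symm
    have hfi : ∀ i, (g ^ i) f = f := by
      intro i
      induction i with
      | zero => simp
      | succ i ih => rw [pow_succ', Module.End.mul_apply, ih, hfix]
    refine ⟨θ f, hθM f hf, ?_⟩
    conv_lhs => rw [← hsum]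
    simp [nop, hfi]
  · have h' : Even (k + 1) := by simpa [Nat.even_add_one] using h
    simp only [top, h, h', if_true, if_false] at h0 ⊢
    refine ⟨- ∑ i ∈ Finset.range p, ∑ j ∈ Finset.range i, (g ^ j) (θ ((g ^ (p - i)) f)), ?_, ?_⟩
    · refine Submodule.neg_mem _ (Submodule.sum_mem _ fun i _ => Submodule.sum_mem _ fun j _ => ?_)
      exact hgi _ _ (hθM _ (hgi _ _ hf))
    · have h1 : ∑ i ∈ Finset.range p, θ ((g ^ (p - i)) f) = 0 := by
        rw [← map_sum]
        have : ∑ i ∈ Finset.range p, (g ^ (p - i)) f = g (nop p g f) := by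
          rw [← Finset.sum_range_reflect]
          simp only [nop, LinearMap.sum_apply, map_sum]
          refine Finset.sum_congr rfl fun i hi => ?_
          have : p - (p - 1 - i) = i + 1 := by
            have := Finset.mem_range.1 hi; omega
          rw [this, pow_succ', Module.End.mul_apply]
        rw [this, h0]; simp
      have h2 : ∀ i, ∀ v : V, (1 - g) (∑ j ∈ Finset.range i, (g ^ j) v) = v - (g ^ i) v := by
        intro i v
        have := LinearMap.congr_fun (mul_geom_sum g i) v
        simp only [Module.End.mul_apply, LinearMap.sum_apply, LinearMap.sub_apply,
          Module.End.one_apply] at this ⊢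
        rw [← neg_sub, this, neg_sub]
      rw [map_neg, map_sum]
      simp only [h2]
      rw [Finset.sum_sub_distrib, h1, hsum]
      simp

end Ops

section Orbit

lemma exists_weight {Y : Type} (F : Type) [CommRing F] (p : ℕ) (hp : p.Prime) (φ : Y → Y)
    (hφ : φ^[p] = id) :
    ∃ χ : Y → F, ∀ y, φ y ≠ y → ∑ i ∈ Finset.range p, χ (φ^[i] y) = 1 := by
  classical
  have hinv : ∀ i y, ∃ j, φ^[j] (φ^[i] y) = y := by
    intro i y
    refine ⟨p * i - i, ?_⟩
    rw [← Function.iterate_add_apply]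
    have : p * i - i + i = p * i := Nat.sub_add_cancel (Nat.le_mul_of_pos_left i hp.pos)
    rw [this, Function.iterate_mul, hφ]; simp
  let st : Setoid Y :=
    { r := fun y z => ∃ i, φ^[i] y = z
      iseqv := ⟨fun y => ⟨0, rfl⟩, by rintro y z ⟨i, rfl⟩; exact hinv i y,
        by
          rintro y z w ⟨i, rfl⟩ ⟨j, rfl⟩
          exact ⟨j + i, by rw [Function.iterate_add_apply]⟩⟩ }
  let r : Y → Y := fun y => (Quotient.mk st y).out
  have hr : ∀ y, ∃ i, φ^[i] y = r y := by
    intro y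
    have : st (r y) y := Quotient.mk_out (s := st) y
    exact st.symm this
  have hrr : ∀ i y, r (φ^[i] y) = r y := by
    intro i y
    have : Quotient.mk st (φ^[i] y) = Quotient.mk st y := Quotient.sound (st.symm ⟨i, rfl⟩)
    simp only [r, this]
  refine ⟨fun y => if y = r y then 1 else 0, fun y hy => ?_⟩
  have hper : Function.IsPeriodicPt φ p y := by
    rw [Function.IsPeriodicPt, hφ]; rfl
  have hmin : Function.minimalPeriod φ y = p := by
    have := Fact.mk hp
    exact Function.minimalPeriod_eq_prime hper hy
  obtain ⟨i0, hi0⟩ := hr y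
  have hi0' : φ^[i0 % p] y = r y := by
    rw [← hi0, ← hmin, Function.iterate_mod_minimalPeriod_eq]
  rw [Finset.sum_eq_single (i0 % p)]
  · beta_reduce
    rw [hrr, hi0', if_pos rfl]
  · intro i hi hne
    beta_reduce
    rw [if_neg]
    intro h
    rw [hrr, ← hi0'] at h
    apply hne
    have hinj := Function.iterate_injOn_Iio_minimalPeriod (f := φ) (x := y)
    rw [hmin] at hinj
    exact hinj (by simpa using hi) (by simpa using Nat.mod_lt _ hp.pos) h
  · intro h
    exact absurd (Finset.mem_range.2 (Nat.mod_lt _ hp.pos)) h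

end Orbit

section Target
variable {F : Type} [Field F] {S : Type} [Fintype S] [DecidableEq S]

/-- action on functions -/
def act (τ : S → S) : Module.End F (List S → F) where
  toFun f l := f (l.map τ)
  map_add' _ _ := rfl
  map_smul' _ _ := rfl

lemma act_pow (τ : S → S) (i : ℕ) (f : List S → F) (l : List S) :
    ((act τ : Module.End F (List S → F)) ^ i) f l = f (l.map (τ^[i])) := by
  induction i generalizing f l with
  | zero => simp
  | succ i ih =>
    rw [pow_succ, Module.End.mul_apply, ih]
    simp only [act, LinearMap.coe_mk, AddHom.coe_mk, List.map_map, Function.iterate_succ']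

def fbd : Module.End F (List S → F) where
  toFun f l := ∑ s, f (s :: l)
  map_add' _ _ := by ext l; simp [Finset.sum_add_distrib]
  map_smul' _ _ := by ext l; simp [Finset.mul_sum]

def wt (χ : Finset S → F) : Module.End F (List S → F) where
  toFun f l := χ l.toFinset * f l
  map_add' _ _ := by ext l; simp [mul_add]
  map_smul' _ _ := by ext l; simp [mul_left_comm]

/-- alternating functions supported on good simplices of given size -/
def alt (Good : Finset S → Prop) (k : ℕ) : Submodule F (List S → F) where
  carrier := {f | (∀ l1 s t l2, f (l1 ++ s :: t :: l2) = - f (l1 ++ t :: s :: l2)) ∧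
    ∀ l, ¬ (l.length = k ∧ l.Nodup ∧ Good l.toFinset) → f l = 0}
  add_mem' := by
    rintro f g ⟨h1, h2⟩ ⟨h3, h4⟩
    refine ⟨fun l1 s t l2 => ?_, fun l hl => ?_⟩
    · simp only [Pi.add_apply, h1 l1 s t, h3 l1 s t]; ring
    · simp [h2 l hl, h4 l hl]
  zero_mem' := by simp
  smul_mem' := by
    rintro a f ⟨h1, h2⟩
    refine ⟨fun l1 s t l2 => ?_, fun l hl => ?_⟩
    · simp only [Pi.smul_apply, h1 l1 s t]; simp
    · simp [h2 l hl]

lemma fbd_mem (Good : Finset S → Prop) (hG : ∀ s t, s ⊆ t → Good t → Good s) (k : ℕ)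
    (f : List S → F) (hf : f ∈ alt Good (k + 1)) : fbd f ∈ alt Good k := by
  obtain ⟨h1, h2⟩ := hf
  refine ⟨fun l1 s t l2 => ?_, fun l hl => ?_⟩
  · simp only [fbd, LinearMap.coe_mk, AddHom.coe_mk]
    rw [← Finset.sum_neg_distrib]
    exact Finset.sum_congr rfl fun u _ => h1 (u :: l1) s t l2
  · refine Finset.sum_eq_zero fun u _ => h2 _ ?_
    rintro ⟨h3, h4, h5⟩
    exact hl ⟨by simpa using h3, (List.nodup_cons.1 h4).2, hG _ _ (by simp) h5⟩

lemma act_mem (Good : Finset S → Prop) (τ : S → S) (hG : ∀ s, Good (s.image τ) → Good s)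
    (k : ℕ)
    (f : List S → F) (hf : f ∈ alt Good k) : act τ f ∈ alt Good k := by
  obtain ⟨h1, h2⟩ := hf
  refine ⟨fun l1 s t l2 => ?_, fun l hl => ?_⟩
  · simp only [act, LinearMap.coe_mk, AddHom.coe_mk, List.map_append, List.map_cons]
    exact h1 _ _ _ _
  · refine h2 _ ?_
    rintro ⟨h3, h4, h5⟩
    refine hl ⟨by simpa using h3, h4.of_map _, hG _ ?_⟩
    convert h5
    ext; simp

lemma wt_mem (Good : Finset S → Prop) (χ : Finset S → F) (k : ℕ)
    (f : List S → F) (hf : f ∈ alt Good k) : wt χ f ∈ alt Good k := by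
  obtain ⟨h1, h2⟩ := hf
  refine ⟨fun l1 s t l2 => ?_, fun l hl => ?_⟩
  · simp only [wt, LinearMap.coe_mk, AddHom.coe_mk]
    rw [h1 l1 s t l2]
    have : (l1 ++ s :: t :: l2).toFinset = (l1 ++ t :: s :: l2).toFinset := by
      ext; simp; tauto
    rw [this]; ring
  · simp [wt, h2 l hl]

lemma fbd_fbd (h2 : (2 : F) ≠ 0) (Good : Finset S → Prop) (k : ℕ)
    (f : List S → F) (hf : f ∈ alt Good k) : fbd (fbd f) = 0 := by
  ext l
  simp only [fbd, LinearMap.coe_mk, AddHom.coe_mk, Pi.zero_apply]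
  have h : ∑ s, ∑ t, f (t :: s :: l) = - ∑ s, ∑ t, f (t :: s :: l) := by
    conv_rhs => rw [Finset.sum_comm]
    rw [← Finset.sum_neg_distrib]
    refine Finset.sum_congr rfl fun s _ => ?_
    rw [← Finset.sum_neg_distrib]
    exact Finset.sum_congr rfl fun t _ => hf.1 [] t s l
  have : (2 : F) * ∑ s, ∑ t, f (t :: s :: l) = 0 := by
    rw [two_mul]; nth_rewrite 2 [h]; ring
  exact (mul_eq_zero.1 this).resolve_left h2

lemma fbd_act (τ : S → S) (hτ : Function.Bijective τ) :
    (fbd : Module.End F (List S → F)) * act τ = act τ * fbd := by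
  ext f l
  simp only [Module.End.mul_apply, fbd, act, LinearMap.coe_mk, AddHom.coe_mk, List.map_cons]
  exact Fintype.sum_bijective τ hτ _ _ fun s => rfl

lemma fbd_top (p : ℕ) (τ : S → S) (hτ : Function.Bijective τ) (k : ℕ) (f : List S → F) :
    fbd (top p (act τ) k f) = top p (act τ) k (fbd f) := by
  have hc : Commute (fbd : Module.End F (List S → F)) (act τ) := fbd_act τ hτ
  have : Commute (fbd : Module.End F (List S → F)) (top p (act τ) k) := by
    unfold top
    split_ifs
    · exact (Commute.one_right _).sub_right hc
    · exact Commute.sum_right _ _ _ fun i _ => hc.pow_right i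
  exact LinearMap.congr_fun this.eq f

theorem descend (p q K : ℕ) (hp : p.Prime) (h2 : (2 : F) ≠ 0) (hpF : (p : F) = 0)
    (Good : Finset S → Prop) (τ : S → S)
    (hτp : τ^[p] = id)
    (hG1 : ∀ s t, s ⊆ t → Good t → Good s) (hG2 : ∀ s, Good (s.image τ) → Good s)
    (hG3 : ∀ s, Good s → q < s.card → s.image τ ≠ s)
    (d : ℕ → List S → F) (hd : ∀ k ≤ K, d k ∈ alt Good (q + 1 + k))
    (hdb : ∀ k < K, fbd (d (k + 1)) = top p (act τ) k (d k)) (hK : d K = 0)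
    (l0 : List S) (hl0 : l0.map τ = l0) : fbd (d 0) l0 = 0 := by
  have hτ : Function.Bijective τ := by
    have h := hτp
    obtain ⟨m, rfl⟩ : ∃ m, p = m + 1 := ⟨p - 1, by have := hp.pos; omega⟩
    constructor
    · have : Function.LeftInverse (τ^[m]) τ := fun x => by
        have := congrFun h x
        rwa [Function.iterate_succ_apply] at this
      exact this.injective
    · have : Function.RightInverse (τ^[m]) τ := fun x => by
        have := congrFun h x
        rwa [Function.iterate_succ_apply'] at this
      exact this.surjective
  have hgp : (act τ : Module.End F (List S → F)) ^ p = 1 := by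
    refine LinearMap.ext fun f => funext fun l => ?_
    rw [act_pow, hτp]; simp
  have hit : ∀ i, (fun s : Finset S => s.image τ)^[i] = fun s => s.image (τ^[i]) := by
    intro i
    induction i with
    | zero => ext; simp
    | succ i ih => 
      rw [Function.iterate_succ', ih, Function.iterate_succ']
      ext s : 1
      simp only [Function.comp_apply, Finset.image_image]
  obtain ⟨χ, hχ⟩ := exists_weight (Y := Finset S) F p hp (fun s => s.image τ) (by
    rw [hit, hτp]; ext; simp)
  have hex : ∀ k j, ∀ f ∈ alt (F := F) Good (q + 1 + k), top p (act τ) j f = 0 →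
      ∃ e ∈ alt (F := F) Good (q + 1 + k), f = top p (act τ) (j + 1) e := by
    intro k j f hf h0
    refine exact_top p (act τ) (wt χ) hgp _ (act_mem Good τ hG2 _) (wt_mem Good χ _) j f hf ?_ h0
    ext l
    rw [Finset.sum_apply]
    have : ∀ i ∈ Finset.range p, ((act τ) ^ i) ((wt χ) (((act τ) ^ (p - i)) f)) l
        = χ ((fun s : Finset S => s.image τ)^[i] l.toFinset) * f l := by
      intro i hi
      have hi := Finset.mem_range.1 hi
      rw [act_pow]
      simp only [wt, LinearMap.coe_mk, AddHom.coe_mk]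
      rw [act_pow, List.map_map, ← Function.iterate_add, Nat.sub_add_cancel hi.le, hτp, hit]
      congr 2
      · ext; simp
      · simp
    rw [Finset.sum_congr rfl this, ← Finset.sum_mul]
    by_cases hl : l.length = q + 1 + k ∧ l.Nodup ∧ Good l.toFinset
    · rw [hχ, one_mul]
      apply hG3 _ hl.2.2
      rw [List.toFinset_card_of_nodup hl.2.1, hl.1]; omega
    · rw [hf.2 l hl]; simp
  have main : ∀ m k, k + m = K → ∃ e ∈ alt (F := F) Good (q + 1 + (k + 1)),
      ∃ e' ∈ alt (F := F) Good (q + 1 + k), d k = fbd e + top p (act τ) (k + 1) e' := by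
    intro m
    induction m with
    | zero =>
      intro k hk
      obtain rfl : k = K := by simpa using hk
      exact ⟨0, Submodule.zero_mem _, 0, Submodule.zero_mem _, by simp [hK]⟩
    | succ m ih =>
      intro k hk
      obtain ⟨e, he, e', he', hd1⟩ := ih (k + 1) (by omega)
      have hb := hdb k (by omega)
      rw [hd1, map_add, fbd_fbd h2 Good _ e he, zero_add, fbd_top p τ hτ] at hb
      have htt : top p (act τ : Module.End F (List S → F)) (k + 1 + 1) = top p (act τ) k := by
        have : Even (k + 1 + 1) ↔ Even k := by simp [Nat.even_add_one]
        simp [top, this]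
      rw [htt] at hb
      have hfe : fbd e' ∈ alt (F := F) Good (q + 1 + k) := fbd_mem Good hG1 _ _ he'
      obtain ⟨e2, he2, h3⟩ := hex k k (d k - fbd e')
        (Submodule.sub_mem _ (hd k (by omega)) hfe) (by rw [map_sub, hb, sub_self])
      exact ⟨e', he', e2, he2, by rw [← h3]; abel⟩
  obtain ⟨e, he, e', he', h⟩ := main K 0 (by simp)
  rw [h, map_add, fbd_fbd h2 Good _ e he, zero_add, fbd_top p τ hτ]
  have : ¬ Even (0 + 1) := by decide
  simp only [top, this, if_false, nop, LinearMap.sum_apply, Finset.sum_apply, act_pow]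
  have hl : ∀ i, l0.map (τ^[i]) = l0 := by
    intro i
    induction i with
    | zero => simp
    | succ i ih => rw [Function.iterate_succ, ← List.map_map, hl0, ih]
  simp [hl, hpF]

end Target

section Eval
variable {F : Type} [Field F] {S : Type} [Fintype S] [DecidableEq S] {E : Type}

noncomputable def ev (lam : E → S) : List S → ((List E →₀ F) →ₗ[F] F)
  | [] => Finsupp.lapply []
  | s :: l => (ev lam l).comp (ctr (fun x => if lam x = s then 1 else 0))

noncomputable def EV (lam : E → S) : (List E →₀ F) →ₗ[F] (List S → F) :=
  LinearMap.pi (fun l => ev lam l)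

lemma EV_apply (lam : E → S) (c : List E →₀ F) (l : List S) : EV lam c l = ev lam l c := rfl

lemma ctr_sum {ι : Type} (T : Finset ι) (w : ι → E → F) (c : List E →₀ F) :
    ∑ s ∈ T, ctr (w s) c = ctr (fun x => ∑ s ∈ T, w s x) c := by
  have : ∑ s ∈ T, ctr (w s) = ctr (fun x => ∑ s ∈ T, w s x) := by
    apply lin_ext
    intro l
    simp only [LinearMap.sum_apply, ctr_single]
    induction l with
    | nil => simp [ctrL]
    | cons x l ih =>
      simp only [ctrL, Finset.sum_sub_distrib, ← map_sum, ih, Finset.sum_smul]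
  rw [← this, LinearMap.sum_apply]

lemma fbd_EV (lam : E → S) (c : List E →₀ F) : fbd (EV lam c) = EV lam (bdry c) := by
  ext l
  simp only [fbd, LinearMap.coe_mk, AddHom.coe_mk, EV_apply, ev, LinearMap.comp_apply]
  rw [← map_sum, ctr_sum]
  simp [bdry]

lemma EV_swap (lam : E → S) (l1 : List S) (s t : S) (l2 : List S) (c : List E →₀ F) :
    EV lam c (l1 ++ s :: t :: l2) = - EV lam c (l1 ++ t :: s :: l2) := by
  simp only [EV_apply]
  induction l1 generalizing c with
  | nil => simp only [List.nil_append, ev, LinearMap.comp_apply]; rw [ctr_ctr, map_neg]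
  | cons u l1 ih => simp only [List.cons_append, ev, LinearMap.comp_apply]; exact ih _

lemma alt_perm (f : List S → F)
    (hf : ∀ l1 s t l2, f (l1 ++ s :: t :: l2) = - f (l1 ++ t :: s :: l2))
    {l l' : List S} (h : l.Perm l') : ∀ l1, f (l1 ++ l) = 0 ↔ f (l1 ++ l') = 0 := by
  induction h with
  | nil => simp
  | cons x _ ih => intro l1; simpa using ih (l1 ++ [x])
  | swap x y l => intro l1; rw [hf, neg_eq_zero]
  | trans _ _ ih1 ih2 => intro l1; rw [ih1, ih2]

lemma alt_nodup (h2 : (2 : F) ≠ 0) (f : List S → F)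
    (hf : ∀ l1 s t l2, f (l1 ++ s :: t :: l2) = - f (l1 ++ t :: s :: l2))
    (l : List S) (hl : ¬ l.Nodup) : f l = 0 := by
  obtain ⟨x, hx⟩ := List.exists_duplicate_iff_not_nodup.2 hl
  obtain ⟨l', hl'⟩ := (List.duplicate_iff_sublist.1 hx).exists_perm_append
  have := (alt_perm f hf hl' []).2
  refine this ?_
  have h := hf [] x x l'
  simp only [List.nil_append, List.cons_append] at h ⊢
  have h3 : (2 : F) * f (x :: x :: l') = 0 := by
    rw [two_mul]; nth_rewrite 2 [h]; ring
  exact (mul_eq_zero.1 h3).resolve_left h2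

lemma ctrL_zero (w : E → F) (l : List E) (h : ∀ x ∈ l, w x = 0) : ctrL w l = 0 := by
  induction l with
  | nil => rfl
  | cons x l ih =>
    simp only [ctrL]
    rw [ih (fun y hy => h y (by simp [hy])), h x (by simp)]
    simp

lemma ev_support (lam : E → S) (xs : List E) (l : List S) (k : ℕ) (c : List E →₀ F)
    (hc : c ∈ Finsupp.supported F F {l' : List E | l'.length = k ∧ ∀ y ∈ l', y ∈ xs})
    (hl : ¬ (l.length = k ∧ ∀ s ∈ l, ∃ x ∈ xs, lam x = s)) : ev lam l c = 0 := by
  induction l generalizing k c with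
  | nil =>
    simp only [ev, Finsupp.lapply_apply]
    by_contra h
    have h1 := hc (Finsupp.mem_support_iff.2 h)
    apply hl
    simpa using h1.1
  | cons s l ih =>
    simp only [ev, LinearMap.comp_apply]
    by_cases hs : ∃ x ∈ xs, lam x = s
    · cases k with
      | zero =>
        have : ctr (fun x => if lam x = s then (1 : F) else 0) c ∈
          Finsupp.supported F F (∅ : Set (List E)) := by
          refine map_supported _ _ _ ?_ hc
          rintro l' ⟨h1, _⟩
          rw [List.length_eq_zero_iff] at h1
          subst h1
          simp [ctrL]
        have : ctr (fun x => if lam x = s then (1 : F) else 0) c = 0 := by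
          simpa using this
        rw [this, map_zero]
      | succ k =>
        apply ih k
        · refine map_supported _ _ _ ?_ hc
          rintro l' ⟨h1, h2⟩
          rw [ctr_single]
          refine Finsupp.supported_mono ?_ (ctrL_supported _ l')
          rintro l'' ⟨h3, h4⟩
          exact ⟨by omega, fun y hy => h2 y (h4 y hy)⟩
        · rintro ⟨h1, h2⟩
          apply hl
          refine ⟨by simp [h1], fun t ht => ?_⟩
          rcases List.mem_cons.1 ht with rfl | ht
          · exact hs
          · exact h2 t ht
    · have : ctr (fun x => if lam x = s then (1 : F) else 0) c ∈
          Finsupp.supported F F (∅ : Set (List E)) := by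
        refine map_supported _ _ _ ?_ hc
        rintro l' ⟨_, h1⟩
        rw [ctr_single, ctrL_zero]
        · simp
        · intro x hx
          rw [if_neg]
          intro h
          exact hs ⟨x, h1 x hx, h⟩
      have : ctr (fun x => if lam x = s then (1 : F) else 0) c = 0 := by
        simpa using this
      rw [this, map_zero]

lemma EV_single_support (lam : E → S) (xs : List E) (l : List S)
    (hl : ¬ (l.length = xs.length ∧ ∀ s ∈ l, ∃ x ∈ xs, lam x = s)) :
    EV (F := F) lam (single xs 1) l = 0 :=
  ev_support lam xs l xs.length _ (Finsupp.single_mem_supported F _ ⟨rfl, fun _ h => h⟩) hl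

lemma EV_mem (h2 : (2 : F) ≠ 0) (lam : E → S) (Good : Finset S → Prop)
    (hG : ∀ s t, s ⊆ t → Good t → Good s)
    (k : ℕ) (P : Set (List E)) (hP : ∀ xs ∈ P, xs.length = k ∧ Good (xs.map lam).toFinset)
    (c : List E →₀ F) (hc : c ∈ Finsupp.supported F F P) : EV lam c ∈ alt Good k := by
  rw [Finsupp.supported_eq_span_single] at hc
  induction hc using Submodule.span_induction with
  | mem x hx =>
    obtain ⟨xs, hxs, rfl⟩ := hx
    refine ⟨fun l1 s t l2 => EV_swap lam l1 s t l2 _, fun l hl => ?_⟩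
    by_contra h
    have hn : l.Nodup := by
      by_contra hn
      exact h (alt_nodup h2 _ (fun l1 s t l2 => EV_swap lam l1 s t l2 _) l hn)
    have h3 : l.length = xs.length ∧ ∀ s ∈ l, ∃ x ∈ xs, lam x = s := by
      by_contra h3
      exact h (EV_single_support lam xs l h3)
    refine hl ⟨h3.1.trans (hP xs hxs).1, hn, hG _ _ ?_ (hP xs hxs).2⟩
    intro s hs
    simpa using h3.2 s (by simpa using hs)
  | zero => rw [map_zero]; exact Submodule.zero_mem _
  | add x y _ _ hx hy => rw [map_add]; exact Submodule.add_mem _ hx hy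
  | smul a x _ hx => rw [map_smul]; exact Submodule.smul_mem _ _ hx

lemma EV_zero (h2 : (2 : F) ≠ 0) (lam : E → S)
    (P : Set (List E)) (hP : ∀ xs ∈ P, (xs.map lam).toFinset.card < xs.length)
    (c : List E →₀ F) (hc : c ∈ Finsupp.supported F F P) : EV lam c = 0 := by
  rw [Finsupp.supported_eq_span_single] at hc
  induction hc using Submodule.span_induction with
  | mem x hx =>
    obtain ⟨xs, hxs, rfl⟩ := hx
    ext l
    by_contra h
    have hn : l.Nodup := by
      by_contra hn
      exact h (alt_nodup h2 _ (fun l1 s t l2 => EV_swap lam l1 s t l2 _) l hn)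
    have h3 : l.length = xs.length ∧ ∀ s ∈ l, ∃ x ∈ xs, lam x = s := by
      by_contra h3
      exact h (EV_single_support lam xs l h3)
    have h4 : l.toFinset ⊆ (xs.map lam).toFinset := by
      intro s hs
      simpa using h3.2 s (by simpa using hs)
    have h5 := Finset.card_le_card h4
    rw [List.toFinset_card_of_nodup hn] at h5
    have := hP xs hxs
    omega
  | zero => rw [map_zero]
  | add x y _ _ hx hy => rw [map_add, hx, hy, add_zero]
  | smul a x _ hx => rw [map_smul, hx, smul_zero]

lemma EV_cmap (lam : E → S) (g : E → E) (τ : S → S) (h : ∀ x s, lam (g x) = s ↔ lam x = τ s)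
    (c : List E →₀ F) : EV lam (cmap g c) = act τ (EV lam c) := by
  ext l
  simp only [act, LinearMap.coe_mk, AddHom.coe_mk, EV_apply]
  induction l generalizing c with
  | nil =>
    have : (Finsupp.lapply [] : (List E →₀ F) →ₗ[F] F) ∘ₗ cmap g = Finsupp.lapply [] := by
      apply lin_ext
      intro l
      cases l <;> simp
    simpa [ev] using LinearMap.congr_fun this c
  | cons s l ih =>
    simp only [List.map_cons, ev, LinearMap.comp_apply]
    rw [ctr_cmap, ih]
    simp only [h]

lemma EV_top (lam : E → S) (g : E → E) (τ : S → S) (h : ∀ x s, lam (g x) = s ↔ lam x = τ s)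
    (p k : ℕ) (c : List E →₀ F) :
    EV lam (top p (cmap g) k c) = top p (act τ) k (EV lam c) := by
  have hi : ∀ i c, EV lam (((cmap g : Module.End F (List E →₀ F)) ^ i) c)
      = ((act τ) ^ i) (EV lam c) := by
    intro i
    induction i with
    | zero => simp
    | succ i ih =>
      intro c
      rw [pow_succ', pow_succ', Module.End.mul_apply, Module.End.mul_apply, EV_cmap lam g τ h, ih]
  unfold top
  split_ifs
  · simp [EV_cmap lam g τ h]
  · simp [nop, LinearMap.sum_apply, hi]

end Eval

section Small
variable {F : Type} [Field F] {E : Type} [NormedAddCommGroup E] [NormedSpace ℝ E]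

/-- small lists -/
def sm (R δ : ℝ) (k : ℕ) : Set (List E) :=
  {l | l.length = k ∧ (∀ x ∈ l, ‖x‖ ≤ R) ∧ ∀ x ∈ l, ∀ y ∈ l, dist x y ≤ δ}

lemma sm_mono {R R' δ δ' : ℝ} (hR : R ≤ R') (hδ : δ ≤ δ') (k : ℕ) :
    (sm R δ k : Set (List E)) ⊆ sm R' δ' k := fun _ h =>
  ⟨h.1, fun x hx => (h.2.1 x hx).trans hR, fun x hx y hy => (h.2.2 x hx y hy).trans hδ⟩

lemma fill (R δ ε : ℝ) (hR : 0 ≤ R) (hδ : 0 < δ) (hε : δ < ε) (k : ℕ) (z : List E →₀ F)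
    (hz : z ∈ Finsupp.supported F F (sm R δ k)) (hb : bdry z = 0) :
    ∃ w ∈ Finsupp.supported F F (sm R ε (k + 1) : Set (List E)), bdry w = z := by
  obtain ⟨m, hm⟩ := exists_nat_gt (R / (ε - δ))
  have hm0 : (0 : ℝ) < m := lt_of_le_of_lt (div_nonneg hR (by linarith)) hm
  have hm' : R / m ≤ ε - δ := by
    rw [div_lt_iff₀ (by linarith)] at hm
    rw [div_le_iff₀ hm0]; linarith
  let f : ℕ → E → E := fun j x => (1 - (j : ℝ) / m) • x
  have hsum : ∀ j, bdry (∑ i ∈ Finset.range j, prism (f i) (f (i + 1)) z) =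
      cmap (f j) z - z := by
    intro j
    induction j with
    | zero => simp [f, cmap_id_of]
    | succ j ih =>
      have := prism_homotopy (f j) (f (j + 1)) z
      rw [hb, map_zero, add_zero] at this
      rw [Finset.sum_range_succ, map_add, ih, this]; abel
  have hfm : ∀ x, f m x = 0 := by
    intro x; simp [f, div_self hm0.ne']
  refine ⟨cone 0 (cmap (f m) z) - ∑ i ∈ Finset.range m, prism (f i) (f (i + 1)) z, ?_, ?_⟩
  · refine Submodule.sub_mem _ ?_ (Submodule.sum_mem _ fun i hi => ?_)
    · refine map_supported (cone 0 ∘ₗ cmap (f m)) _ _ ?_ hz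
      rintro l ⟨h1, -, -⟩
      simp only [LinearMap.comp_apply, cmap_single, cone_single]
      have h0 : ∀ x ∈ (0 : E) :: l.map (f m), x = 0 := by
        intro x hx
        simp only [List.mem_cons, List.mem_map, hfm] at hx
        rcases hx with rfl | ⟨_, _, rfl⟩ <;> rfl
      refine Finsupp.single_mem_supported F _ ⟨by simp [h1], fun x hx => ?_, fun x hx y hy => ?_⟩
      · rw [h0 x hx]; simpa using hR
      · rw [h0 x hx, h0 y hy]; simp; linarith
    · refine map_supported _ _ _ ?_ hz
      rintro l ⟨h1, h2, h3⟩
      rw [prism_single]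
      refine Finsupp.supported_mono ?_ (prismL_supported _ _ l)
      have him : (i : ℝ) + 1 ≤ m := by exact_mod_cast Finset.mem_range.1 hi
      have hi0 : (0 : ℝ) ≤ i := Nat.cast_nonneg i
      have hc : ∀ y, (∃ x ∈ l, y = f i x ∨ y = f (i + 1) x) →
          ∃ x ∈ l, ∃ t : ℝ, 0 ≤ t ∧ t ≤ 1 ∧ y = t • x ∧ |t - (1 - (i : ℝ) / m)| ≤ 1 / m ∧
            1 - ((i : ℝ) + 1) / m ≤ t ∧ t ≤ 1 - (i : ℝ) / m := by
        rintro y ⟨x, hx, h | h⟩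
        · refine ⟨x, hx, 1 - (i : ℝ) / m, ?_, ?_, h, ?_, ?_, le_rfl⟩
          · rw [sub_nonneg, div_le_one hm0]; linarith
          · have : 0 ≤ (i : ℝ) / m := by positivity
            linarith
          · simp
          · have : (i : ℝ) / m ≤ ((i : ℝ) + 1) / m := by gcongr; linarith
            linarith
        · have e : (i : ℝ) / m ≤ ((i : ℝ) + 1) / m := by gcongr; linarith
          refine ⟨x, hx, 1 - ((i : ℝ) + 1) / m, ?_, ?_, by simpa [f] using h, ?_, le_rfl, ?_⟩
          · rw [sub_nonneg, div_le_one hm0]; linarith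
          · have : 0 ≤ ((i : ℝ) + 1) / m := by positivity
            linarith
          · rw [abs_le]; constructor <;> ring_nf <;> nlinarith [inv_pos.2 hm0]
          · linarith
      rintro l' ⟨h4, h5⟩
      refine ⟨by omega, fun y hy => ?_, fun y hy y' hy' => ?_⟩
      · obtain ⟨x, hx, t, ht0, ht1, rfl, -⟩ := hc y (h5 y hy)
        rw [norm_smul, Real.norm_of_nonneg ht0]
        have := h2 x hx
        nlinarith [norm_nonneg x]
      · obtain ⟨x, hx, t, ht0, ht1, rfl, -, ha, hb'⟩ := hc y (h5 y hy)
        obtain ⟨x', hx', t', ht0', ht1', rfl, -, ha', hb''⟩ := hc y' (h5 y' hy')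
        have e1 : t • x - t' • x' = t • (x - x') + (t - t') • x' := by
          rw [smul_sub, sub_smul]; abel
        rw [dist_eq_norm, e1]
        have e2 : |t - t'| ≤ 1 / m := by
          have : ((i : ℝ) + 1) / m = (i : ℝ) / m + 1 / m := by ring
          rw [abs_le]; constructor <;> linarith
        have e3 := h3 x hx x' hx'
        rw [dist_eq_norm] at e3
        calc ‖t • (x - x') + (t - t') • x'‖ ≤ ‖t • (x - x')‖ + ‖(t - t') • x'‖ := norm_add_le _ _
          _ = t * ‖x - x'‖ + |t - t'| * ‖x'‖ := by
            rw [norm_smul, norm_smul, Real.norm_of_nonneg ht0, Real.norm_eq_abs]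
          _ ≤ 1 * δ + (1 / m) * R := by
            gcongr
            exact h2 x' hx'
          _ ≤ ε := by
            have : (1 / (m : ℝ)) * R = R / m := by ring
            linarith
  · rw [map_sub, bdry_cone, hsum, bdry_cmap, hb]
    simp

lemma top_sm [ProperSpace E] (g : E → E) (hg : Continuous g) (p : ℕ) (R : ℝ) :
    ∃ R', R ≤ R' ∧ 0 ≤ R' ∧ ∀ ε > 0, ∃ δ > 0, ∀ δ' ≤ δ, ∀ k j, ∀ c ∈ Finsupp.supported F F (sm R δ' k : Set (List E)),
      top p (cmap g) j c ∈ Finsupp.supported F F (sm R' ε k : Set (List E)) := by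
  have hK : IsCompact (Metric.closedBall (0 : E) R) := isCompact_closedBall 0 R
  have hgi : ∀ i, Continuous (g^[i]) := fun i => hg.iterate i
  have h1 : ∀ i, ∃ r, ∀ x, ‖x‖ ≤ R → ‖g^[i] x‖ ≤ r := by
    intro i
    obtain ⟨r, hr⟩ := (hK.image (hgi i)).isBounded.exists_norm_le
    exact ⟨r, fun x hx => hr _ ⟨x, by simpa using hx, rfl⟩⟩
  choose r hr using h1
  refine ⟨|R| + ∑ i ∈ Finset.range (p + 2), |r i|, ?_, ?_, ?_⟩
  · have : 0 ≤ ∑ i ∈ Finset.range (p + 2), |r i| := Finset.sum_nonneg fun _ _ => abs_nonneg _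
    linarith [le_abs_self R]
  · have : 0 ≤ ∑ i ∈ Finset.range (p + 2), |r i| := Finset.sum_nonneg fun _ _ => abs_nonneg _
    linarith [abs_nonneg R]
  · intro ε hε
    have h2 : ∀ i, ∃ δ > 0, ∀ x y, ‖x‖ ≤ R → ‖y‖ ≤ R → dist x y ≤ δ → dist (g^[i] x) (g^[i] y) ≤ ε := by
      intro i
      have := hK.uniformContinuousOn_of_continuous (hgi i).continuousOn
      obtain ⟨δ, hδ, h⟩ := Metric.uniformContinuousOn_iff.1 this ε hε
      exact ⟨δ / 2, by linarith, fun x y hx hy hxy =>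
        (h x (by simpa using hx) y (by simpa using hy) (by linarith)).le⟩
    choose dl hdl hd using h2
    obtain ⟨δ, hδ, hδi⟩ : ∃ δ > 0, ∀ i ∈ Finset.range (p + 2), δ ≤ dl i := by
      refine ⟨(Finset.range (p + 2)).inf' ⟨0, by simp⟩ dl, ?_, fun i hi => Finset.inf'_le _ hi⟩
      exact (Finset.lt_inf'_iff _).2 fun i _ => hdl i
    refine ⟨δ, hδ, fun δ' hδ' k j c hc => ?_⟩
    have h3 : ∀ i ∈ Finset.range (p + 2), ((cmap g : Module.End F (List E →₀ F)) ^ i) c ∈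
        Finsupp.supported F F (sm (|R| + ∑ i ∈ Finset.range (p + 2), |r i|) ε k : Set (List E)) := by
      intro i hi
      rw [cmap_pow]
      refine map_supported _ _ _ ?_ hc
      rintro l ⟨h1, h2, h3⟩
      rw [cmap_single]
      refine Finsupp.single_mem_supported F _ ⟨by simp [h1], ?_, ?_⟩
      · intro x' hx'
        obtain ⟨x, hx, rfl⟩ := List.mem_map.1 hx'
        have := Finset.single_le_sum (f := fun i => |r i|) (fun _ _ => abs_nonneg _) hi
        have h4 := hr i x (h2 x hx)
        linarith [le_abs_self (r i), abs_nonneg R]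
      · intro x' hx' y' hy'
        obtain ⟨x, hx, rfl⟩ := List.mem_map.1 hx'
        obtain ⟨y, hy, rfl⟩ := List.mem_map.1 hy'
        exact hd i x y (h2 x hx) (h2 y hy) ((h3 x hx y hy).trans (hδ'.trans (hδi i hi)))
    unfold top
    split_ifs
    · have a := h3 0 (by simp)
      have b := h3 1 (by simp)
      simp only [pow_zero, pow_one, Module.End.one_apply] at a b
      exact Submodule.sub_mem _ a b
    · simp only [nop, LinearMap.sum_apply]
      exact Submodule.sum_mem _ fun i hi => h3 i (by simp at hi ⊢; omega)

lemma bdry_top (g : E → E) (p j : ℕ) (c : List E →₀ F) :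
    bdry (top p (cmap g) j c) = top p (cmap g) j (bdry c) := by
  have hi : ∀ i, ∀ c : List E →₀ F, bdry (((cmap g : Module.End F (List E →₀ F)) ^ i) c)
      = ((cmap g : Module.End F (List E →₀ F)) ^ i) (bdry c) := by
    intro i c
    rw [cmap_pow, bdry_cmap]
  unfold top
  split_ifs
  · simp [bdry_cmap]
  · simp [nop, LinearMap.sum_apply, hi]

lemma exists_seq [ProperSpace E] (g : E → E) (hg : Continuous g) (p : ℕ) (hgp : g^[p] = id)
    (q : ℕ) (R0 : ℝ) (hR0 : 0 ≤ R0) (b : List E →₀ F)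
    (hb : ∀ δ > 0, b ∈ Finsupp.supported F F (sm R0 δ q : Set (List E)))
    (hbb : bdry b = 0) (hgb : cmap g b = b) (K : ℕ) :
    ∃ R, 0 ≤ R ∧ R0 ≤ R ∧ ∀ ε > 0, ∃ c : ℕ → List E →₀ F, bdry (c 0) = b ∧
      (∀ k < K, bdry (c (k + 1)) = top p (cmap g) k (c k)) ∧
      ∀ k ≤ K, c k ∈ Finsupp.supported F F (sm R ε (q + 1 + k) : Set (List E)) := by
  have hcp : (cmap g : Module.End F (List E →₀ F)) ^ p = 1 := by
    rw [cmap_pow, hgp]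
    exact LinearMap.ext fun c => cmap_id_of _ (fun _ => rfl) c
  induction K with
  | zero =>
    refine ⟨R0, hR0, le_rfl, fun ε hε => ?_⟩
    obtain ⟨w, hw, hwb⟩ := fill R0 (ε / 2) ε hR0 (by linarith) (by linarith) q b
      (hb _ (by linarith)) hbb
    refine ⟨fun _ => w, hwb, by simp, fun k hk => ?_⟩
    obtain rfl : k = 0 := by omega
    exact hw
  | succ K ih =>
    obtain ⟨R, hR, hRR, h⟩ := ih
    obtain ⟨R', hR', hR'0, h'⟩ := top_sm (F := F) g hg p R
    refine ⟨R', hR'0, hRR.trans hR', fun ε hε => ?_⟩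
    obtain ⟨δ, hδ, hδ'⟩ := h' (ε / 2) (by linarith)
    obtain ⟨c, hc0, hc1, hc2⟩ := h (min δ ε) (lt_min hδ hε)
    have h1 := hδ' (min δ ε) (min_le_left _ _) _ K (c K) (hc2 K le_rfl)
    have h2 : bdry (top p (cmap g) K (c K)) = 0 := by
      rw [bdry_top]
      cases K with
      | zero =>
        rw [hc0]
        simp [top, hgb]
      | succ K =>
        rw [hc1 K (by omega), ← Module.End.mul_apply, top_succ_mul p _ hcp]
        rfl
    obtain ⟨w, hw, hwb⟩ := fill R' (ε / 2) ε hR'0 (by linarith) (by linarith) _ _ h1 h2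
    refine ⟨fun k => if k = K + 1 then w else c k, by simpa using hc0, fun k hk => ?_, fun k hk => ?_⟩
    · by_cases hkK : k = K
      · subst hkK; simpa using hwb
      · have e1 : k ≠ K + 1 := by omega
        simp only [Nat.add_right_cancel_iff, hkK, e1, if_false]
        exact hc1 k (by omega)
    · by_cases hkK : k = K + 1
      · subst hkK; simpa [add_assoc] using hw
      · simp only [hkK, if_false]
        exact Finsupp.supported_mono (sm_mono hR' (min_le_right _ _) _) (hc2 k (by omega))

theorem core [ProperSpace E] (g : E → E) (hg : Continuous g) (p : ℕ) (hp : p.Prime)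
    (h2 : (2 : F) ≠ 0) (hpF : (p : F) = 0) (hgp : g^[p] = id)
    (q : ℕ) (R0 : ℝ) (hR0 : 0 ≤ R0) (b : List E →₀ F)
    (hb : ∀ δ > 0, b ∈ Finsupp.supported F F (sm R0 δ q : Set (List E)))
    (hbb : bdry b = 0) (hgb : cmap g b = b) (M0 : ℕ)
    (H : ∀ R, R0 ≤ R → ∃ (S : Type) (_ : Fintype S) (_ : DecidableEq S) (τ : S → S) (lam : E → S)
      (Good : Finset S → Prop) (ε : ℝ) (l0 : List S), 0 < ε ∧ τ^[p] = id ∧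
      (∀ s t, s ⊆ t → Good t → Good s) ∧ (∀ s, Good (s.image τ) → Good s) ∧
      (∀ s, Good s → q < s.card → s.image τ ≠ s) ∧
      (∀ x s, lam (g x) = s ↔ lam x = τ s) ∧
      (∀ k, ∀ l ∈ (sm R ε k : Set (List E)), Good (l.map lam).toFinset ∧
        (l.map lam).toFinset.card ≤ M0) ∧
      l0.map τ = l0 ∧ EV lam b l0 ≠ 0) : False := by
  obtain ⟨R, hR, hRR, h⟩ := exists_seq g hg p hgp q R0 hR0 b hb hbb hgb (M0 + 1)
  obtain ⟨S, _, _, τ, lam, Good, ε, l0, hε, hτp, hG1, hG2, hG3, hlam, hsm, hl0, hne⟩ := H R hRR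
  obtain ⟨c, hc0, hc1, hc2⟩ := h ε hε
  apply hne
  have := descend (F := F) p q (M0 + 1) hp h2 hpF Good τ hτp hG1 hG2 hG3 (fun k => EV lam (c k))
    (fun k hk => EV_mem h2 lam Good hG1 _ _ (fun xs hxs => ⟨hxs.1, (hsm _ xs hxs).1⟩) _ (hc2 k hk))
    (fun k hk => by rw [fbd_EV, hc1 k hk, EV_top lam g τ hlam])
    (EV_zero h2 lam _ (fun xs hxs => by
      have := (hsm _ xs hxs).2
      have := hxs.1
      omega) _ (hc2 (M0 + 1) le_rfl)) l0 hl0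
  rwa [fbd_EV, hc0] at this

end Small

section Labels

/-- shift action on labels -/
def tau (p n : ℕ) (α : Type) : Bool ⊕ (ZMod p × Fin n → α) → Bool ⊕ (ZMod p × Fin n → α) :=
  Sum.map id (fun v ij => v (ij.1 - 1, ij.2))

lemma tau_iter (p n : ℕ) (α : Type) (i : ℕ) :
    (tau p n α)^[i] = Sum.map id (fun v ij => v (ij.1 - i, ij.2)) := by
  induction i with
  | zero => ext s; cases s <;> simp
  | succ i ih =>
    rw [Function.iterate_succ', ih]
    funext s
    cases s with
    | inl s => rfl
    | inr v =>
      simp only [tau, Function.comp_apply, Sum.map_inr, Nat.cast_add, Nat.cast_one]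
      congr 1
      funext ij
      congr 2
      ring

lemma tau_p (p n : ℕ) (α : Type) : (tau p n α)^[p] = id := by
  rw [tau_iter]; funext s; cases s <;> simp

lemma tau_inj (p n : ℕ) (α : Type) : Function.Injective (tau p n α) := by
  intro s t h
  rcases s with s | s <;> rcases t with t | t <;> simp only [tau, Sum.map_inl, Sum.map_inr, id] at h
  · exact h
  · cases h
  · cases h
  · congr 1
    have h := Sum.inr_injective h
    funext ij
    have := congrFun h (ij.1 + 1, ij.2)
    simpa using this

lemma iterate_congr {E : Type} (g : E → E) (p : ℕ) (hgp : g^[p] = id) (a b : ℕ)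
    (h : (a : ZMod p) = b) : g^[a] = g^[b] := by
  have key : ∀ a, g^[a] = g^[a % p] := by
    intro a
    conv_lhs => rw [← Nat.mod_add_div a p, Function.iterate_add, Function.iterate_mul, hgp]
    simp
  rw [key a, key b]
  rw [ZMod.natCast_eq_natCast_iff'] at h
  rw [h]

def par (p n : ℕ) (B : ℤ) : Bool ⊕ (ZMod p × Fin n → Set.Icc (-B) B) →
    Bool ⊕ (ZMod p × Fin n → Bool) :=
  Sum.map id (fun v ij => decide (Even (v ij : ℤ)))

lemma floor_eq_of_parity (a b : ℝ) (h : |a - b| < 1) (he : Even ⌊a⌋ ↔ Even ⌊b⌋) : ⌊a⌋ = ⌊b⌋ := by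
  have h1 := Int.floor_le a
  have h2 := Int.lt_floor_add_one a
  have h3 := Int.floor_le b
  have h4 := Int.lt_floor_add_one b
  rw [abs_lt] at h
  have h5 : ⌊a⌋ < ⌊b⌋ + 2 := by
    have : (⌊a⌋ : ℝ) < ⌊b⌋ + 2 := by linarith
    exact_mod_cast this
  have h6 : ⌊b⌋ < ⌊a⌋ + 2 := by
    have : (⌊b⌋ : ℝ) < ⌊a⌋ + 2 := by linarith
    exact_mod_cast this
  rw [Int.even_iff, Int.even_iff] at he
  omega

theorem labels (p n : ℕ) (hp : p.Prime) (g : EuclideanSpace ℝ (Fin n) → EuclideanSpace ℝ (Fin n))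
    (hg : Continuous g) (hgp : g^[p] = id) (h : EuclideanSpace ℝ (Fin n) → ℝ) (hc : Continuous h)
    (hinv : ∀ x, h (g x) = h x) (hfix : ∀ x, g x = x → h x ≠ 0) (R : ℝ) (hR : 0 ≤ R) :
    ∃ (B : ℤ) (ε : ℝ) (lam : EuclideanSpace ℝ (Fin n) → Bool ⊕ (ZMod p × Fin n → Set.Icc (-B) B)),
      0 < ε ∧ (∀ x, tau p n _ (lam (g x)) = lam x) ∧
      (∀ x y, ‖x‖ ≤ R → ‖y‖ ≤ R → dist x y ≤ ε →
        (tau p n _ (lam x) = lam y → ∃ s, lam x = Sum.inl s ∧ lam y = Sum.inl s) ∧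
        (∀ s s', lam x = Sum.inl s → lam y = Sum.inl s' → s = s') ∧
        (par p n B (lam x) = par p n B (lam y) → lam x = lam y)) ∧
      (∀ x, h x = 0 → ∀ s, lam x ≠ Sum.inl s) ∧
      (∀ x, ‖x‖ ≤ R → g x = x → 0 < h x → lam x = Sum.inl true) ∧
      (∀ x, ‖x‖ ≤ R → g x = x → h x < 0 → lam x = Sum.inl false) := by
  have hK : IsCompact (Metric.closedBall (0 : EuclideanSpace ℝ (Fin n)) R) := isCompact_closedBall 0 R
  have hgi : ∀ i, Continuous (g^[i]) := fun i => hg.iterate i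
  -- the gap
  obtain ⟨η, hη, hgap⟩ : ∃ η > 0, ∀ x, ‖x‖ ≤ R → η ≤ ∑ j, |x j - g x j| + |h x| := by
    have hcont : Continuous fun x : EuclideanSpace ℝ (Fin n) => ∑ j, |x j - g x j| + |h x| := by
      fun_prop
    obtain ⟨x0, -, hx0⟩ := hK.exists_isMinOn ⟨0, by simpa using hR⟩ hcont.continuousOn
    refine ⟨∑ j, |x0 j - g x0 j| + |h x0|, ?_, fun x hx => hx0 (by simpa using hx)⟩
    by_contra hneg
    have hs : 0 ≤ ∑ j, |x0 j - g x0 j| := Finset.sum_nonneg fun _ _ => abs_nonneg _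
    have ha := abs_nonneg (h x0)
    have h1 : ∑ j, |x0 j - g x0 j| = 0 := by linarith
    have h2 : h x0 = 0 := abs_eq_zero.1 (by linarith)
    rw [Finset.sum_eq_zero_iff_of_nonneg (fun _ _ => abs_nonneg _)] at h1
    refine hfix x0 ?_ h2
    ext j
    have := abs_eq_zero.1 (h1 j (Finset.mem_univ j))
    linarith
  let e0 : ℝ := η / (4 * (n + 1))
  have he0 : 0 < e0 := by positivity
  have he0n : n * (2 * e0) < η / 2 := by
    simp only [e0]
    have hn : (0 : ℝ) < n + 1 := by positivity
    have : (n : ℝ) * (2 * (η / (4 * (n + 1)))) = η / 2 * (n / (n + 1)) := by field_simp; ring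
    rw [this]
    have : (n : ℝ) / (n + 1) < 1 := by rw [div_lt_one hn]; linarith
    nlinarith
  -- bound
  obtain ⟨B, hB0, hB⟩ : ∃ B : ℤ, 0 ≤ B ∧ ∀ x, ‖x‖ ≤ R → ∀ i < p, ∀ j, ⌊(g^[i] x) j / e0⌋ ∈ Set.Icc (-B) B := by
    have h1 : ∀ i, ∃ r, ∀ x, ‖x‖ ≤ R → ‖g^[i] x‖ ≤ r := by
      intro i
      obtain ⟨r, hr⟩ := (hK.image (hgi i)).isBounded.exists_norm_le
      exact ⟨r, fun x hx => hr _ ⟨x, by simpa using hx, rfl⟩⟩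
    choose r hr using h1
    obtain ⟨N, hN⟩ := exists_nat_gt ((∑ i ∈ Finset.range p, |r i|) / e0)
    refine ⟨N + 1, by positivity, fun x hx i hi j => ?_⟩
    have h2 : |(g^[i] x) j| ≤ ∑ i ∈ Finset.range p, |r i| := by
      have a1 := PiLp.norm_apply_le (g^[i] x) j
      rw [Real.norm_eq_abs] at a1
      have a2 := hr i x hx
      have a3 := Finset.single_le_sum (f := fun i => |r i|) (fun _ _ => abs_nonneg _)
        (Finset.mem_range.2 hi)
      linarith [le_abs_self (r i)]
    have h3 : |(g^[i] x) j / e0| < N := by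
      rw [abs_div, abs_of_pos he0]
      exact lt_of_le_of_lt (by gcongr) hN
    rw [abs_lt] at h3
    constructor
    · apply Int.le_floor.2; push_cast; linarith
    · apply Int.le_of_lt_add_one
      apply Int.floor_lt.2; push_cast; linarith
  -- uniform continuity
  obtain ⟨ε, hε, hu⟩ : ∃ ε > 0, ∀ x y, ‖x‖ ≤ R → ‖y‖ ≤ R → dist x y ≤ ε →
      (∀ i ∈ Finset.range (p + 1), ∀ j, |(g^[i] x) j - (g^[i] y) j| < e0) ∧ |h x - h y| < η := by
    have h2 : ∀ i, ∃ δ > 0, ∀ x y, ‖x‖ ≤ R → ‖y‖ ≤ R → dist x y ≤ δ → dist (g^[i] x) (g^[i] y) < e0 := by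
      intro i
      have := hK.uniformContinuousOn_of_continuous (hgi i).continuousOn
      obtain ⟨δ, hδ, h⟩ := Metric.uniformContinuousOn_iff.1 this e0 he0
      exact ⟨δ / 2, by linarith, fun x y hx hy hxy =>
        (h x (by simpa using hx) y (by simpa using hy) (by linarith))⟩
    choose dl hdl hd using h2
    obtain ⟨d1, hd1, hh⟩ := Metric.uniformContinuousOn_iff.1
      (hK.uniformContinuousOn_of_continuous hc.continuousOn) η hη
    refine ⟨min (d1 / 2) ((Finset.range (p + 1)).inf' ⟨0, by simp⟩ dl),
      lt_min (by linarith) ((Finset.lt_inf'_iff _).2 fun i _ => hdl i), fun x y hx hy hxy => ⟨?_, ?_⟩⟩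
    · intro i hi j
      have a1 := hd i x y hx hy (hxy.trans ((min_le_right _ _).trans (Finset.inf'_le _ hi)))
      have a2 := PiLp.norm_apply_le (g^[i] x - g^[i] y) j
      rw [dist_eq_norm] at a1
      rw [Real.norm_eq_abs] at a2
      exact lt_of_le_of_lt (by simpa using a2) a1
    · have := hh x (by simpa using hx) y (by simpa using hy)
        (lt_of_le_of_lt (hxy.trans (min_le_left _ _)) (by linarith))
      rwa [Real.dist_eq] at this
  have hBB : -B ≤ B := by omega
  let cl : ℤ → Set.Icc (-B) B := Set.projIcc (-B) B hBB
  have hcl : ∀ z ∈ Set.Icc (-B) B, (cl z : ℤ) = z := fun z hz => by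
    simp only [cl, Set.projIcc_of_mem hBB hz]
  let v : EuclideanSpace ℝ (Fin n) → ZMod p × Fin n → Set.Icc (-B) B :=
    fun x ij => cl ⌊(g^[ij.1.val] x) ij.2 / e0⌋
  have : NeZero p := ⟨hp.ne_zero⟩
  have : Fact p.Prime := ⟨hp⟩
  let lam : EuclideanSpace ℝ (Fin n) → Bool ⊕ (ZMod p × Fin n → Set.Icc (-B) B) :=
    fun x => if η / 2 ≤ h x then Sum.inl true else if h x ≤ - (η / 2) then Sum.inl false
      else Sum.inr (v x)
  have hcases : ∀ x, (lam x = Sum.inl true ∧ η / 2 ≤ h x) ∨ (lam x = Sum.inl false ∧ h x ≤ -(η / 2)) ∨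
      (lam x = Sum.inr (v x) ∧ |h x| < η / 2) := by
    intro x
    simp only [lam]
    split_ifs with h1 h2
    · exact Or.inl ⟨rfl, h1⟩
    · exact Or.inr (Or.inl ⟨rfl, h2⟩)
    · refine Or.inr (Or.inr ⟨rfl, ?_⟩)
      rw [abs_lt]; constructor <;> linarith
  have hvg : ∀ x ij, v (g x) (ij.1 - 1, ij.2) = v x ij := by
    rintro x ⟨i, j⟩
    simp only [v]
    rw [← Function.iterate_succ_apply, iterate_congr g p hgp ((i - 1).val.succ) i.val (by simp)]
  refine ⟨B, ε, lam, hε, ?_, ?_, ?_, ?_, ?_⟩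
  · intro x
    simp only [lam, hinv]
    split_ifs
    · rfl
    · rfl
    · simp only [tau, Sum.map_inr]
      congr 1
      funext ij
      exact hvg x ij
  · intro x y hx hy hxy
    obtain ⟨hu1, hu2⟩ := hu x y hx hy hxy
    refine ⟨?_, ?_, ?_⟩
    · intro ht
      rcases hcases x with ⟨hx1, -⟩ | ⟨hx1, -⟩ | ⟨hx1, hx2⟩
      · rw [hx1] at ht; exact ⟨true, hx1, ht.symm⟩
      · rw [hx1] at ht; exact ⟨false, hx1, ht.symm⟩
      · exfalso
        rcases hcases y with ⟨hy1, -⟩ | ⟨hy1, -⟩ | ⟨hy1, hy2⟩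
        · rw [hx1, hy1] at ht; simp [tau] at ht
        · rw [hx1, hy1] at ht; simp [tau] at ht
        · rw [hx1, hy1] at ht
          simp only [tau, Sum.map_inr] at ht
          have ht := Sum.inr_injective ht
          have hb := hgap y hy
          have : ∑ j, |y j - g y j| ≤ ∑ j : Fin n, 2 * e0 := by
            refine Finset.sum_le_sum fun j _ => ?_
            have h1 := congrArg Subtype.val (congrFun ht (1, j))
            simp only [v] at h1
            rw [hcl _ (hB x hx _ (ZMod.val_lt _) j), hcl _ (hB y hy _ (ZMod.val_lt _) j)] at h1
            have h2 := Int.abs_sub_lt_one_of_floor_eq_floor h1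
            have e1 : (1 : ZMod p).val = 1 := ZMod.val_one p
            rw [sub_self, ZMod.val_zero, e1] at h2
            simp only [Function.iterate_zero, id, Function.iterate_one] at h2
            rw [← sub_div, abs_div, abs_of_pos he0, div_lt_one he0] at h2
            have h3 := hu1 0 (by simp) j
            simp only [Function.iterate_zero, id] at h3
            rw [abs_lt] at h2 h3
            rw [abs_le]; constructor <;> linarith
          simp at this
          linarith
    · intro s s' hs hs'
      rw [abs_lt] at hu2
      rcases hcases x with ⟨hx1, hx2⟩ | ⟨hx1, hx2⟩ | ⟨hx1, hx2⟩ <;>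
      rcases hcases y with ⟨hy1, hy2⟩ | ⟨hy1, hy2⟩ | ⟨hy1, hy2⟩ <;>
      rw [hx1] at hs <;> rw [hy1] at hs' <;> simp only [Sum.inl.injEq, reduceCtorEq] at hs hs' <;>
      first
      | (exfalso; linarith)
      | (rw [← hs, ← hs'])
    · intro hpar
      rcases hcases x with ⟨hx1, hx2⟩ | ⟨hx1, hx2⟩ | ⟨hx1, hx2⟩ <;>
      rcases hcases y with ⟨hy1, hy2⟩ | ⟨hy1, hy2⟩ | ⟨hy1, hy2⟩ <;>
      rw [hx1, hy1] at hpar ⊢ <;> simp only [par, Sum.map_inl, Sum.map_inr, id, reduceCtorEq, Sum.inl.injEq, Bool.true_eq_false, Bool.false_eq_true] at hpar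
      congr 1
      have hpar := Sum.inr_injective hpar
      funext ⟨i, j⟩
      have h1 := congrFun hpar (i, j)
      simp only [v, decide_eq_decide] at h1
      rw [hcl _ (hB x hx _ (ZMod.val_lt _) j), hcl _ (hB y hy _ (ZMod.val_lt _) j)] at h1
      simp only [v]
      congr 1
      apply floor_eq_of_parity _ _ _ h1
      rw [← sub_div, abs_div, abs_of_pos he0, div_lt_one he0]
      exact hu1 _ (by have := ZMod.val_lt i; simp; omega) j
  · intro x hx s hs
    simp only [lam, hx] at hs
    rw [if_neg (by linarith), if_neg (by linarith)] at hs
    cases hs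
  · intro x hx hgx hpos
    have := hgap x hx
    simp only [hgx, sub_self, abs_zero, Finset.sum_const_zero, zero_add, abs_of_pos hpos] at this
    simp only [lam]
    rw [if_pos (by linarith)]
  · intro x hx hgx hneg
    have := hgap x hx
    simp only [hgx, sub_self, abs_zero, Finset.sum_const_zero, zero_add, abs_of_neg hneg] at this
    simp only [lam]
    rw [if_neg (by linarith), if_pos (by linarith)]

end Labels

section SmithThms

/-- fixed point theorem for maps of odd prime order -/
theorem exists_fixed (p n : ℕ) (hp : p.Prime) (hp2 : p ≠ 2)
    (g : EuclideanSpace ℝ (Fin n) → EuclideanSpace ℝ (Fin n))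
    (hg : Continuous g) (hgp : g^[p] = id) : ∃ x, g x = x := by
  by_contra hno
  push Not at hno
  have : Fact p.Prime := ⟨hp⟩
  have h2 : (2 : ZMod p) ≠ 0 := by
    intro h
    have h' : ((2 : ℕ) : ZMod p) = 0 := by exact_mod_cast h
    rw [ZMod.natCast_eq_zero_iff] at h'
    exact hp2 ((Nat.prime_dvd_prime_iff_eq hp Nat.prime_two).1 h')
  refine core (F := ZMod p) g hg p hp h2 (by simp) hgp 0 0 le_rfl (single [] 1) ?_ ?_ ?_
    (Fintype.card (Bool ⊕ (ZMod p × Fin n → Bool))) ?_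
  · intro δ hδ
    apply Finsupp.single_mem_supported
    refine ⟨rfl, ?_, ?_⟩ <;> simp
  · simp [bdry, ctrL]
  · simp
  · intro R hR
    obtain ⟨B, ε, lam, hε, heq, hsm, hz, -, -⟩ := labels p n hp g hg hgp (fun _ => 0)
      continuous_const (fun _ => rfl) (fun x hx => absurd hx (hno x)) R hR
    refine ⟨_, inferInstance, inferInstance, tau p n _, lam,
      fun s => ∀ x ∈ s, ∀ y ∈ s, tau p n _ x ≠ y, ε, [], hε, tau_p p n _, ?_, ?_, ?_, ?_, ?_, rfl, ?_⟩
    · intro s t hst ht x hx y hy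
      exact ht x (hst hx) y (hst hy)
    · intro s hs x hx y hy hxy
      exact hs _ (Finset.mem_image_of_mem _ hx) _ (Finset.mem_image_of_mem _ hy) (congrArg _ hxy)
    · intro s hs hc him
      obtain ⟨x, hx⟩ := Finset.card_pos.1 hc
      exact hs x hx _ (him ▸ Finset.mem_image_of_mem _ hx) rfl
    · intro x s
      rw [← heq x]
      exact (tau_inj p n _).eq_iff.symm
    · rintro k l ⟨-, hl1, hl2⟩
      constructor
      · intro s hs t ht hst
        simp only [List.mem_toFinset, List.mem_map] at hs ht
        obtain ⟨x, hx, rfl⟩ := hs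
        obtain ⟨y, hy, rfl⟩ := ht
        obtain ⟨s, hs, -⟩ := (hsm x y (hl1 x hx) (hl1 y hy) (hl2 x hx y hy)).1 hst
        exact hz x rfl s hs
      · rw [← Finset.card_univ]
        refine Finset.card_le_card_of_injOn (par p n B) (fun _ _ => by simp) ?_
        intro s hs t ht hst
        simp only [List.coe_toFinset, List.mem_map, Set.mem_setOf_eq] at hs ht
        obtain ⟨x, hx, rfl⟩ := hs
        obtain ⟨y, hy, rfl⟩ := ht
        exact (hsm x y (hl1 x hx) (hl1 y hy) (hl2 x hx y hy)).2.2 hst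
    · simp [EV_apply, ev]

/-- no invariant function separates the fixed point set -/
theorem fixed_sep (p n : ℕ) (hp : p.Prime) (hp2 : p ≠ 2)
    (g : EuclideanSpace ℝ (Fin n) → EuclideanSpace ℝ (Fin n))
    (hg : Continuous g) (hgp : g^[p] = id) (h : EuclideanSpace ℝ (Fin n) → ℝ) (hc : Continuous h)
    (hinv : ∀ x, h (g x) = h x) (hfix : ∀ x, g x = x → h x ≠ 0)
    (a b : EuclideanSpace ℝ (Fin n)) (ha : g a = a) (hb : g b = b) (hha : 0 < h a) (hhb : h b < 0) :
    False := by
  have : Fact p.Prime := ⟨hp⟩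
  have h2 : (2 : ZMod p) ≠ 0 := by
    intro h
    have h' : ((2 : ℕ) : ZMod p) = 0 := by exact_mod_cast h
    rw [ZMod.natCast_eq_zero_iff] at h'
    exact hp2 ((Nat.prime_dvd_prime_iff_eq hp Nat.prime_two).1 h')
  refine core (F := ZMod p) g hg p hp h2 (by simp) hgp 1 (max ‖a‖ ‖b‖)
    (le_max_of_le_left (norm_nonneg _)) (single [b] 1 - single [a] 1) ?_ ?_ ?_
    (Fintype.card (Bool ⊕ (ZMod p × Fin n → Bool))) ?_
  · intro δ hδ
    apply Submodule.sub_mem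
    · apply Finsupp.single_mem_supported
      refine ⟨rfl, ?_, ?_⟩ <;> simp [hδ.le]
    · apply Finsupp.single_mem_supported
      refine ⟨rfl, ?_, ?_⟩ <;> simp [hδ.le]
  · simp [bdry, ctrL]
  · simp [ha, hb]
  · intro R hR
    obtain ⟨B, ε, lam, hε, heq, hsm, -, hpos, hneg⟩ := labels p n hp g hg hgp h
      hc hinv hfix R ((le_max_of_le_left (norm_nonneg _)).trans hR)
    have hla := hpos a ((le_max_left _ _).trans hR) ha hha
    have hlb := hneg b ((le_max_right _ _).trans hR) hb hhb
    refine ⟨_, inferInstance, inferInstance, tau p n _, lam,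
      fun s => (∀ x ∈ s, ∀ y ∈ s, tau p n _ x = y → x = y) ∧
        (∀ x ∈ s, ∀ y ∈ s, tau p n _ x = x → tau p n _ y = y → x = y),
      ε, [Sum.inl true], hε, tau_p p n _, ?_, ?_, ?_, ?_, ?_, rfl, ?_⟩
    · intro s t hst ht
      exact ⟨fun x hx y hy => ht.1 x (hst hx) y (hst hy), fun x hx y hy => ht.2 x (hst hx) y (hst hy)⟩
    · intro s hs
      refine ⟨fun x hx y hy hxy => ?_, fun x hx y hy h1 h2 => ?_⟩
      · exact tau_inj p n _ (hs.1 _ (Finset.mem_image_of_mem _ hx) _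
          (Finset.mem_image_of_mem _ hy) (congrArg _ hxy))
      · exact tau_inj p n _ (hs.2 _ (Finset.mem_image_of_mem _ hx) _
          (Finset.mem_image_of_mem _ hy) (congrArg _ h1) (congrArg _ h2))
    · intro s hs hc him
      obtain ⟨x, hx, y, hy, hxy⟩ := Finset.one_lt_card.1 hc
      have key : ∀ x ∈ s, tau p n _ x = x := fun x hx =>
        (hs.1 x hx _ (by rw [← him]; exact Finset.mem_image_of_mem _ hx) rfl).symm
      exact hxy (hs.2 x hx y hy (key x hx) (key y hy))
    · intro x s
      rw [← heq x]
      exact (tau_inj p n _).eq_iff.symm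
    · rintro k l ⟨-, hl1, hl2⟩
      refine ⟨⟨?_, ?_⟩, ?_⟩
      · intro s hs t ht hst
        simp only [List.mem_toFinset, List.mem_map] at hs ht
        obtain ⟨x, hx, rfl⟩ := hs
        obtain ⟨y, hy, rfl⟩ := ht
        obtain ⟨s, hs, ht⟩ := (hsm x y (hl1 x hx) (hl1 y hy) (hl2 x hx y hy)).1 hst
        rw [hs, ht]
      · intro s hs t ht h1 h2
        simp only [List.mem_toFinset, List.mem_map] at hs ht
        obtain ⟨x, hx, rfl⟩ := hs
        obtain ⟨y, hy, rfl⟩ := ht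
        obtain ⟨s, hs, -⟩ := (hsm x x (hl1 x hx) (hl1 x hx) (hl2 x hx x hx)).1 h1
        obtain ⟨t, ht, -⟩ := (hsm y y (hl1 y hy) (hl1 y hy) (hl2 y hy y hy)).1 h2
        rw [hs, ht, (hsm x y (hl1 x hx) (hl1 y hy) (hl2 x hx y hy)).2.1 s t hs ht]
      · rw [← Finset.card_univ]
        refine Finset.card_le_card_of_injOn (par p n B) (fun _ _ => by simp) ?_
        intro s hs t ht hst
        simp only [List.coe_toFinset, List.mem_map, Set.mem_setOf_eq] at hs ht
        obtain ⟨x, hx, rfl⟩ := hs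
        obtain ⟨y, hy, rfl⟩ := ht
        exact (hsm x y (hl1 x hx) (hl1 y hy) (hl2 x hx y hy)).2.2 hst
    · simp [EV_apply, ev, ctrL, hla, hlb]

theorem fixed_preconnected (p n : ℕ) (hp : p.Prime) (hp2 : p ≠ 2)
    (g : EuclideanSpace ℝ (Fin n) → EuclideanSpace ℝ (Fin n))
    (hg : Continuous g) (hgp : g^[p] = id) : IsPreconnected {x | g x = x} := by
  have hF : IsClosed {x | g x = x} := isClosed_eq hg continuous_id
  rw [isPreconnected_closed_iff]
  rintro A B hA hB hAB ⟨a, haF, haA⟩ ⟨b, hbF, hbB⟩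
  by_contra hemp
  rw [Set.not_nonempty_iff_eq_empty] at hemp
  have hA' := hF.inter hA
  have hB' := hF.inter hB
  set A' := {x | g x = x} ∩ A with hAd
  set B' := {x | g x = x} ∩ B with hBd
  have hAn : A'.Nonempty := ⟨a, haF, haA⟩
  have hBn : B'.Nonempty := ⟨b, hbF, hbB⟩
  have hdis : ∀ x, x ∈ A' → x ∈ B' → False := fun x h1 h2 => by
    have : x ∈ {x | g x = x} ∩ (A ∩ B) := ⟨h1.1, h1.2, h2.2⟩
    rw [hemp] at this; exact this
  let u : EuclideanSpace ℝ (Fin n) → ℝ := fun x => Metric.infDist x B' - Metric.infDist x A'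
  have hu : Continuous u := (Metric.continuous_infDist_pt _).sub (Metric.continuous_infDist_pt _)
  have huA : ∀ x ∈ A', 0 < u x := fun x hx => by
    have h1 : Metric.infDist x A' = 0 := Metric.infDist_zero_of_mem hx
    have h2 : 0 < Metric.infDist x B' := (hB'.notMem_iff_infDist_pos hBn).1 (hdis x hx)
    simp only [u]; linarith
  have huB : ∀ x ∈ B', u x < 0 := fun x hx => by
    have h1 : Metric.infDist x B' = 0 := Metric.infDist_zero_of_mem hx
    have h2 : 0 < Metric.infDist x A' := (hA'.notMem_iff_infDist_pos hAn).1 (fun h => hdis x h hx)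
    simp only [u]; linarith
  have hp0 : (0 : ℝ) < p := by exact_mod_cast hp.pos
  have hfv : ∀ x, g x = x → ∑ i ∈ Finset.range p, u (g^[i] x) = p * u x := fun x hx => by
    rw [Finset.sum_congr rfl (fun i _ => by rw [Function.iterate_fixed hx i])]
    simp
  refine fixed_sep p n hp hp2 g hg hgp (fun x => ∑ i ∈ Finset.range p, u (g^[i] x)) ?_ ?_ ?_ a b haF hbF ?_ ?_
  · exact continuous_finsetSum _ fun i _ => hu.comp (hg.iterate i)
  · intro x
    simp only [← Function.iterate_succ_apply]
    have h1 := Finset.sum_range_succ (fun i => u (g^[i] x)) p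
    have h2 := Finset.sum_range_succ' (fun i => u (g^[i] x)) p
    rw [h1, hgp] at h2
    simp only [id, Function.iterate_zero] at h2
    linarith
  · intro x hx
    simp only [hfv x hx]
    rcases hAB hx with h | h
    · exact (mul_pos hp0 (huA x ⟨hx, h⟩)).ne'
    · exact (mul_neg_of_pos_of_neg hp0 (huB x ⟨hx, h⟩)).ne
  · simp only [hfv a haF]
    exact mul_pos hp0 (huA a ⟨haF, haA⟩)
  · simp only [hfv b hbF]
    exact mul_neg_of_pos_of_neg hp0 (huB b ⟨hbF, hbB⟩)

end SmithThms

section Rep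

lemma idem_trace {n : ℕ} (P : Matrix (Fin n) (Fin n) ℂ) (hP : P * P = P) :
    (∃ r : ℕ, P.trace = r) ∧ (P.trace = 0 → P = 0) := by
  have h1 : IsIdempotentElem (Matrix.toLin' P) := by
    rw [IsIdempotentElem, Module.End.mul_eq_comp, ← Matrix.toLin'_mul, hP]
  rw [← Matrix.trace_toLin'_eq]
  constructor
  · exact ⟨_, (LinearMap.IsIdempotentElem.isProj_range _ h1).trace⟩
  · intro h
    have := (LinearMap.IsIdempotentElem.trace_eq_zero_iff h1).1 h
    simpa using this

variable {p : ℕ} [Fact p.Prime]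

/-- isotypical projections -/
noncomputable def Pk {n : ℕ} (M : ZMod p → Matrix (Fin n) (Fin n) ℂ) (k : ZMod p) :
    Matrix (Fin n) (Fin n) ℂ :=
  (p : ℂ)⁻¹ • ∑ j, ZMod.stdAddChar (-(j * k)) • M j

lemma p_ne : (p : ℂ) ≠ 0 := by exact_mod_cast (Fact.out : p.Prime).ne_zero

lemma Pk_idem {n : ℕ} (M : ZMod p → Matrix (Fin n) (Fin n) ℂ)
    (hM : ∀ i j, M (i + j) = M i * M j) (k : ZMod p) : Pk M k * Pk M k = Pk M k := by
  unfold Pk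
  rw [smul_mul_smul_comm, Finset.sum_mul]
  have : ∀ i : ZMod p, (ZMod.stdAddChar (-(i * k)) • M i) * ∑ j, ZMod.stdAddChar (-(j * k)) • M j
      = ∑ j, ZMod.stdAddChar (-(j * k)) • M j := by
    intro i
    rw [Finset.mul_sum, ← Equiv.sum_comp (Equiv.addLeft i) (fun j => ZMod.stdAddChar (-(j * k)) • M j)]
    refine Finset.sum_congr rfl fun j _ => ?_
    simp only [Equiv.coe_addLeft]
    rw [smul_mul_smul_comm, hM, ← AddChar.map_add_eq_mul]
    congr 2
    ring
  rw [Finset.sum_congr rfl fun i _ => this i, Finset.sum_const, Finset.card_univ, ZMod.card,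
    ← Nat.cast_smul_eq_nsmul ℂ, smul_smul, mul_assoc, inv_mul_cancel₀ p_ne, mul_one]

lemma Pk_sum {n : ℕ} (M : ZMod p → Matrix (Fin n) (Fin n) ℂ) : ∑ k, Pk M k = M 0 := by
  unfold Pk
  rw [← Finset.smul_sum, Finset.sum_comm]
  have : ∀ j : ZMod p, ∑ k : ZMod p, ZMod.stdAddChar (-(j * k)) • M j =
      (if j = 0 then (p : ℂ) else 0) • M j := by
    intro j
    rw [← Finset.sum_smul]
    congr 1
    have := AddChar.sum_mulShift (-j) (ZMod.isPrimitive_stdAddChar p)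
    simp only [neg_eq_zero, ZMod.card] at this
    rw [Finset.sum_congr rfl fun i _ => by rw [show -(j * i) = i * -j by ring], this]
    split_ifs <;> simp
  rw [Finset.sum_congr rfl fun i _ => this i]
  simp [ite_smul, smul_smul]

lemma Pk_trace {n : ℕ} (M : ZMod p → Matrix (Fin n) (Fin n) ℂ) (k : ZMod p) :
    (Pk M k).trace = (p : ℂ)⁻¹ * ∑ j, ZMod.stdAddChar (-(j * k)) * (M j).trace := by
  simp [Pk, Matrix.trace_smul, Matrix.trace_sum]

lemma mul_Pk_zero {n : ℕ} (M : ZMod p → Matrix (Fin n) (Fin n) ℂ)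
    (hM : ∀ i j, M (i + j) = M i * M j) (i : ZMod p) : M i * Pk M 0 = Pk M 0 := by
  unfold Pk
  rw [Matrix.mul_smul]
  congr 1
  simp only [mul_zero, neg_zero, AddChar.map_zero_eq_one, one_smul]
  rw [Finset.mul_sum, ← Equiv.sum_comp (Equiv.addLeft i) M]
  exact Finset.sum_congr rfl fun j _ => by simp [hM]

lemma sq_or (hp4 : p % 4 = 3) (k : ZMod p) (hk : k ≠ 0) :
    ∃ b : ZMod p, b ≠ 0 ∧ (k = b ^ 2 ∨ -k = b ^ 2) := by
  have hne : ∀ b : ZMod p, k = b * b ∨ -k = b * b → b ≠ 0 := by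
    rintro b h rfl
    simp [hk] at h
  by_cases h : IsSquare k
  · obtain ⟨b, hb⟩ := h
    exact ⟨b, hne b (Or.inl hb), Or.inl (by rw [hb, sq])⟩
  · have h1 : quadraticChar (ZMod p) k = -1 :=
      (quadraticChar_eq_neg_one_iff_not_one hk).2 (mt (quadraticChar_one_iff_isSquare hk).1 h)
    have h0 : (-1 : ZMod p) ≠ 0 := by simp
    have h2 : quadraticChar (ZMod p) (-1) = -1 :=
      (quadraticChar_eq_neg_one_iff_not_one h0).2 (mt (quadraticChar_one_iff_isSquare h0).1
        (fun h => ZMod.exists_sq_eq_neg_one_iff.1 h hp4))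
    have h3 : quadraticChar (ZMod p) (-k) = 1 := by
      rw [← neg_one_mul, map_mul, h1, h2]; norm_num
    obtain ⟨b, hb⟩ := (quadraticChar_one_iff_isSquare (neg_ne_zero.2 hk)).1 h3
    exact ⟨b, hne b (Or.inr hb), Or.inr (by rw [hb, sq])⟩

/-- purely algebraic conclusion -/
lemma rep_trivial (hp4 : p % 4 = 3) {n : ℕ} (hn : n < p - 1)
    (M : ZMod p → Matrix (Fin n) (Fin n) ℂ) (hM0 : M 0 = 1)
    (hM : ∀ i j, M (i + j) = M i * M j)
    (hreal : ∀ j, (starRingEnd ℂ) (M j).trace = (M j).trace)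
    (hsq : ∀ b : ZMod p, b ≠ 0 → ∀ k, (Pk M (b ^ 2 * k)).trace = (Pk M k).trace) (i : ZMod p) :
    M i = 1 := by
  have hp : p.Prime := Fact.out
  have hnat : ∀ k, ∃ r : ℕ, (Pk M k).trace = r := fun k => (idem_trace _ (Pk_idem M hM k)).1
  choose r hr using hnat
  have hneg : ∀ k, (Pk M (-k)).trace = (Pk M k).trace := by
    intro k
    have h1 : (starRingEnd ℂ) (Pk M k).trace = (Pk M k).trace := by rw [hr]; simp
    rw [← h1, Pk_trace, Pk_trace, map_mul, map_sum]
    congr 1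
    · simp
    · refine Finset.sum_congr rfl fun j _ => ?_
      rw [map_mul, hreal, ← AddChar.map_neg_eq_conj, mul_neg, neg_neg]
  have hall : ∀ k, k ≠ 0 → r k = r 1 := by
    intro k hk
    have : (Pk M k).trace = (Pk M 1).trace := by
      obtain ⟨b, hb, h | h⟩ := sq_or hp4 k hk
      · rw [← hsq b hb 1, mul_one, h]
      · rw [← hneg k, ← hsq b hb 1, mul_one, h]
    rw [hr, hr] at this
    exact_mod_cast this
  have hsum : ∑ k, r k = n := by
    have := congrArg Matrix.trace (Pk_sum M)
    rw [Matrix.trace_sum, hM0, Matrix.trace_one, Finset.sum_congr rfl fun k _ => hr k,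
      Fintype.card_fin] at this
    exact_mod_cast this
  have hr1 : r 1 = 0 := by
    by_contra h
    have h1 : ∑ k ∈ Finset.univ.erase (0 : ZMod p), r k ≤ ∑ k, r k :=
      Finset.sum_le_sum_of_subset (Finset.erase_subset _ _)
    rw [Finset.sum_congr rfl (fun k hk => hall k (Finset.ne_of_mem_erase hk)), Finset.sum_const,
      Finset.card_erase_of_mem (Finset.mem_univ _), Finset.card_univ, ZMod.card, hsum, smul_eq_mul] at h1
    have : (p - 1) * 1 ≤ (p - 1) * r 1 := Nat.mul_le_mul_left _ (Nat.pos_of_ne_zero h)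
    omega
  have hP : ∀ k, k ≠ 0 → Pk M k = 0 := fun k hk =>
    (idem_trace _ (Pk_idem M hM k)).2 (by rw [hr, hall k hk, hr1]; simp)
  have hP0 : Pk M 0 = 1 := by
    rw [← hM0, ← Pk_sum M, Finset.sum_eq_single 0 (fun k _ hk => hP k hk) (by simp)]
  have := mul_Pk_zero M hM i
  rwa [hP0, mul_one] at this

end Rep

section Rigid

lemma rigid {p n : ℕ} [Fact p.Prime]
    (s : ZMod p → EuclideanSpace ℝ (Fin n) → EuclideanSpace ℝ (Fin n))
    (hs : ∀ j, ContDiff ℝ (⊤ : ℕ∞) (s j)) (hadd : ∀ i j x, s (i + j) x = s i (s j x))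
    (x0 : EuclideanSpace ℝ (Fin n)) (hx0 : ∀ j, s j x0 = x0)
    (hd0 : ∀ j, fderiv ℝ (s j) x0 = ContinuousLinearMap.id ℝ _) (j : ZMod p) (y : EuclideanSpace ℝ (Fin n)) :
    s j y = y := by
  have hpp : (p : ℝ) ≠ 0 := by exact_mod_cast (Fact.out : p.Prime).ne_zero
  let W : Set (EuclideanSpace ℝ (Fin n)) :=
    {x | ∀ j, s j x = x ∧ fderiv ℝ (s j) x = ContinuousLinearMap.id ℝ _}
  have hclosed : IsClosed W := by
    have : W = ⋂ j, ({x | s j x = x} ∩ {x | fderiv ℝ (s j) x = ContinuousLinearMap.id ℝ _}) := by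
      ext x; simp [W]
    rw [this]
    refine isClosed_iInter fun j => (isClosed_eq (hs j).continuous continuous_id).inter
      (isClosed_eq ((hs j).continuous_fderiv (by simp)) continuous_const)
  have hopen : IsOpen W := by
    rw [isOpen_iff_mem_nhds]
    intro x hx
    let ψ : EuclideanSpace ℝ (Fin n) → EuclideanSpace ℝ (Fin n) := fun y => (p : ℝ)⁻¹ • ∑ j, s j y
    have hψ : HasStrictFDerivAt ψ
        ((ContinuousLinearEquiv.refl ℝ (EuclideanSpace ℝ (Fin n)) :
          EuclideanSpace ℝ (Fin n) →L[ℝ] EuclideanSpace ℝ (Fin n))) x := by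
      have h1 : ∀ j ∈ (Finset.univ : Finset (ZMod p)),
          HasStrictFDerivAt (s j) (ContinuousLinearMap.id ℝ (EuclideanSpace ℝ (Fin n))) x := by
        intro j _
        have := (hs j).contDiffAt.hasStrictFDerivAt (x := x) (by simp)
        rwa [(hx j).2] at this
      have h2 := (HasStrictFDerivAt.fun_sum h1).const_smul (p : ℝ)⁻¹
      rw [Finset.sum_const, Finset.card_univ, ZMod.card, ← Nat.cast_smul_eq_nsmul ℝ, smul_smul,
        inv_mul_cancel₀ hpp, one_smul] at h2
      exact h2
    have hinv : ∀ i y, ψ (s i y) = ψ y := by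
      intro i y
      simp only [ψ, ← hadd]
      congr 1
      exact Equiv.sum_comp (Equiv.addRight i) (fun j => s j y)
    have hU := (hψ.toOpenPartialHomeomorph ψ).open_source.mem_nhds
      hψ.mem_toOpenPartialHomeomorph_source
    have hinj := (hψ.toOpenPartialHomeomorph ψ).injOn
    rw [hψ.toOpenPartialHomeomorph_coe] at hinj
    have hloc : ∀ i, ∀ᶠ y in nhds x, s i y = y := by
      intro i
      have h1 : Filter.Tendsto (s i) (nhds x) (nhds x) := by
        have := (hs i).continuous.tendsto x
        rwa [(hx i).1] at this
      filter_upwards [hU, h1.eventually hU] with y hy1 hy2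
      exact hinj hy2 hy1 (hinv i y)
    have hall : ∀ᶠ y in nhds x, ∀ i, ∀ᶠ z in nhds y, s i z = z :=
      Filter.eventually_all.2 fun i => (hloc i).eventually_nhds
    filter_upwards [hall] with y hy i
    refine ⟨(hy i).self_of_nhds, ?_⟩
    have : s i =ᶠ[nhds y] id := hy i
    rw [this.fderiv_eq, fderiv_id]
  have huniv : W = Set.univ := IsClopen.eq_univ ⟨hclosed, hopen⟩ ⟨x0, fun j => ⟨hx0 j, hd0 j⟩⟩
  have : y ∈ W := by rw [huniv]; trivial
  exact (this j).1

end Rigid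

section Main

variable {p n : ℕ} [Fact p.Prime]

/-- translation -/
def trn (hp2 : p ≠ 2) (j : ZMod p) : alternatingGroup (ZMod p) :=
  ⟨Equiv.addLeft j, by
    rw [Equiv.Perm.mem_alternatingGroup]
    have h1 : (Equiv.addLeft j : Equiv.Perm (ZMod p)) ^ p = 1 := by
      ext x; simp
    have h2 := congrArg Equiv.Perm.sign h1
    rw [map_pow, map_one] at h2
    rcases Int.units_eq_one_or (Equiv.Perm.sign (Equiv.addLeft j : Equiv.Perm (ZMod p))) with h | h
    · exact h
    · rw [h, Odd.neg_one_pow ((Fact.out : p.Prime).odd_of_ne_two hp2)] at h2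
      exact absurd h2 (by decide)⟩

lemma trn_add (hp2 : p ≠ 2) (i j : ZMod p) : trn hp2 (i + j) = trn hp2 i * trn hp2 j := by
  ext x
  simp [trn]

lemma trn_zero (hp2 : p ≠ 2) : trn hp2 (0 : ZMod p) = 1 := by
  ext x
  simp [trn]

lemma trn_ne (hp2 : p ≠ 2) : trn hp2 (1 : ZMod p) ≠ 1 := by
  intro h
  have := congrArg (fun g : alternatingGroup (ZMod p) => (g : Equiv.Perm (ZMod p)) 0) h
  simp [trn] at this

/-- scaling by a square -/
def scl (b : ZMod p) (hb : b ≠ 0) : alternatingGroup (ZMod p) :=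
  ⟨Equiv.mulLeft₀ b hb ^ 2, by
    rw [Equiv.Perm.mem_alternatingGroup, map_pow]
    exact Int.units_sq _⟩

lemma scl_trn (hp2 : p ≠ 2) (b : ZMod p) (hb : b ≠ 0) (j : ZMod p) :
    scl b hb * trn hp2 j = trn hp2 (b ^ 2 * j) * scl b hb := by
  ext x
  simp only [scl, trn, Subgroup.coe_mul, sq, Equiv.Perm.mul_apply, Equiv.coe_addLeft,
    Equiv.mulLeft₀_apply]
  ring

/-- Jacobian matrix -/
noncomputable def Mx (ρ : alternatingGroup (ZMod p) →* Equiv.Perm (EuclideanSpace ℝ (Fin n)))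
    (g : alternatingGroup (ZMod p)) (x : EuclideanSpace ℝ (Fin n)) : Matrix (Fin n) (Fin n) ℂ :=
  (LinearMap.toMatrix (EuclideanSpace.basisFun (Fin n) ℝ).toBasis
    (EuclideanSpace.basisFun (Fin n) ℝ).toBasis
    (fderiv ℝ (ρ g) x : EuclideanSpace ℝ (Fin n) →ₗ[ℝ] EuclideanSpace ℝ (Fin n))).map (algebraMap ℝ ℂ)

variable (ρ : alternatingGroup (ZMod p) →* Equiv.Perm (EuclideanSpace ℝ (Fin n)))

lemma Mx_mul (hsmooth : ∀ g, ContDiff ℝ (⊤ : ℕ∞) (ρ g)) (g h : alternatingGroup (ZMod p))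
    (x : EuclideanSpace ℝ (Fin n)) : Mx ρ (g * h) x = Mx ρ g (ρ h x) * Mx ρ h x := by
  have h1 : fderiv ℝ (ρ (g * h)) x = (fderiv ℝ (ρ g) (ρ h x)).comp (fderiv ℝ (ρ h) x) := by
    have : (ρ (g * h) : EuclideanSpace ℝ (Fin n) → EuclideanSpace ℝ (Fin n)) = ρ g ∘ ρ h := by
      rw [map_mul]; rfl
    rw [this, fderiv_comp]
    · exact ((hsmooth g).differentiable (by simp)).differentiableAt
    · exact ((hsmooth h).differentiable (by simp)).differentiableAt
  unfold Mx
  rw [h1, ContinuousLinearMap.toLinearMap_comp, LinearMap.toMatrix_comp _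
    (EuclideanSpace.basisFun (Fin n) ℝ).toBasis, Matrix.map_mul]

lemma Mx_one (x : EuclideanSpace ℝ (Fin n)) : Mx ρ 1 x = 1 := by
  unfold Mx
  have : (ρ 1 : EuclideanSpace ℝ (Fin n) → EuclideanSpace ℝ (Fin n)) = id := by
    rw [map_one]; rfl
  rw [this, fderiv_id]
  have h2 := LinearMap.toMatrix_id (EuclideanSpace.basisFun (Fin n) ℝ).toBasis
  have h3 : ((ContinuousLinearMap.id ℝ (EuclideanSpace ℝ (Fin n)) :
    EuclideanSpace ℝ (Fin n) →L[ℝ] EuclideanSpace ℝ (Fin n)) :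
    EuclideanSpace ℝ (Fin n) →ₗ[ℝ] EuclideanSpace ℝ (Fin n)) = LinearMap.id := rfl
  rw [h3, h2]
  simp

lemma Mx_eq_one (g : alternatingGroup (ZMod p)) (x : EuclideanSpace ℝ (Fin n)) (h : Mx ρ g x = 1) :
    fderiv ℝ (ρ g) x = ContinuousLinearMap.id ℝ _ := by
  have h1 : (1 : Matrix (Fin n) (Fin n) ℝ).map (algebraMap ℝ ℂ) = 1 := by simp
  unfold Mx at h
  rw [← h1] at h
  have h2 := Matrix.map_injective (algebraMap ℝ ℂ).injective h
  rw [← LinearMap.toMatrix_id (EuclideanSpace.basisFun (Fin n) ℝ).toBasis] at h2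
  have h3 := (LinearMap.toMatrix _ _).injective h2
  ext1 v
  exact LinearMap.congr_fun h3 v

lemma Mx_trace_cont (hsmooth : ∀ g, ContDiff ℝ (⊤ : ℕ∞) (ρ g)) (g : alternatingGroup (ZMod p)) :
    Continuous fun x => (Mx ρ g x).trace := by
  have h : Continuous (fderiv ℝ (ρ g)) := (hsmooth g).continuous_fderiv (by simp)
  unfold Mx Matrix.trace
  simp only [Matrix.diag_apply, Matrix.map_apply, LinearMap.toMatrix_apply]
  refine continuous_finsetSum _ fun i _ => ?_
  refine Complex.continuous_ofReal.comp ?_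
  simp only [OrthonormalBasis.coe_toBasis_repr_apply, EuclideanSpace.basisFun_repr,
    ContinuousLinearMap.coe_coe]
  have := h.clm_apply (continuous_const (y := (EuclideanSpace.basisFun (Fin n) ℝ).toBasis i))
  exact (EuclideanSpace.proj i : EuclideanSpace ℝ (Fin n) →L[ℝ] ℝ).continuous.comp this

lemma Mx_trace_real (g : alternatingGroup (ZMod p)) (x : EuclideanSpace ℝ (Fin n)) :
    (starRingEnd ℂ) (Mx ρ g x).trace = (Mx ρ g x).trace := by
  unfold Mx Matrix.trace
  simp only [Matrix.diag_apply, Matrix.map_apply, map_sum]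
  exact Finset.sum_congr rfl fun i _ => Complex.conj_ofReal _

theorem main_aux (hp4 : p % 4 = 3) (hn : n < p - 1) (hinj : Function.Injective ρ)
    (hsmooth : ∀ g, ContDiff ℝ (⊤ : ℕ∞) (ρ g)) : False := by
  have hp : p.Prime := Fact.out
  have hp2 : p ≠ 2 := by rintro rfl; simp at hp4
  let s : ZMod p → EuclideanSpace ℝ (Fin n) → EuclideanSpace ℝ (Fin n) := fun j => ρ (trn hp2 j)
  have hs : ∀ j, ContDiff ℝ (⊤ : ℕ∞) (s j) := fun j => hsmooth _
  have hadd : ∀ i j x, s (i + j) x = s i (s j x) := fun i j x => by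
    simp only [s, trn_add, map_mul, Equiv.Perm.mul_apply]
  have hs0 : s 0 = id := by
    simp only [s, trn_zero, map_one]; rfl
  have hit : ∀ i : ℕ, (s 1)^[i] = s i := by
    intro i
    induction i with
    | zero => simp [hs0]
    | succ i ih =>
      rw [Function.iterate_succ', ih]
      funext x
      rw [Nat.cast_succ, add_comm, hadd]; rfl
  have hg : Continuous (s 1) := (hs 1).continuous
  have hgp : (s 1)^[p] = id := by rw [hit]; simp [hs0]
  let Fx : Set (EuclideanSpace ℝ (Fin n)) := {x | s 1 x = x}
  have hFx : ∀ x ∈ Fx, ∀ j, s j x = x := by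
    intro x hx j
    have : s j = (s 1)^[j.val] := by rw [hit]; simp
    rw [this]
    exact Function.iterate_fixed hx _
  have hconn : IsPreconnected Fx := fixed_preconnected p n hp hp2 (s 1) hg hgp
  obtain ⟨x0, hx0⟩ := exists_fixed p n hp hp2 (s 1) hg hgp
  let M : EuclideanSpace ℝ (Fin n) → ZMod p → Matrix (Fin n) (Fin n) ℂ := fun x j => Mx ρ (trn hp2 j) x
  have hM0 : ∀ x, M x 0 = 1 := fun x => by simp only [M, trn_zero, Mx_one]
  have hM : ∀ x ∈ Fx, ∀ i j, M x (i + j) = M x i * M x j := fun x hx i j => by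
    have h1 : ρ (trn hp2 j) x = x := hFx x hx j
    simp only [M, trn_add]
    rw [Mx_mul ρ hsmooth, h1]
  have hconst : ∀ k, ∀ x ∈ Fx, ∀ y ∈ Fx, (Pk (M x) k).trace = (Pk (M y) k).trace := by
    intro k x hx y hy
    refine hconn.constant_of_mapsTo (T := Set.range ((↑) : ℕ → ℂ)) (f := fun x => (Pk (M x) k).trace)
      ?_ ?_ ?_ hx hy
    · rw [isDiscrete_iff_discreteTopology]
      have h1 : Topology.IsEmbedding ((↑) : ℕ → ℂ) := by
        have := Complex.isometry_ofReal.isEmbedding.comp Nat.isClosedEmbedding_coe_real.isEmbedding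
        convert this using 1
        funext k
        simp
      exact h1.toHomeomorph.symm.isEmbedding.discreteTopology
    · apply Continuous.continuousOn
      simp only [Pk_trace]
      have := fun j => Mx_trace_cont ρ hsmooth (trn hp2 j)
      exact continuous_const.mul (continuous_finsetSum _ fun j _ => continuous_const.mul (this j))
    · intro z hz
      obtain ⟨r, hr⟩ := (idem_trace _ (Pk_idem (M z) (hM z hz) k)).1
      exact ⟨r, hr.symm⟩
  have hsq : ∀ b : ZMod p, b ≠ 0 → ∀ k, (Pk (M x0) (b ^ 2 * k)).trace = (Pk (M x0) k).trace := by
    intro b hb k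
    have hfix : ∀ j, s j (ρ (scl b hb) x0) = ρ (scl b hb) x0 := by
      intro j
      have h1 : trn hp2 j * scl b hb = scl b hb * trn hp2 ((b ^ 2)⁻¹ * j) := by
        rw [scl_trn, mul_inv_cancel_left₀ (pow_ne_zero 2 hb)]
      simp only [s]
      rw [← Equiv.Perm.mul_apply, ← map_mul, h1, map_mul, Equiv.Perm.mul_apply]
      congr 1
      exact hFx x0 hx0 _
    have htr : ∀ j, (M (ρ (scl b hb) x0) (b ^ 2 * j)).trace = (M x0 j).trace := by
      intro j
      have h1 : Mx ρ (scl b hb) x0 * M x0 j = M (ρ (scl b hb) x0) (b ^ 2 * j) * Mx ρ (scl b hb) x0 := by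
        have h2 := congrArg (fun g => Mx ρ g x0) (scl_trn hp2 b hb j)
        simp only [Mx_mul ρ hsmooth] at h2
        have h3 : ρ (trn hp2 j) x0 = x0 := hFx x0 hx0 j
        rwa [h3] at h2
      have h4 : Mx ρ (scl b hb) x0 * Mx ρ (scl b hb)⁻¹ (ρ (scl b hb) x0) = 1 := by
        have h5 := Mx_mul ρ hsmooth (scl b hb) (scl b hb)⁻¹ (ρ (scl b hb) x0)
        rw [mul_inv_cancel, Mx_one, ← Equiv.Perm.mul_apply (ρ (scl b hb)⁻¹), ← map_mul,
          inv_mul_cancel, map_one, Equiv.Perm.one_apply] at h5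
        exact h5.symm
      have h6 := mul_eq_one_comm.1 h4
      rw [← mul_one (M (ρ (scl b hb) x0) (b ^ 2 * j)), ← h4, ← mul_assoc, ← h1, mul_assoc,
        Matrix.trace_mul_comm, mul_assoc, h6, mul_one]
    rw [hconst k x0 hx0 (ρ (scl b hb) x0) (hfix 1), Pk_trace, Pk_trace]
    congr 1
    rw [← Equiv.sum_comp (Equiv.mulLeft₀ (b ^ 2) (pow_ne_zero 2 hb))
      (fun j => ZMod.stdAddChar (-(j * k)) * (M (ρ (scl b hb) x0) j).trace)]
    refine Finset.sum_congr rfl fun j _ => ?_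
    simp only [Equiv.mulLeft₀_apply]
    rw [htr]
    congr 3
    ring
  have htriv := rep_trivial hp4 hn (M x0) (hM0 x0) (hM x0 hx0)
    (fun j => Mx_trace_real ρ _ _) hsq
  have hid := rigid s hs hadd x0 (hFx x0 hx0) (fun j => Mx_eq_one ρ _ _ (htriv j))
  apply trn_ne (p := p) hp2
  apply hinj
  rw [map_one]
  ext1 y
  exact hid 1 y

end Main

end SmithTheory

/-- For a prime `p ≡ 3 (mod 4)`, `p > 5`: if the alternating group `A_p` acts faithfully
by diffeomorphisms on `ℝⁿ`, then `n ≥ p - 1`. -/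
theorem minimal_euclidean_action_alternating_group
    (p n : ℕ) (hp : p.Prime) (hp4 : p % 4 = 3) (hp5 : 5 < p)
    (ρ : alternatingGroup (Fin p) →* Equiv.Perm (EuclideanSpace ℝ (Fin n)))
    (hfaithful : Function.Injective ρ)
    (hsmooth : ∀ g, ContDiff ℝ (⊤ : ℕ∞) (ρ g)) :
    p - 1 ≤ n := by
  by_contra hn
  have : Fact p.Prime := ⟨hp⟩
  have : NeZero p := ⟨hp.ne_zero⟩
  let e := Equiv.altCongrHom (ZMod.finEquiv p).symm.toEquiv
  refine SmithTheory.main_aux (p := p) (n := n) (ρ.comp e.toMonoidHom) hp4 (by omega)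
    (hfaithful.comp e.injective) (fun g => hsmooth _)
end
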